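/- Assume (H1) and fix λ ∈ (0,α). Then the limit u_∞(x,t;λ) := lim_{j→∞} u₀(x + ℓ(j,λ), t + jT) exists locally uniformly on ℝ² (together with first and second spatial derivatives and first time derivative), and: (1) u_∞(·,·;λ) is an entire solution of (E) with 0 < u_∞(x,t;λ) < ω(α,t) for all (x,t) and u_∞(0,0;λ) = λ; (2) u_∞(·,·;λ) is steeper than any entire solution w of (E) with 0 ≤ w(x,t) ≤ ω(α,t); (3) either u_∞(x,t;λ) is independent of x, or ∂_x u_∞(x,t;λ) < 0 for all (x,t) ∈ ℝ². -/

import Mathlib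

/-!
The Heaviside solution `u₀` is compared with entire solutions through crossings. If `w` is a
solution with `0 ≤ w ≤ ω(α,·)`, then `u₀` cannot lie below `w` at a point and above `w` at a point
further to the right at the same time (`heaviside_no_crossing`): in the variables `(x, y, t)` with
`x < y` the quantity measuring such a crossing is a subsolution of a linear parabolic problem which
vanishes on the diagonal and initially, and a maximum principle on a half-plane (`half_plane_max`)
applies.

Interior estimates, obtained from doubling of variables and difference quotients, bound the moduli
of continuity of `u₀` and of its derivatives uniformly (`SolData.uc`). Hence the shifted solutions
`u₀(· + ℓ j, · + jT)` converge, with their derivatives, along every free ultrafilter on `ℕ`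
(`limit_solData`). Every such limit is an entire solution, takes the value `λ` at the origin and
inherits the absence of crossings (`limit_props`).

An entire solution `V` with this property is steeper than every entire solution `w` between `0` and
`ω(α,·)` (`steep`). By the boundary point lemma `hopf`, `V` is either independent of `x` or has
`V_x < 0` everywhere. In the first case `V - w` changes sign at most once and the strong maximum
principle settles the claim. In the second case a tangency of `V` and `w` is studied in the variable
`S` defined by `V(S(x,t),t) = w(x,t)`: absence of crossings makes `S - x` nonincreasing in `x`, a
further application of `hopf` gives `S = x` locally (`local_eq`), and the set where `V` and `w`
agree propagates to the whole plane.

Two limits along different ultrafilters agree at the origin and each is steeper than the other, so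
they coincide; therefore the whole sequence converges. The strict bounds follow from steepness
with respect to the solutions `0` and `ω(α,·)`, and the final alternative is the one above.
-/

open Real Filter Topology Set

noncomputable section

/-- `u` is a classical solution of `u_t = u_xx + f(t,u)` on `ℝ × I`. -/
def IsSolOn (f : ℝ → ℝ → ℝ) (u : ℝ → ℝ → ℝ) (I : Set ℝ) : Prop :=
  ∃ ut ux uxx : ℝ → ℝ → ℝ,
    (∀ x : ℝ, ∀ t ∈ I, HasDerivAt (fun s => u x s) (ut x t) t) ∧
    (∀ x : ℝ, ∀ t ∈ I, HasDerivAt (fun y => u y t) (ux x t) x) ∧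
    (∀ x : ℝ, ∀ t ∈ I, HasDerivAt (fun y => ux y t) (uxx x t) x) ∧
    ContinuousOn (fun p : ℝ × ℝ => ut p.1 p.2) (Set.univ ×ˢ I) ∧
    ContinuousOn (fun p : ℝ × ℝ => ux p.1 p.2) (Set.univ ×ˢ I) ∧
    ContinuousOn (fun p : ℝ × ℝ => uxx p.1 p.2) (Set.univ ×ˢ I) ∧
    (∀ x : ℝ, ∀ t ∈ I, ut x t = uxx x t + f t (u x t))

/-- `u₁` is steeper than `u₂` (Definition 2.5). -/
def Steeper (T : ℝ) (u₁ u₂ : ℝ → ℝ → ℝ) : Prop :=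
  ∀ (t' x₁ : ℝ) (k : ℤ), u₁ x₁ t' = u₂ x₁ (t' + k * T) →
    (∀ x t : ℝ, u₁ x (t + t') = u₂ x (t + t' + k * T)) ∨
    deriv (fun y => u₁ y t') x₁ < deriv (fun y => u₂ y (t' + k * T)) x₁

/-- `ψ` is a `T`-periodic solution of the ODE `ω' = f(t,ω)`. -/
def IsPeriodicSol (f : ℝ → ℝ → ℝ) (T : ℝ) (ψ : ℝ → ℝ) : Prop :=
  (∀ t : ℝ, HasDerivAt ψ (f t (ψ t)) t) ∧ ∀ t : ℝ, ψ (t + T) = ψ t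

/-- `ψ` is isolated from below w.r.t. the ODE. -/
def IsolatedFromBelow (f : ℝ → ℝ → ℝ) (T : ℝ) (ψ : ℝ → ℝ) : Prop :=
  ¬ ∃ φ : ℕ → ℝ → ℝ, (∀ n, IsPeriodicSol f T (φ n)) ∧ (∀ n t, φ n t < ψ t) ∧
      TendstoUniformly φ ψ atTop

/-- `ψ` is stable from below w.r.t. the ODE. -/
def StableFromBelow (f : ℝ → ℝ → ℝ) (ψ : ℝ → ℝ) : Prop :=
  ∀ ε > 0, ∃ δ > 0, ∀ g : ℝ → ℝ, (∀ t : ℝ, HasDerivAt g (f t (g t)) t) →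
    g 0 ∈ Set.Icc (ψ 0 - δ) (ψ 0) → ∀ t ≥ 0, |g t - ψ t| ≤ ε

/-- Hypothesis (H1). -/
def HypH1 (f : ℝ → ℝ → ℝ) (α : ℝ) (ωα : ℝ → ℝ) : Prop :=
  ∃ u : ℝ → ℝ → ℝ,
    IsSolOn f u (Set.Ioi 0) ∧
    ContinuousOn (fun p : ℝ × ℝ => u p.1 p.2) (Set.univ ×ˢ Set.Ici 0) ∧
    HasCompactSupport (fun x => u x 0) ∧
    (∀ x : ℝ, 0 ≤ u x 0 ∧ u x 0 < α) ∧
    (∀ K : Set ℝ, IsCompact K → ∀ ε > 0, ∃ t₀ : ℝ, ∀ t ≥ t₀, ∀ x ∈ K, |u x t - ωα t| < ε)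

/-- Hypothesis (H2). -/
def HypH2 (f : ℝ → ℝ → ℝ) (T α : ℝ) : Prop :=
  ∀ ψ : ℝ → ℝ, IsPeriodicSol f T ψ → ψ 0 ∈ Set.Ioo 0 α →
    IsolatedFromBelow f T ψ → ¬ StableFromBelow f ψ →
    ∃ φ : ℕ → ℝ → ℝ,
      (∀ n, ContDiff ℝ 1 (φ n)) ∧
      (∀ n t, φ n (t + T) = φ n t) ∧
      (∀ n t, f t (φ n t) ≤ deriv (φ n) t) ∧
      (∀ n t, φ n t < ψ t) ∧
      TendstoUniformly φ ψ atTop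

/-- The solution `ũ(·,·;a)` of (E) with Heaviside-type initial datum `α·H(a−x)`,
bounded between `0` and `ω(α,·)`. -/
def IsHeavisideSol (f : ℝ → ℝ → ℝ) (α a : ℝ) (ωα : ℝ → ℝ) (u : ℝ → ℝ → ℝ) : Prop :=
  IsSolOn f u (Set.Ioi 0) ∧
  (∀ x : ℝ, ∀ t > 0, 0 ≤ u x t ∧ u x t ≤ ωα t) ∧
  ∀ K : Set ℝ, IsCompact K → a ∉ K → ∀ ε > 0, ∃ δ > 0, ∀ t ∈ Set.Ioo (0:ℝ) δ, ∀ x ∈ K,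
    |u x t - α * (if 0 ≤ a - x then 1 else 0)| < ε

/-- `U(x,t) → ψ(t)` as `x → +∞`, locally uniformly in `t`. -/
def LimitAtPlusInf (U : ℝ → ℝ → ℝ) (ψ : ℝ → ℝ) : Prop :=
  ∀ K : Set ℝ, IsCompact K → ∀ ε > 0, ∃ M : ℝ, ∀ x ≥ M, ∀ t ∈ K, |U x t - ψ t| < ε

/-- `U(x,t) → ψ(t)` as `x → −∞`, locally uniformly in `t`. -/
def LimitAtMinusInf (U : ℝ → ℝ → ℝ) (ψ : ℝ → ℝ) : Prop :=
  ∀ K : Set ℝ, IsCompact K → ∀ ε > 0, ∃ M : ℝ, ∀ x ≤ M, ∀ t ∈ K, |U x t - ψ t| < ε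

/-- `U` connects `ωa` (at `x = −∞`) to `ωb` (at `x = +∞`). -/
def Connects (U : ℝ → ℝ → ℝ) (ωa ωb : ℝ → ℝ) : Prop :=
  LimitAtMinusInf U ωa ∧ LimitAtPlusInf U ωb

/-- A pulsating traveling front of (E) with speed `c`, limit `ωa` at `−∞`, `ωb` at `+∞`. -/
def IsPulsatingFront (f : ℝ → ℝ → ℝ) (T : ℝ) (ωa ωb : ℝ → ℝ) (U : ℝ → ℝ → ℝ) (c : ℝ) :
    Prop :=
  IsSolOn f U Set.univ ∧
  (∃ L : ℝ, c = L / T ∧ ∀ x t : ℝ, U x t = U (x - L) (t + T)) ∧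
  Connects U ωa ωb

/-- A propagating terrace of (E) connecting `0` to `ωα`. -/
def IsTerrace (f : ℝ → ℝ → ℝ) (T : ℝ) (ωα : ℝ → ℝ) (N : ℕ)
    (ω : ℕ → ℝ → ℝ) (U : ℕ → ℝ → ℝ → ℝ) (c : ℕ → ℝ) : Prop :=
  1 ≤ N ∧
  (∀ k ≤ N, IsPeriodicSol f T (ω k)) ∧
  (∀ t, ω 0 t = ωα t) ∧ (∀ t, ω N t = 0) ∧
  (∀ k, k < N → ∀ t, ω (k + 1) t < ω k t) ∧
  (∀ k, 1 ≤ k → k ≤ N → IsPulsatingFront f T (ω (k - 1)) (ω k) (U k) (c k)) ∧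
  0 ≤ c 1 ∧ (∀ k, 1 ≤ k → k < N → c k ≤ c (k + 1))

/-- A minimal propagating terrace (Definition 1.4). -/
def IsMinimalTerrace (f : ℝ → ℝ → ℝ) (T : ℝ) (ωα : ℝ → ℝ) (N : ℕ)
    (ω : ℕ → ℝ → ℝ) (U : ℕ → ℝ → ℝ → ℝ) (c : ℕ → ℝ) : Prop :=
  IsTerrace f T ωα N ω U c ∧
  (∀ (N' : ℕ) (ψ : ℕ → ℝ → ℝ) (V : ℕ → ℝ → ℝ → ℝ) (c' : ℕ → ℝ),
      IsTerrace f T ωα N' ψ V c' → ∀ k ≤ N, ∃ j ≤ N', ∀ t, ω k t = ψ j t) ∧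
  (∀ k, 1 ≤ k → k ≤ N → ∀ V : ℝ → ℝ → ℝ, IsSolOn f V Set.univ →
      Connects V (ω (k - 1)) (ω k) → Steeper T (U k) V)


/-- `V` is the locally uniform limit of the shifted solutions `u(· + ℓ j, · + jT)`. -/
def IsULimit (u : ℝ → ℝ → ℝ) (ℓ : ℕ → ℝ) (T : ℝ) (V : ℝ → ℝ → ℝ) : Prop :=
  ∀ K : Set (ℝ × ℝ), IsCompact K → ∀ ε > 0, ∃ J : ℕ, ∀ j ≥ J, ∀ p ∈ K,
    |u (p.1 + ℓ j) (p.2 + (j : ℝ) * T) - V p.1 p.2| < ε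

/-- `V` is the locally uniform limit of `u(· + ℓ j, · + jT)` together with the first and second
spatial derivatives and the first time derivative. -/
def IsULimitDeriv (u : ℝ → ℝ → ℝ) (ℓ : ℕ → ℝ) (T : ℝ) (V : ℝ → ℝ → ℝ) : Prop :=
  ∀ K : Set (ℝ × ℝ), IsCompact K → ∀ ε > 0, ∃ J : ℕ, ∀ j ≥ J, ∀ p ∈ K,
    |u (p.1 + ℓ j) (p.2 + (j : ℝ) * T) - V p.1 p.2| < ε ∧
    |deriv (fun y => u y (p.2 + (j : ℝ) * T)) (p.1 + ℓ j) -
      deriv (fun y => V y p.2) p.1| < ε ∧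
    |deriv (deriv (fun y => u y (p.2 + (j : ℝ) * T))) (p.1 + ℓ j) -
      deriv (deriv (fun y => V y p.2)) p.1| < ε ∧
    |deriv (fun s => u (p.1 + ℓ j) s) (p.2 + (j : ℝ) * T) -
      deriv (fun s => V p.1 s) p.2| < ε

/-! ### Second-order jets and a maximum principle -/

/-- `g` is twice differentiable at `x`, with `g'(x) = a` and `g''(x) = b`. -/
def HasJet (g : ℝ → ℝ) (x a b : ℝ) : Prop :=
  ∃ g' : ℝ → ℝ, (∀ᶠ y in 𝓝 x, HasDerivAt g (g' y) y) ∧ HasDerivAt g' b x ∧ g' x = a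

lemma HasJet.of_hasDerivAt {g g' : ℝ → ℝ} {x b : ℝ} (h : ∀ y, HasDerivAt g (g' y) y)
    (h' : HasDerivAt g' b x) : HasJet g x (g' x) b :=
  ⟨g', Eventually.of_forall h, h', rfl⟩

lemma HasJet.hasDerivAt {g : ℝ → ℝ} {x a b : ℝ} (h : HasJet g x a b) : HasDerivAt g a x := by
  obtain ⟨g', h1, -, rfl⟩ := h
  exact h1.self_of_nhds

lemma HasJet.congr {g k : ℝ → ℝ} {x a b : ℝ} (h : HasJet g x a b) (hk : k =ᶠ[𝓝 x] g) :
    HasJet k x a b := by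
  obtain ⟨g', h1, h2, h3⟩ := h
  refine ⟨g', ?_, h2, h3⟩
  filter_upwards [h1, hk.eventuallyEq_nhds] with y hy hky
  exact hy.congr_of_eventuallyEq hky

lemma HasJet.add {g k : ℝ → ℝ} {x a b a' b' : ℝ} (h : HasJet g x a b) (hk : HasJet k x a' b') :
    HasJet (fun y => g y + k y) x (a + a') (b + b') := by
  obtain ⟨g', h1, h2, rfl⟩ := h
  obtain ⟨k', k1, k2, rfl⟩ := hk
  refine ⟨fun y => g' y + k' y, ?_, h2.add k2, rfl⟩
  filter_upwards [h1, k1] with y hy hky using hy.add hky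

lemma HasJet.const_mul {g : ℝ → ℝ} {x a b : ℝ} (c : ℝ) (h : HasJet g x a b) :
    HasJet (fun y => c * g y) x (c * a) (c * b) := by
  obtain ⟨g', h1, h2, rfl⟩ := h
  refine ⟨fun y => c * g' y, ?_, h2.const_mul c, rfl⟩
  filter_upwards [h1] with y hy using hy.const_mul c

lemma HasJet.sub {g k : ℝ → ℝ} {x a b a' b' : ℝ} (h : HasJet g x a b) (hk : HasJet k x a' b') :
    HasJet (fun y => g y - k y) x (a - a') (b - b') := by
  obtain ⟨g', h1, h2, rfl⟩ := h
  obtain ⟨k', k1, k2, rfl⟩ := hk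
  refine ⟨fun y => g' y - k' y, ?_, h2.sub k2, rfl⟩
  filter_upwards [h1, k1] with y hy hky using hy.sub hky

lemma hasJet_const (c x : ℝ) : HasJet (fun _ => c) x 0 0 :=
  HasJet.of_hasDerivAt (g' := fun _ => 0) (fun y => hasDerivAt_const y c) (hasDerivAt_const x 0)

lemma HasJet.mul_const {g : ℝ → ℝ} {x a b : ℝ} (h : HasJet g x a b) (c : ℝ) :
    HasJet (fun y => g y * c) x (a * c) (b * c) := by
  simpa [mul_comm] using h.const_mul c

/-- The second derivative test, in its necessary form. -/
lemma HasJet.of_isLocalMax {g : ℝ → ℝ} {x a b : ℝ} (h : HasJet g x a b) (hm : IsLocalMax g x) :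
    a = 0 ∧ b ≤ 0 := by
  have ha : a = 0 := hm.hasDerivAt_eq_zero h.hasDerivAt
  refine ⟨ha, ?_⟩
  obtain ⟨g', h1, h2, h3⟩ := h
  by_contra! hb
  have e1 : deriv g =ᶠ[𝓝 x] g' := by
    filter_upwards [h1] with y hy using hy.deriv
  have e2 : deriv (deriv g) x = b := by rw [e1.deriv_eq, h2.deriv]
  have hmin : IsLocalMin g x := isLocalMin_of_deriv_deriv_pos (by rw [e2]; exact hb)
    (by rw [e1.self_of_nhds, h3, ha]) h1.self_of_nhds.continuousAt
  -- a point that is both a local maximum and a local minimum has a locally constant function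
  have e3 : g =ᶠ[𝓝 x] fun _ => g x := by
    filter_upwards [hm, hmin] with y hy hy' using le_antisymm hy hy'
  have e4 : deriv (deriv g) x = 0 := by
    have : deriv g =ᶠ[𝓝 x] fun _ => 0 := by
      filter_upwards [e3.eventuallyEq_nhds] with y hy
      rw [hy.deriv_eq]; simp
    rw [this.deriv_eq]; simp
  linarith

lemma hasDerivAt_nonneg_of_left_max {g : ℝ → ℝ} {t d : ℝ} (h : HasDerivAt g d t)
    (hm : ∀ᶠ s in 𝓝[<] t, g s ≤ g t) : 0 ≤ d := by
  have h1 := (hasDerivWithinAt_iff_tendsto_slope' (s := Iio t) (by simp)).1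
    (h.hasDerivWithinAt (s := Iio t))
  refine ge_of_tendsto h1 ?_
  filter_upwards [hm, self_mem_nhdsWithin] with s hs hst
  rw [slope_def_field]
  exact div_nonneg_of_nonpos (by linarith) (by simp at hst; linarith)

/-- A function on a compact subset of `(x, y, t)`-space is nonpositive provided that, at each point
where it is positive, one may move in both space directions and backwards in time, and the
function is there a strict subsolution of the heat equation as far as critical points go. -/
lemma max_principle {K : Set (ℝ × ℝ × ℝ)} (hK : IsCompact K) {φ : ℝ → ℝ → ℝ → ℝ}
    (hc : ContinuousOn (fun p : ℝ × ℝ × ℝ => φ p.1 p.2.1 p.2.2) K)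
    (h : ∀ x y t, (x, y, t) ∈ K → 0 < φ x y t →
      (∀ᶠ x' in 𝓝 x, (x', y, t) ∈ K) ∧ (∀ᶠ y' in 𝓝 y, (x, y', t) ∈ K) ∧
      (∀ᶠ t' in 𝓝[<] t, (x, y, t') ∈ K) ∧
      ∃ a b a' b' d : ℝ, HasJet (fun x' => φ x' y t) x a b ∧ HasJet (fun y' => φ x y' t) y a' b' ∧
        HasDerivAt (fun t' => φ x y t') d t ∧ (a = 0 → a' = 0 → d < b + b')) :
    ∀ x y t, (x, y, t) ∈ K → φ x y t ≤ 0 := by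
  intro x₀ y₀ t₀ h₀
  obtain ⟨⟨x, y, t⟩, hp, hmax⟩ := hK.exists_isMaxOn ⟨_, h₀⟩ hc
  have hmax' : ∀ x' y' t', (x', y', t') ∈ K → φ x' y' t' ≤ φ x y t := fun x' y' t' hq => hmax hq
  refine (hmax' _ _ _ h₀).trans ?_
  by_contra! hpos
  obtain ⟨k1, k2, k3, a, b, a', b', d, j1, j2, j3, hlt⟩ := h x y t hp hpos
  obtain ⟨ha, hb⟩ := j1.of_isLocalMax (by filter_upwards [k1] with x' hx' using hmax' _ _ _ hx')
  obtain ⟨ha', hb'⟩ := j2.of_isLocalMax (by filter_upwards [k2] with x' hx' using hmax' _ _ _ hx')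
  have hd := hasDerivAt_nonneg_of_left_max j3
    (by filter_upwards [k3] with x' hx' using hmax' _ _ _ hx')
  linarith [hlt ha ha']

/-! ### Comparison principles -/

lemma hasJet_sq (x : ℝ) : HasJet (fun y => y ^ 2) x (2 * x) 2 := by
  refine HasJet.of_hasDerivAt (g' := fun y => 2 * y) (fun y => ?_) ?_
  · simpa using hasDerivAt_pow 2 y
  · simpa using (hasDerivAt_id x).const_mul 2

lemma hasDerivAt_exp_mul (C t : ℝ) :
    HasDerivAt (fun r => exp (C * r)) (exp (C * t) * C) t := by
  simpa using ((hasDerivAt_id t).const_mul C).exp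

lemma hasDerivAt_exp_shift (C s t : ℝ) :
    HasDerivAt (fun r => exp (C * (r - s))) (exp (C * (t - s)) * C) t := by
  simpa using (((hasDerivAt_id t).sub_const s).const_mul C).exp

/-- Weak maximum principle on the line for bounded functions: a function that is nonpositive at
time `s` and satisfies `z_t ≤ z_xx + C z` wherever it is positive remains nonpositive. -/
lemma weak_max {z : ℝ → ℝ → ℝ} {s M C : ℝ}
    (hc : ContinuousOn (fun p : ℝ × ℝ => z p.1 p.2) (univ ×ˢ Ici s))
    (hM : ∀ x, ∀ t ≥ s, z x t ≤ M) (hs : ∀ x, z x s ≤ 0)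
    (hj : ∀ x, ∀ t > s, 0 < z x t → ∃ a b d, HasJet (fun y => z y t) x a b ∧
      HasDerivAt (fun r => z x r) d t ∧ d ≤ b + C * z x t) :
    ∀ x, ∀ t ≥ s, z x t ≤ 0 := by
  wlog hC : 0 ≤ C generalizing C with H
  · refine H (C := 0) (fun x t ht hz => ?_) le_rfl
    obtain ⟨a, b, d, h1, h2, h3⟩ := hj x t ht hz
    exact ⟨a, b, d, h1, h2, by nlinarith⟩
  intro x₀ t₀ ht₀
  by_contra! hpos
  have hM0 : 0 < M := hpos.trans_le (hM _ _ ht₀)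
  obtain ⟨e, he⟩ : ∃ v : ℝ, v = exp (-C * (t₀ - s)) * z x₀ t₀ := ⟨_, rfl⟩
  have hepos : 0 < e := by rw [he]; positivity
  have hq : 0 < 1 + x₀ ^ 2 + 5 * (t₀ - s) := by nlinarith [sq_nonneg x₀]
  obtain ⟨η, hη⟩ : ∃ v : ℝ, v = e / (2 * (1 + x₀ ^ 2 + 5 * (t₀ - s))) := ⟨_, rfl⟩
  have hηpos : 0 < η := by rw [hη]; positivity
  have hηq : η * (1 + x₀ ^ 2 + 5 * (t₀ - s)) = e / 2 := by rw [hη]; field_simp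
  obtain ⟨R, hR⟩ : ∃ v : ℝ, v = 1 + |x₀| + M / η := ⟨_, rfl⟩
  have hR1 : 1 ≤ R := by
    have : 0 ≤ M / η := by positivity
    have := abs_nonneg x₀
    linarith
  have hRM : M ≤ η * R ^ 2 := by
    have h1 : M / η ≤ R := by
      have := abs_nonneg x₀
      linarith
    have h2 : M ≤ η * R := by rw [div_le_iff₀ hηpos] at h1; linarith
    nlinarith [mul_le_mul_of_nonneg_left hR1 (by positivity : 0 ≤ η * R)]
  set φ : ℝ → ℝ → ℝ → ℝ := fun x y t =>
    exp (-C * (t - s)) * z x t - η * (1 + x ^ 2 + y ^ 2 + 5 * (t - s)) with hφ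
  have key := max_principle (K := Icc (-R) R ×ˢ (Icc (-R) R ×ˢ Icc s t₀))
    (isCompact_Icc.prod (isCompact_Icc.prod isCompact_Icc)) (φ := φ) ?_ ?_ x₀ 0 t₀ ?_
  · simp only [hφ] at key
    have : η * (1 + x₀ ^ 2 + 0 ^ 2 + 5 * (t₀ - s)) = e / 2 := by rw [← hηq]; ring
    linarith
  · simp only [hφ]
    refine ContinuousOn.sub (ContinuousOn.mul (by fun_prop) ?_) (by fun_prop)
    refine hc.comp (f := fun p : ℝ × ℝ × ℝ => (p.1, p.2.2)) (by fun_prop) ?_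
    rintro ⟨x, y, t⟩ ⟨-, -, ht⟩
    exact ⟨trivial, ht.1⟩
  · rintro x y t ⟨hx, hy, ht⟩ hp
    simp only [mem_Icc] at hx hy ht
    simp only [hφ] at hp
    have hst : 0 ≤ t - s := by linarith
    have hexp : exp (-C * (t - s)) ≤ 1 := exp_le_one_iff.2 (by nlinarith)
    have hB : 0 < η * (1 + x ^ 2 + y ^ 2 + 5 * (t - s)) := by positivity
    have hz : 0 < z x t := by
      by_contra! hz
      linarith [mul_nonpos_of_nonneg_of_nonpos (exp_pos (-C * (t - s))).le hz]
    have hzM : exp (-C * (t - s)) * z x t ≤ M := by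
      linarith [hM x t ht.1, mul_le_of_le_one_left hz.le hexp]
    have hxR : x ^ 2 < R ^ 2 := by
      by_contra! h
      linarith [mul_le_mul_of_nonneg_left h hηpos.le, mul_nonneg hηpos.le (sq_nonneg y),
        mul_nonneg hηpos.le hst]
    have hyR : y ^ 2 < R ^ 2 := by
      by_contra! h
      linarith [mul_le_mul_of_nonneg_left h hηpos.le, mul_nonneg hηpos.le (sq_nonneg x),
        mul_nonneg hηpos.le hst]
    have hx' := abs_lt.1 (abs_lt_of_sq_lt_sq hxR (by linarith))
    have hy' := abs_lt.1 (abs_lt_of_sq_lt_sq hyR (by linarith))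
    have hts : s < t := by
      rcases ht.1.eq_or_lt with h | h
      · subst h; exact absurd hz (not_lt.2 (hs x))
      · exact h
    refine ⟨?_, ?_, ?_, ?_⟩
    · filter_upwards [Icc_mem_nhds hx'.1 hx'.2] with x' h using ⟨h, hy, ht⟩
    · filter_upwards [Icc_mem_nhds hy'.1 hy'.2] with x' h using ⟨hx, h, ht⟩
    · filter_upwards [Ioo_mem_nhdsLT hts] with t' h
      exact ⟨hx, hy, h.1.le, h.2.le.trans ht.2⟩
    · obtain ⟨a, b, d, h1, h2, h3⟩ := hj x t hts hz
      refine ⟨_, _, _, _, _,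
        (h1.const_mul (exp (-C * (t - s)))).sub
          (((((hasJet_const 1 x).add (hasJet_sq x)).add (hasJet_const (y ^ 2) x)).add
            (hasJet_const (5 * (t - s)) x)).const_mul η),
        (hasJet_const (exp (-C * (t - s)) * z x t) y).sub
          (((((hasJet_const 1 y).add (hasJet_const (x ^ 2) y)).add (hasJet_sq y)).add
            (hasJet_const (5 * (t - s)) y)).const_mul η),
        (((hasDerivAt_exp_shift (-C) s t).mul h2).sub
          ((((((hasDerivAt_id t).sub_const s).const_mul 5).const_add (1 + x ^ 2 + y ^ 2)).const_mul η))),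
        ?_⟩
      intro _ _
      linarith [mul_le_mul_of_nonneg_left h3 (exp_pos (-C * (t - s))).le]
  · have := abs_nonneg x₀
    have h0 : 0 ≤ M / η := by positivity
    have := abs_le.1 (show |x₀| ≤ R by linarith)
    exact ⟨this, ⟨by linarith, by linarith⟩, ht₀, le_rfl⟩

/-- A solution of the heat equation, concentrated near `x = 0` at time `0` when `ρ` is small. -/
def gauss (ρ x t : ℝ) : ℝ := exp (log ρ - x ^ 2 / (4 * (t + ρ ^ 2)) - log (t + ρ ^ 2) / 2)

lemma gauss_jet {ρ t : ℝ} (ht : 0 < t) (x : ℝ) :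
    HasJet (fun y => gauss ρ y t) x (gauss ρ x t * (-(x / (2 * (t + ρ ^ 2)))))
      (gauss ρ x t * (x ^ 2 / (4 * (t + ρ ^ 2) ^ 2) - 1 / (2 * (t + ρ ^ 2)))) := by
  have hτ : 0 < t + ρ ^ 2 := by positivity
  have h1 : ∀ y, HasDerivAt (fun y => gauss ρ y t)
      (gauss ρ y t * (-(y / (2 * (t + ρ ^ 2))))) y := by
    intro y
    unfold gauss
    have := ((((hasDerivAt_pow 2 y).div_const (4 * (t + ρ ^ 2))).const_sub (log ρ)).sub_const
      (log (t + ρ ^ 2) / 2)).exp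
    convert this using 1
    congr 1
    field_simp
    norm_num
    ring
  refine HasJet.of_hasDerivAt h1 ?_
  refine ((h1 x).mul (((hasDerivAt_id x).div_const (2 * (t + ρ ^ 2))).neg)).congr_deriv ?_
  simp only [Pi.neg_apply, id]
  field_simp
  ring

lemma gauss_deriv_t {ρ t : ℝ} (ht : 0 < t) (x : ℝ) :
    HasDerivAt (fun s => gauss ρ x s)
      (gauss ρ x t * (x ^ 2 / (4 * (t + ρ ^ 2) ^ 2) - 1 / (2 * (t + ρ ^ 2)))) t := by
  have hτ : 0 < t + ρ ^ 2 := by positivity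
  unfold gauss
  have h2 : HasDerivAt (fun s : ℝ => s + ρ ^ 2) 1 t := (hasDerivAt_id t).add_const _
  have h3 : HasDerivAt (fun s => log ρ - x ^ 2 / (4 * (s + ρ ^ 2)) - log (s + ρ ^ 2) / 2)
      (x ^ 2 / (4 * (t + ρ ^ 2) ^ 2) - 1 / (2 * (t + ρ ^ 2))) t := by
    refine ((((hasDerivAt_const t (x ^ 2)).div (h2.const_mul 4) (by positivity)).const_sub
      (log ρ)).sub ((h2.log hτ.ne').div_const 2)).congr_deriv ?_
    field_simp
    ring
  exact h3.exp

lemma gauss_ge {ρ x t : ℝ} (hρ : 0 < ρ) (ht : 0 < t) (htρ : t ≤ ρ ^ 2) (hx : |x| ≤ ρ) :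
    exp (-1) ≤ gauss ρ x t := by
  unfold gauss
  apply exp_le_exp.2
  have h1 : x ^ 2 / (4 * (t + ρ ^ 2)) ≤ 1 / 4 := by
    rw [div_le_div_iff₀ (by positivity) (by norm_num)]
    nlinarith [sq_le_sq' (abs_le.1 hx).1 (abs_le.1 hx).2]
  have h2 : log (t + ρ ^ 2) ≤ log 2 + 2 * log ρ := by
    rw [← log_rpow hρ, ← log_mul (by norm_num) (by positivity)]
    apply log_le_log (by positivity)
    norm_num; linarith
  have h3 : log 2 < 1 := by linarith [log_two_lt_d9]
  linarith

lemma gauss_le {ρ x t : ℝ} (hρ : 0 < ρ) (ht : 0 < t) :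
    gauss ρ x t ≤ ρ * exp (-(log t / 2)) := by
  unfold gauss
  rw [← exp_log hρ, ← exp_add, log_exp]
  apply exp_le_exp.2
  rw [exp_log hρ]
  have h1 : 0 ≤ x ^ 2 / (4 * (t + ρ ^ 2)) := by positivity
  have h2 : log t ≤ log (t + ρ ^ 2) := log_le_log ht (by nlinarith)
  linarith

lemma gauss_pos (ρ x t : ℝ) : 0 < gauss ρ x t := exp_pos _

/-- Maximum principle in the half-plane `x ≤ y`, for a bounded function that is nonpositive on the
diagonal and whose initial trace is nonpositive away from the origin.  No control is needed near
the origin at time `0`: a point is too small for the heat flow to see. -/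
lemma half_plane_max {m : ℝ → ℝ → ℝ → ℝ} {M C : ℝ} (hC : 0 ≤ C)
    (hc : ContinuousOn (fun p : ℝ × ℝ × ℝ => m p.1 p.2.1 p.2.2) {p | 0 < p.2.2})
    (hM : ∀ x y t, x ≤ y → 0 < t → m x y t ≤ M)
    (hdiag : ∀ x t, 0 < t → m x x t ≤ 0)
    (hinit : ∀ ρ > 0, ∀ R : ℝ, ∀ η > 0, ∃ δ > 0, ∀ t ∈ Ioo (0 : ℝ) δ, ∀ x y, x ≤ y → -R ≤ x →
      y ≤ R → (x ≤ -ρ ∨ ρ ≤ y) → m x y t ≤ η)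
    (hj : ∀ x y t, x < y → 0 < t → 0 < m x y t → ∃ a b a' b' d,
      HasJet (fun x' => m x' y t) x a b ∧ HasJet (fun y' => m x y' t) y a' b' ∧
      HasDerivAt (fun t' => m x y t') d t ∧ d ≤ b + b' + C * m x y t) :
    ∀ x y t, x ≤ y → 0 < t → m x y t ≤ 0 := by
  intro x₀ y₀ t₀ hxy₀ ht₀
  by_contra! hpos
  have hM0 : 0 < M := hpos.trans_le (hM _ _ _ hxy₀ ht₀)
  obtain ⟨e, he⟩ : ∃ v : ℝ, v = exp (-C * t₀) * m x₀ y₀ t₀ := ⟨_, rfl⟩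
  have hepos : 0 < e := by rw [he]; positivity
  have hq : 0 < 1 + x₀ ^ 2 + y₀ ^ 2 + 5 * t₀ := by positivity
  obtain ⟨η, hη⟩ : ∃ v : ℝ, v = e / (4 * (1 + x₀ ^ 2 + y₀ ^ 2 + 5 * t₀)) := ⟨_, rfl⟩
  have hηpos : 0 < η := by rw [hη]; positivity
  have hηq : η * (1 + x₀ ^ 2 + y₀ ^ 2 + 5 * t₀) = e / 4 := by rw [hη]; field_simp
  obtain ⟨N, hN⟩ : ∃ v : ℝ, v = M * exp 1 := ⟨_, rfl⟩
  have hNpos : 0 < N := by rw [hN]; positivity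
  obtain ⟨ρ, hρ⟩ : ∃ v : ℝ, v = e / (4 * (N * exp (-(log t₀ / 2)))) := ⟨_, rfl⟩
  have hρpos : 0 < ρ := by rw [hρ]; positivity
  have hρq : N * (ρ * exp (-(log t₀ / 2))) = e / 4 := by rw [hρ]; field_simp
  obtain ⟨R, hR⟩ : ∃ v : ℝ, v = 1 + |x₀| + |y₀| + M / η := ⟨_, rfl⟩
  have hx0 := abs_nonneg x₀
  have hy0 := abs_nonneg y₀
  have hMη : 0 ≤ M / η := by positivity
  have hR1 : 1 ≤ R := by linarith
  have hRM : M ≤ η * R ^ 2 := by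
    have h1 : M / η ≤ R := by linarith
    have h2 : M ≤ η * R := by rw [div_le_iff₀ hηpos] at h1; linarith
    nlinarith [mul_le_mul_of_nonneg_left hR1 (by positivity : 0 ≤ η * R)]
  obtain ⟨δ, hδ, hin⟩ := hinit ρ hρpos R η hηpos
  obtain ⟨s, hs0, hs⟩ := exists_between (lt_min hδ (lt_min (pow_pos hρpos 2) ht₀))
  have hsδ := hs.trans_le (min_le_left _ _)
  have hsρ := hs.trans_le ((min_le_right _ _).trans (min_le_left _ _))
  have hst := hs.trans_le ((min_le_right _ _).trans (min_le_right _ _))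
  set φ : ℝ → ℝ → ℝ → ℝ := fun x y t =>
    exp (-C * t) * m x y t - (N * gauss ρ x t + η * (1 + x ^ 2 + y ^ 2 + 5 * t)) with hφ
  set K : Set (ℝ × ℝ × ℝ) := (Icc (-R) R ×ˢ (Icc (-R) R ×ˢ Icc s t₀)) ∩ {p | p.1 ≤ p.2.1} with hK
  have key := max_principle (K := K) ?_ (φ := φ) ?_ ?_ x₀ y₀ t₀ ?_
  · simp only [hφ] at key
    have h2 := mul_le_mul_of_nonneg_left (gauss_le (x := x₀) hρpos ht₀) hNpos.le
    linarith
  · exact (isCompact_Icc.prod (isCompact_Icc.prod isCompact_Icc)).inter_right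
      (isClosed_le continuous_fst (continuous_fst.comp continuous_snd))
  · have hpt : ∀ p ∈ K, 0 < p.2.2 := fun p hp => hs0.trans_le hp.1.2.2.1
    simp only [hφ]
    refine ContinuousOn.sub (ContinuousOn.mul (by fun_prop) (hc.mono hpt)) ?_
    refine ContinuousOn.add (ContinuousOn.mul (by fun_prop) ?_) (by fun_prop)
    unfold gauss
    refine ContinuousOn.rexp (ContinuousOn.sub (ContinuousOn.sub (by fun_prop) ?_) ?_)
    · refine ContinuousOn.div (by fun_prop) (by fun_prop) fun p hp => ?_
      have := hpt p hp
      positivity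
    · refine ContinuousOn.div_const (ContinuousOn.log (by fun_prop) fun p hp => ?_) _
      have := hpt p hp
      positivity
  · rintro x y t ⟨⟨hx, hy, ht⟩, hxy⟩ hp
    simp only [mem_Icc, mem_ofPred_eq] at hx hy ht hxy
    simp only [hφ] at hp
    have ht0 : 0 < t := hs0.trans_le ht.1
    have hexp : exp (-C * t) ≤ 1 := exp_le_one_iff.2 (by nlinarith)
    have hg := gauss_pos ρ x t
    have hNg : 0 < N * gauss ρ x t := by positivity
    have hB : 0 < η * (1 + x ^ 2 + y ^ 2 + 5 * t) := by positivity
    have hz : 0 < m x y t := by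
      by_contra! hz
      linarith [mul_nonpos_of_nonneg_of_nonpos (exp_pos (-C * t)).le hz]
    have hzm : exp (-C * t) * m x y t ≤ m x y t :=
      mul_le_of_le_one_left hz.le hexp
    have hzM : exp (-C * t) * m x y t ≤ M := hzm.trans (hM x y t hxy ht0)
    have hxR : x ^ 2 < R ^ 2 := by
      by_contra! h
      linarith [mul_le_mul_of_nonneg_left h hηpos.le, mul_nonneg hηpos.le (sq_nonneg y),
        mul_nonneg hηpos.le ht0.le]
    have hyR : y ^ 2 < R ^ 2 := by
      by_contra! h
      linarith [mul_le_mul_of_nonneg_left h hηpos.le, mul_nonneg hηpos.le (sq_nonneg x),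
        mul_nonneg hηpos.le ht0.le]
    have hx' := abs_lt.1 (abs_lt_of_sq_lt_sq hxR (by linarith))
    have hy' := abs_lt.1 (abs_lt_of_sq_lt_sq hyR (by linarith))
    have hxy' : x < y := by
      rcases hxy.eq_or_lt with h | h
      · subst h; exact absurd hz (not_lt.2 (hdiag x t ht0))
      · exact h
    have hts : s < t := by
      rcases ht.1.eq_or_lt with h | h
      · exfalso
        subst h
        by_cases hnear : x ≤ -ρ ∨ ρ ≤ y
        · have := hin s ⟨hs0, hsδ⟩ x y hxy hx.1 hy.2 hnear
          linarith [mul_nonneg hηpos.le (sq_nonneg x), mul_nonneg hηpos.le (sq_nonneg y),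
            mul_nonneg hηpos.le ht0.le]
        · push Not at hnear
          have h1 := gauss_ge hρpos hs0 hsρ.le (abs_le.2 ⟨hnear.1.le, by linarith⟩ : |x| ≤ ρ)
          have h2 : M ≤ N * gauss ρ x s := by
            calc M = N * exp (-1) := by rw [hN, mul_assoc, ← exp_add]; simp
              _ ≤ _ := mul_le_mul_of_nonneg_left h1 hNpos.le
          linarith
      · exact h
    refine ⟨?_, ?_, ?_, ?_⟩
    · filter_upwards [Icc_mem_nhds hx'.1 hx'.2, Iio_mem_nhds hxy'] with x' h h'
      exact ⟨⟨h, hy, ht⟩, (le_of_lt h' : x' ≤ y)⟩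
    · filter_upwards [Icc_mem_nhds hy'.1 hy'.2, Ioi_mem_nhds hxy'] with x' h h'
      exact ⟨⟨hx, h, ht⟩, (le_of_lt h' : x ≤ x')⟩
    · filter_upwards [Ioo_mem_nhdsLT hts] with t' h
      exact ⟨⟨hx, hy, h.1.le, h.2.le.trans ht.2⟩, hxy⟩
    · obtain ⟨a, b, a', b', d, h1, h2, h3, h4⟩ := hj x y t hxy' ht0 hz
      refine ⟨_, _, _, _, _,
        (h1.const_mul (exp (-C * t))).sub (((gauss_jet ht0 x).const_mul N).add
          (((((hasJet_const 1 x).add (hasJet_sq x)).add (hasJet_const (y ^ 2) x)).add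
            (hasJet_const (5 * t) x)).const_mul η)),
        (h2.const_mul (exp (-C * t))).sub ((hasJet_const (N * gauss ρ x t) y).add
          (((((hasJet_const 1 y).add (hasJet_const (x ^ 2) y)).add (hasJet_sq y)).add
            (hasJet_const (5 * t) y)).const_mul η)),
        (((hasDerivAt_exp_mul (-C) t).mul h3).sub
          (((gauss_deriv_t ht0 x).const_mul N).add
          (((((hasDerivAt_id t).const_mul 5).const_add (1 + x ^ 2 + y ^ 2)).const_mul η)))),
        ?_⟩
      intro _ _
      linarith [mul_le_mul_of_nonneg_left h4 (exp_pos (-C * t)).le]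
  · exact ⟨⟨abs_le.1 (by linarith), abs_le.1 (by linarith), hst.le, le_rfl⟩, hxy₀⟩

/-! ### A boundary point lemma -/

lemma hasJet_bump (A c γ x : ℝ) :
    HasJet (fun y => exp (A * (c - (y - γ) ^ 2))) x
      (exp (A * (c - (x - γ) ^ 2)) * (-2 * A * (x - γ)))
      (exp (A * (c - (x - γ) ^ 2)) * (4 * A ^ 2 * (x - γ) ^ 2 - 2 * A)) := by
  have h0 : ∀ y, HasDerivAt (fun y => A * (c - (y - γ) ^ 2)) (-2 * A * (y - γ)) y := by
    intro y
    refine (((((hasDerivAt_id y).sub_const γ).pow 2).const_sub c).const_mul A).congr_deriv ?_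
    simp; ring
  refine HasJet.of_hasDerivAt (g' := fun y => exp (A * (c - (y - γ) ^ 2)) * (-2 * A * (y - γ)))
    (fun y => (h0 y).exp) ?_
  refine ((h0 x).exp.mul (((hasDerivAt_id x).sub_const γ).const_mul (-2 * A))).congr_deriv ?_
  simp; ring

/-- The differential inequality satisfied by the barrier
`exp (-Λ (t - s)) (exp (A q) - 1)`, `q = 2 κ² - ξ² - ζ²`, inside a moving tube of radius `√2 κ`:
the term in `A ^ 2` wins in the outer part of the tube, the term in `Λ` in the inner part. -/
lemma barrier_ineq {A κ ξ ζ g₁ g₂ C G Λ P : ℝ} (hC : 0 ≤ C) (hκ : 0 < κ)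
    (hG : G = 4 * κ * (|g₁| + |g₂|) + 4 + 8 * C * κ + C) (hA : 1 ≤ A) (hA' : G < 4 * A * κ ^ 2)
    (hΛ : Λ * (A * κ ^ 2) = (A * G + 1) * (1 + A * κ ^ 2))
    (hq : ξ ^ 2 + ζ ^ 2 < 2 * κ ^ 2) (hP : P = exp (A * (2 * κ ^ 2 - ξ ^ 2 - ζ ^ 2))) :
    -Λ * (P - 1) + P * (A * (2 * ξ * g₁ + 2 * ζ * g₂)) + C * (P * (2 * A * |ξ|) +
      P * (2 * A * |ζ|) + (P - 1)) <
      P * (4 * A ^ 2 * ξ ^ 2 - 2 * A) + P * (4 * A ^ 2 * ζ ^ 2 - 2 * A) := by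
  have hA0 : 0 < A := by linarith
  have hP1 : 1 + A * (2 * κ ^ 2 - ξ ^ 2 - ζ ^ 2) ≤ P := by
    rw [hP]; linarith [add_one_le_exp (A * (2 * κ ^ 2 - ξ ^ 2 - ζ ^ 2))]
  have hPge : 1 ≤ P := by
    have : 0 ≤ A * (2 * κ ^ 2 - ξ ^ 2 - ζ ^ 2) := mul_nonneg hA0.le (by linarith)
    linarith
  have hP0 : 0 < P := by linarith
  have hξ : |ξ| ≤ 2 * κ := abs_le_of_sq_le_sq (by nlinarith [sq_nonneg ζ]) (by positivity)
  have hζ : |ζ| ≤ 2 * κ := abs_le_of_sq_le_sq (by nlinarith [sq_nonneg ξ]) (by positivity)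
  have hG0 : 0 < G := by rw [hG]; positivity
  have hΛ0 : 0 < Λ := by
    by_contra! h
    have : Λ * (A * κ ^ 2) ≤ 0 := mul_nonpos_of_nonpos_of_nonneg h (by positivity)
    have : 0 < (A * G + 1) * (1 + A * κ ^ 2) := by positivity
    linarith
  have e1 : 2 * ξ * g₁ ≤ 4 * κ * |g₁| := by
    have h1 := le_abs_self (ξ * g₁)
    rw [abs_mul] at h1
    have h2 := mul_le_mul_of_nonneg_right hξ (abs_nonneg g₁)
    linarith
  have e2 : 2 * ζ * g₂ ≤ 4 * κ * |g₂| := by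
    have h1 := le_abs_self (ζ * g₂)
    rw [abs_mul] at h1
    have h2 := mul_le_mul_of_nonneg_right hζ (abs_nonneg g₂)
    linarith
  -- everything but the two good terms is at most `P * A * G`
  have e3 : (A * (2 * ξ * g₁ + 2 * ζ * g₂)) + C * (2 * A * |ξ| + 2 * A * |ζ| + 1) + 4 * A
      ≤ A * G := by
    have h1 : C * |ξ| ≤ C * (2 * κ) := mul_le_mul_of_nonneg_left hξ hC
    have h2 : C * |ζ| ≤ C * (2 * κ) := mul_le_mul_of_nonneg_left hζ hC
    have h3 : C * 1 ≤ C * A := mul_le_mul_of_nonneg_left hA hC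
    have h4 := mul_le_mul_of_nonneg_left (add_le_add e1 e2) hA0.le
    have h5 := mul_le_mul_of_nonneg_left (add_le_add h1 h2) hA0.le
    rw [hG]; linarith
  have e4 := mul_le_mul_of_nonneg_left e3 hP0.le
  have e5 : C * (P - 1) ≤ C * P := mul_le_mul_of_nonneg_left (by linarith) hC
  have key : P * (A * G) < Λ * (P - 1) + P * (4 * A ^ 2 * (ξ ^ 2 + ζ ^ 2)) := by
    rcases le_or_gt (κ ^ 2) (ξ ^ 2 + ζ ^ 2) with h | h
    · have h1 : A * G < 4 * A ^ 2 * (ξ ^ 2 + ζ ^ 2) := by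
        have h2 := mul_lt_mul_of_pos_left hA' hA0
        have h3 := mul_le_mul_of_nonneg_left h (by positivity : 0 ≤ 4 * A ^ 2)
        linarith
      have h2 := mul_lt_mul_of_pos_left h1 hP0
      have h3 : 0 ≤ Λ * (P - 1) := mul_nonneg hΛ0.le (by linarith)
      linarith
    · have h0 : 0 < A * κ ^ 2 := by positivity
      have h1 : 1 + A * κ ^ 2 ≤ P := by
        have := mul_le_mul_of_nonneg_left h.le hA0.le
        linarith
      have h2 : P * (A * G + 1) ≤ Λ * (P - 1) := by
        have h3 : P * (A * κ ^ 2) ≤ (P - 1) * (1 + A * κ ^ 2) := by linarith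
        have h4 := mul_le_mul_of_nonneg_left h3 (by positivity : 0 ≤ A * G + 1)
        have h5 : (P * (A * G + 1)) * (A * κ ^ 2) ≤ (Λ * (P - 1)) * (A * κ ^ 2) := by
          calc _ = (A * G + 1) * (P * (A * κ ^ 2)) := by ring
            _ ≤ _ := h4
            _ = (P - 1) * ((A * G + 1) * (1 + A * κ ^ 2)) := by ring
            _ = _ := by rw [← hΛ]; ring
        exact le_of_mul_le_mul_right h5 h0
      have h3 : 0 ≤ P * (4 * A ^ 2 * (ξ ^ 2 + ζ ^ 2)) := by positivity
      linarith
  linarith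

set_option maxHeartbeats 2000000 in
/-- Boundary point lemma in the half-plane `x ≤ y`, at the point `(x₁, x₁, t₁)` of the diagonal: a
nonnegative supersolution which is not of linear growth in the direction `(-1, 1)` there vanishes
at all earlier times. A barrier is carried by a tube around the segment from a hypothetical point
of positivity to a ball touching the diagonal at `(x₁, x₁)`. -/
lemma hopf {E : ℝ → ℝ → ℝ → ℝ} {x₁ t₁ d τ C : ℝ} (hC : 0 ≤ C)
    (hE : ContinuousOn (fun p : ℝ × ℝ × ℝ => E p.1 p.2.1 p.2.2)
      {p | p.1 ≤ p.2.1 ∧ |p.1 - x₁| < d ∧ |p.2.1 - x₁| < d ∧ t₁ - τ < p.2.2 ∧ p.2.2 ≤ t₁})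
    (h0 : ∀ x y t, x ≤ y → |x - x₁| < d → |y - x₁| < d → t₁ - τ < t → t ≤ t₁ → 0 ≤ E x y t)
    (hj : ∀ x y t, x < y → |x - x₁| < d → |y - x₁| < d → t₁ - τ < t → t ≤ t₁ →
      ∃ a b a' b' e, HasJet (fun x' => E x' y t) x a b ∧ HasJet (fun y' => E x y' t) y a' b' ∧
        HasDerivAt (fun t' => E x y t') e t ∧ b + b' - e ≤ C * (|a| + |a'| + E x y t))
    (hz : ∀ c > 0, ∃ᶠ r in 𝓝[>] (0 : ℝ), E (x₁ - r) (x₁ + r) t₁ < c * r) :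
    ∀ x y s, x < y → |x - x₁| < d → |y - x₁| < d → t₁ - τ < s → s < t₁ → E x y s = 0 := by
  intro x₀ y₀ s hxy hx₀ hy₀ hsτ hst
  by_contra hne
  have hE0 : 0 < E x₀ y₀ s := lt_of_le_of_ne (h0 _ _ _ hxy.le hx₀ hy₀ hsτ hst.le) (Ne.symm hne)
  obtain ⟨m₀, hm₀, hm₀E⟩ := exists_between hE0
  -- the ball at the starting time on which `E` is bounded below
  obtain ⟨δ, hδ, hball⟩ : ∃ δ > 0, ∀ x y, x ≤ y → |x - x₁| < d → |y - x₁| < d → |x - x₀| < δ →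
      |y - y₀| < δ → m₀ < E x y s := by
    have h1 := (hE (x₀, y₀, s) ⟨hxy.le, hx₀, hy₀, hsτ, hst.le⟩).eventually (lt_mem_nhds hm₀E)
    obtain ⟨δ, hδ, h⟩ := Metric.mem_nhdsWithin_iff.1 h1
    refine ⟨δ, hδ, fun x y hxy hx hy hx' hy' => h (a := (x, y, s)) ⟨?_, hxy, hx, hy, hsτ, hst.le⟩⟩
    rw [Metric.mem_ball, Prod.dist_eq, Prod.dist_eq, dist_self, Real.dist_eq, Real.dist_eq]
    simp [hx', hy', hδ]
  obtain ⟨κ, hκ, hκ'⟩ : ∃ κ > 0, 2 * κ < δ ∧ 2 * κ ≤ y₀ - x₀ ∧ |x₀ - x₁| + 2 * κ < d ∧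
      |y₀ - x₁| + 2 * κ < d ∧ 3 * κ < d := by
    have hd : 0 < d := (abs_nonneg _).trans_lt hx₀
    obtain ⟨k, hk, hk'⟩ := exists_between (show (0 : ℝ) < min δ (min (y₀ - x₀) (min (d - |x₀ - x₁|)
      (min (d - |y₀ - x₁|) d))) by simp only [lt_min_iff]; refine ⟨hδ, ?_, ?_, ?_, hd⟩ <;> linarith)
    simp only [lt_min_iff] at hk'
    refine ⟨k / 3, by positivity, ?_, ?_, ?_, ?_, ?_⟩ <;> linarith [hk'.1, hk'.2.1, hk'.2.2.1]
  obtain ⟨hκδ, hκxy, hκx, hκy, hκd⟩ := hκ'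
  have hts : 0 < t₁ - s := by linarith
  obtain ⟨g₁, hg₁⟩ : ∃ v : ℝ, v = (x₁ - κ - x₀) / (t₁ - s) := ⟨_, rfl⟩
  obtain ⟨g₂, hg₂⟩ : ∃ v : ℝ, v = (x₁ + κ - y₀) / (t₁ - s) := ⟨_, rfl⟩
  have hg₁' : (t₁ - s) * g₁ = x₁ - κ - x₀ := by rw [hg₁]; field_simp
  have hg₂' : (t₁ - s) * g₂ = x₁ + κ - y₀ := by rw [hg₂]; field_simp
  obtain ⟨γ₁, hγ₁⟩ : ∃ γ : ℝ → ℝ, γ = fun t => x₀ + (t - s) * g₁ := ⟨_, rfl⟩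
  obtain ⟨γ₂, hγ₂⟩ : ∃ γ : ℝ → ℝ, γ = fun t => y₀ + (t - s) * g₂ := ⟨_, rfl⟩
  have hγc₁ : Continuous γ₁ := by rw [hγ₁]; fun_prop
  have hγc₂ : Continuous γ₂ := by rw [hγ₂]; fun_prop
  have hγd₁ : ∀ t, HasDerivAt γ₁ g₁ t := fun t => by
    rw [hγ₁]; simpa using (((hasDerivAt_id t).sub_const s).mul_const g₁).const_add x₀
  have hγd₂ : ∀ t, HasDerivAt γ₂ g₂ t := fun t => by
    rw [hγ₂]; simpa using (((hasDerivAt_id t).sub_const s).mul_const g₂).const_add y₀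
  -- convexity facts along the segment
  have hpath : ∀ t, s ≤ t → t ≤ t₁ → |γ₁ t - x₁| + 2 * κ < d ∧ |γ₂ t - x₁| + 2 * κ < d ∧
      2 * κ ≤ γ₂ t - γ₁ t := by
    intro t h1 h2
    obtain ⟨θ, hθ⟩ : ∃ θ : ℝ, θ = (t - s) / (t₁ - s) := ⟨_, rfl⟩
    have hθ0 : 0 ≤ θ := by rw [hθ]; exact div_nonneg (by linarith) hts.le
    have hθ1 : θ ≤ 1 := by rw [hθ, div_le_one hts]; linarith
    have e1 : γ₁ t = (1 - θ) * x₀ + θ * (x₁ - κ) := by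
      have : (t - s) * g₁ = θ * (x₁ - κ - x₀) := by rw [hθ, hg₁]; field_simp
      rw [hγ₁]; simp only [this]; ring
    have e2 : γ₂ t = (1 - θ) * y₀ + θ * (x₁ + κ) := by
      have : (t - s) * g₂ = θ * (x₁ + κ - y₀) := by rw [hθ, hg₂]; field_simp
      rw [hγ₂]; simp only [this]; ring
    have a1 := abs_lt.1 (show |x₀ - x₁| < d - 2 * κ by linarith)
    have a2 := abs_lt.1 (show |y₀ - x₁| < d - 2 * κ by linarith)
    have conv : ∀ p q r : ℝ, p < r → q < r → (1 - θ) * p + θ * q < r := by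
      intro p q r hp hq
      have := (convex_Iio r) (x := p) hp (y := q) hq (a := 1 - θ) (b := θ) (by linarith) hθ0
        (by ring)
      simpa using this
    refine ⟨?_, ?_, ?_⟩
    · have : |γ₁ t - x₁| < d - 2 * κ := abs_lt.2
        ⟨by linarith [conv (x₁ - x₀) κ (d - 2 * κ) (by linarith) (by linarith)],
          by linarith [conv (x₀ - x₁) (-κ) (d - 2 * κ) (by linarith) (by linarith)]⟩
      linarith
    · have : |γ₂ t - x₁| < d - 2 * κ := abs_lt.2
        ⟨by linarith [conv (x₁ - y₀) (-κ) (d - 2 * κ) (by linarith) (by linarith)],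
          by linarith [conv (y₀ - x₁) κ (d - 2 * κ) (by linarith) (by linarith)]⟩
      linarith
    · have := mul_le_mul_of_nonneg_left hκxy (by linarith : 0 ≤ 1 - θ)
      rw [e1, e2]; linarith
  obtain ⟨G, hG⟩ : ∃ v : ℝ, v = 4 * κ * (|g₁| + |g₂|) + 4 + 8 * C * κ + C := ⟨_, rfl⟩
  have hG0 : 0 < G := by rw [hG]; positivity
  obtain ⟨A, hA1, hA2⟩ : ∃ A : ℝ, 1 ≤ A ∧ G < 4 * A * κ ^ 2 := by
    refine ⟨1 + G / κ ^ 2, le_add_of_nonneg_right (by positivity), ?_⟩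
    have : 4 * (1 + G / κ ^ 2) * κ ^ 2 = 4 * κ ^ 2 + 4 * G := by field_simp
    rw [this]; nlinarith
  obtain ⟨Λ, hΛ⟩ : ∃ Λ : ℝ, Λ * (A * κ ^ 2) = (A * G + 1) * (1 + A * κ ^ 2) :=
    ⟨(A * G + 1) * (1 + A * κ ^ 2) / (A * κ ^ 2), by field_simp⟩
  obtain ⟨ε, hε⟩ : ∃ v : ℝ, v = m₀ / exp (A * (2 * κ ^ 2)) := ⟨_, rfl⟩
  have hε0 : 0 < ε := by rw [hε]; positivity
  have hεm : ε * exp (A * (2 * κ ^ 2)) = m₀ := by rw [hε]; field_simp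
  have hA0 : 0 < A := by linarith
  -- geometry of the tube
  have htube : ∀ x y t, s ≤ t → t ≤ t₁ → (x - γ₁ t) ^ 2 + (y - γ₂ t) ^ 2 ≤ 2 * κ ^ 2 →
      x ≤ y ∧ |x - γ₁ t| < 2 * κ ∧ |y - γ₂ t| < 2 * κ ∧ |x - x₁| < d ∧ |y - x₁| < d := by
    intro x y t h1 h2 hq
    obtain ⟨p1, p2, p3⟩ := hpath t h1 h2
    have a1 : |x - γ₁ t| < 2 * κ := abs_lt_of_sq_lt_sq (by nlinarith [sq_nonneg (y - γ₂ t)])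
      (by positivity)
    have a2 : |y - γ₂ t| < 2 * κ := abs_lt_of_sq_lt_sq (by nlinarith [sq_nonneg (x - γ₁ t)])
      (by positivity)
    have a3 : (x - γ₁ t) - (y - γ₂ t) ≤ 2 * κ := by
      apply le_of_sq_le_sq _ (by positivity)
      nlinarith [sq_nonneg ((x - γ₁ t) + (y - γ₂ t))]
    refine ⟨by linarith, a1, a2, ?_, ?_⟩
    · have := abs_add_le (x - γ₁ t) (γ₁ t - x₁)
      rw [sub_add_sub_cancel] at this; linarith
    · have := abs_add_le (y - γ₂ t) (γ₂ t - x₁)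
      rw [sub_add_sub_cancel] at this; linarith
  have htube' : ∀ x y t, s ≤ t → t ≤ t₁ → (x - γ₁ t) ^ 2 + (y - γ₂ t) ^ 2 < 2 * κ ^ 2 → x < y := by
    intro x y t h1 h2 hq
    obtain ⟨p1, p2, p3⟩ := hpath t h1 h2
    have a3 : (x - γ₁ t) - (y - γ₂ t) < 2 * κ := by
      apply lt_of_pow_lt_pow_left₀ 2 (by positivity)
      nlinarith [sq_nonneg ((x - γ₁ t) + (y - γ₂ t))]
    linarith
  obtain ⟨K, hK⟩ : ∃ K : Set (ℝ × ℝ × ℝ), K =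
      (Icc (x₁ - d) (x₁ + d) ×ˢ (Icc (x₁ - d) (x₁ + d) ×ˢ Icc s t₁)) ∩
        {p | (p.1 - γ₁ p.2.2) ^ 2 + (p.2.1 - γ₂ p.2.2) ^ 2 ≤ 2 * κ ^ 2} := ⟨_, rfl⟩
  have memK : ∀ x y t, (x, y, t) ∈ K ↔ (s ≤ t ∧ t ≤ t₁) ∧
      (x - γ₁ t) ^ 2 + (y - γ₂ t) ^ 2 ≤ 2 * κ ^ 2 := by
    intro x y t
    rw [hK]
    constructor
    · rintro ⟨⟨-, -, h⟩, h'⟩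
      exact ⟨h, h'⟩
    · rintro ⟨⟨h1, h2⟩, h'⟩
      obtain ⟨-, -, -, q1, q2⟩ := htube x y t h1 h2 h'
      rw [abs_lt] at q1 q2
      refine ⟨⟨⟨?_, ?_⟩, ⟨?_, ?_⟩, h1, h2⟩, h'⟩ <;> dsimp only <;> linarith
  obtain ⟨φ, hφ⟩ : ∃ φ : ℝ → ℝ → ℝ → ℝ, φ = fun x y t =>
    ε * (exp (-Λ * (t - s)) * (exp (A * (2 * κ ^ 2 - (x - γ₁ t) ^ 2 - (y - γ₂ t) ^ 2)) - 1))
      - E x y t := ⟨_, rfl⟩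
  have key : ∀ x y t, (x, y, t) ∈ K → φ x y t ≤ 0 := by
    refine max_principle ?_ ?_ ?_
    · rw [hK]
      refine (isCompact_Icc.prod (isCompact_Icc.prod isCompact_Icc)).inter_right ?_
      exact isClosed_le (by fun_prop) (by fun_prop)
    · rw [hφ]
      refine ContinuousOn.sub (by fun_prop) (hE.mono ?_)
      rintro ⟨x, y, t⟩ hp
      obtain ⟨⟨h1, h2⟩, h3⟩ := (memK x y t).1 hp
      obtain ⟨q0, -, -, q1, q2⟩ := htube x y t h1 h2 h3
      exact ⟨q0, q1, q2, by linarith, h2⟩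
    · intro x y t hp hpos
      obtain ⟨⟨h1, h2⟩, h3⟩ := (memK x y t).1 hp
      obtain ⟨q0, c1, c2, q1, q2⟩ := htube x y t h1 h2 h3
      have hEn : 0 ≤ E x y t := h0 x y t q0 q1 q2 (by linarith) h2
      rw [hφ] at hpos
      dsimp only at hpos
      have hF : 0 < exp (-Λ * (t - s)) := exp_pos _
      have hq : (x - γ₁ t) ^ 2 + (y - γ₂ t) ^ 2 < 2 * κ ^ 2 := by
        by_contra! h
        have e1 : exp (A * (2 * κ ^ 2 - (x - γ₁ t) ^ 2 - (y - γ₂ t) ^ 2)) ≤ 1 :=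
          exp_le_one_iff.2 (mul_nonpos_of_nonneg_of_nonpos hA0.le (by linarith))
        have e2 : ε * (exp (-Λ * (t - s)) *
            (exp (A * (2 * κ ^ 2 - (x - γ₁ t) ^ 2 - (y - γ₂ t) ^ 2)) - 1)) ≤ 0 :=
          mul_nonpos_of_nonneg_of_nonpos hε0.le
            (mul_nonpos_of_nonneg_of_nonpos hF.le (by linarith))
        linarith
      have hlt := htube' x y t h1 h2 hq
      have hst' : s < t := by
        rcases h1.eq_or_lt with h | h
        · exfalso
          subst h
          have g1 : γ₁ s = x₀ := by rw [hγ₁]; simp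
          have g2 : γ₂ s = y₀ := by rw [hγ₂]; simp
          rw [g1] at c1
          rw [g2] at c2
          have e1 := hball x y q0 q1 q2 (by linarith) (by linarith)
          have e2 : exp (A * (2 * κ ^ 2 - (x - γ₁ s) ^ 2 - (y - γ₂ s) ^ 2)) ≤
              exp (A * (2 * κ ^ 2)) := by
            apply exp_le_exp.2
            apply mul_le_mul_of_nonneg_left _ hA0.le
            linarith [sq_nonneg (x - γ₁ s), sq_nonneg (y - γ₂ s)]
          have e3 := mul_le_mul_of_nonneg_left e2 hε0.le
          simp only [sub_self, mul_zero, exp_zero, one_mul] at hpos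
          linarith
        · exact h
      refine ⟨?_, ?_, ?_, ?_⟩
      · have : ∀ᶠ x' in 𝓝 x, (x' - γ₁ t) ^ 2 + (y - γ₂ t) ^ 2 < 2 * κ ^ 2 :=
          (Continuous.tendsto (by fun_prop) x).eventually (gt_mem_nhds hq)
        filter_upwards [this] with x' h using (memK _ _ _).2 ⟨⟨h1, h2⟩, h.le⟩
      · have : ∀ᶠ y' in 𝓝 y, (x - γ₁ t) ^ 2 + (y' - γ₂ t) ^ 2 < 2 * κ ^ 2 :=
          (Continuous.tendsto (by fun_prop) y).eventually (gt_mem_nhds hq)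
        filter_upwards [this] with x' h using (memK _ _ _).2 ⟨⟨h1, h2⟩, h.le⟩
      · have : ∀ᶠ t' in 𝓝 t, (x - γ₁ t') ^ 2 + (y - γ₂ t') ^ 2 < 2 * κ ^ 2 :=
          (Continuous.tendsto (by fun_prop) t).eventually (gt_mem_nhds hq)
        filter_upwards [this.filter_mono nhdsWithin_le_nhds, Ioo_mem_nhdsLT hst'] with t' h h'
        exact (memK _ _ _).2 ⟨⟨h'.1.le, h'.2.le.trans h2⟩, h.le⟩
      · obtain ⟨a, b, a', b', e, j1, j2, j3, j4⟩ := hj x y t hlt q1 q2 (by linarith) h2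
        have J1 : HasJet (fun x' => exp (A * (2 * κ ^ 2 - (x' - γ₁ t) ^ 2 - (y - γ₂ t) ^ 2))) x
            _ _ := (hasJet_bump A (2 * κ ^ 2 - (y - γ₂ t) ^ 2) (γ₁ t) x).congr
              (Eventually.of_forall fun x' => by ring_nf)
        have J2 := hasJet_bump A (2 * κ ^ 2 - (x - γ₁ t) ^ 2) (γ₂ t) y
        have eqP : 2 * κ ^ 2 - (y - γ₂ t) ^ 2 - (x - γ₁ t) ^ 2 =
          2 * κ ^ 2 - (x - γ₁ t) ^ 2 - (y - γ₂ t) ^ 2 := by ring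
        rw [eqP] at J1
        have J3 : HasDerivAt (fun t' => exp (A * (2 * κ ^ 2 - (x - γ₁ t') ^ 2 - (y - γ₂ t') ^ 2)))
            (exp (A * (2 * κ ^ 2 - (x - γ₁ t) ^ 2 - (y - γ₂ t) ^ 2)) *
              (A * (2 * (x - γ₁ t) * g₁ + 2 * (y - γ₂ t) * g₂))) t := by
          refine HasDerivAt.exp ?_
          refine ((((((hγd₁ t).const_sub x).pow 2).const_sub (2 * κ ^ 2)).sub
            (((hγd₂ t).const_sub y).pow 2)).const_mul A).congr_deriv ?_
          simp only [Nat.cast_ofNat]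
          ring
        rw [hφ]
        refine ⟨_, _, _, _, _,
          (((J1.sub (hasJet_const 1 x)).const_mul (exp (-Λ * (t - s)))).const_mul ε).sub j1,
          (((J2.sub (hasJet_const 1 y)).const_mul (exp (-Λ * (t - s)))).const_mul ε).sub j2,
          (((hasDerivAt_exp_shift (-Λ) s t).mul (J3.sub_const 1)).const_mul ε).sub j3, ?_⟩
        intro ha ha'
        obtain ⟨P, hP⟩ : ∃ P, P = exp (A * (2 * κ ^ 2 - (x - γ₁ t) ^ 2 - (y - γ₂ t) ^ 2)) :=
          ⟨_, rfl⟩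
        have hbar := barrier_ineq hC hκ hG hA1 hA2 hΛ hq hP
        rw [← hP] at ha ha' hpos ⊢
        have hP0 : 0 < P := by rw [hP]; exact exp_pos _
        generalize exp (-Λ * (t - s)) = F at *
        have ea : a = (ε * F * P * (2 * A)) * (-(x - γ₁ t)) := by linarith
        have ea' : a' = (ε * F * P * (2 * A)) * (-(y - γ₂ t)) := by linarith
        have hn : 0 < ε * F * P * (2 * A) := by positivity
        have eA : |a| = (ε * F * P * (2 * A)) * |x - γ₁ t| := by
          rw [ea, abs_mul, abs_of_pos hn, abs_neg]
        have eA' : |a'| = (ε * F * P * (2 * A)) * |y - γ₂ t| := by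
          rw [ea', abs_mul, abs_of_pos hn, abs_neg]
        rw [eA, eA'] at j4
        have hCE : C * E x y t ≤ C * (ε * (F * (P - 1))) :=
          mul_le_mul_of_nonneg_left (by linarith) hC
        have hfin := mul_lt_mul_of_pos_left hbar (mul_pos hε0 hF)
        linarith
  -- the barrier forces linear growth at the boundary point
  obtain ⟨r, hr, hr0, hrκ⟩ := ((hz (ε * exp (-Λ * (t₁ - s)) * (A * (2 * κ))) (by positivity)).and_eventually
    (Ioo_mem_nhdsGT hκ)).exists
  have g1 : γ₁ t₁ = x₁ - κ := by rw [hγ₁]; simp only [hg₁']; ring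
  have g2 : γ₂ t₁ = x₁ + κ := by rw [hγ₂]; simp only [hg₂']; ring
  have hq : 2 * κ * r ≤ 2 * κ ^ 2 - (x₁ - r - γ₁ t₁) ^ 2 - (x₁ + r - γ₂ t₁) ^ 2 := by
    rw [g1, g2]
    have := mul_le_mul_of_nonneg_right hrκ.le hr0.le
    linarith
  have h1 := key (x₁ - r) (x₁ + r) t₁ ((memK _ _ _).2 ⟨⟨hst.le, le_rfl⟩, by
    have : 0 ≤ 2 * κ * r := by positivity
    linarith⟩)
  rw [hφ] at h1
  dsimp only at h1
  have h2 : A * (2 * κ * r) ≤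
      exp (A * (2 * κ ^ 2 - (x₁ - r - γ₁ t₁) ^ 2 - (x₁ + r - γ₂ t₁) ^ 2)) - 1 := by
    have := mul_le_mul_of_nonneg_left hq hA0.le
    linarith [add_one_le_exp (A * (2 * κ ^ 2 - (x₁ - r - γ₁ t₁) ^ 2 - (x₁ + r - γ₂ t₁) ^ 2))]
  have h3 := mul_le_mul_of_nonneg_left h2 (mul_nonneg hε0.le (exp_pos (-Λ * (t₁ - s))).le)
  linarith

/-! ### Classical solutions and bounds on the nonlinearity -/

/-- A function of `(x, t)` with continuous partial derivatives on an open strip is strictly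
differentiable. -/
lemma strict_fderiv {u ut ux : ℝ → ℝ → ℝ} {I : Set ℝ} (hI : IsOpen I)
    (h1 : ∀ x : ℝ, ∀ t ∈ I, HasDerivAt (fun s => u x s) (ut x t) t)
    (h2 : ∀ x : ℝ, ∀ t ∈ I, HasDerivAt (fun y => u y t) (ux x t) x)
    (c1 : ContinuousOn (fun p : ℝ × ℝ => ut p.1 p.2) (Set.univ ×ˢ I))
    (c2 : ContinuousOn (fun p : ℝ × ℝ => ux p.1 p.2) (Set.univ ×ˢ I)) (x t : ℝ) (ht : t ∈ I) :
    HasStrictFDerivAt (fun p : ℝ × ℝ => u p.1 p.2)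
      ((ContinuousLinearMap.toSpanSingleton ℝ (ux x t)).coprod
        (ContinuousLinearMap.toSpanSingleton ℝ (ut x t))) (x, t) := by
  have hopen : IsOpen ((Set.univ : Set ℝ) ×ˢ I) := isOpen_univ.prod hI
  have hmem : (Set.univ : Set ℝ) ×ˢ I ∈ 𝓝 (x, t) := hopen.mem_nhds ⟨trivial, ht⟩
  have hcont : Continuous fun a : ℝ => ContinuousLinearMap.toSpanSingleton ℝ a :=
    (ContinuousLinearMap.toSpanSingletonCLE (𝕜 := ℝ) (E := ℝ)).continuous
  exact hasStrictFDerivAt_uncurry_coprod (f := u)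
    (f₁ := fun x t => ContinuousLinearMap.toSpanSingleton ℝ (ux x t))
    (f₂ := fun x t => ContinuousLinearMap.toSpanSingleton ℝ (ut x t))
    (by filter_upwards [hmem] with v hv using (h2 v.1 v.2 hv.2).hasFDerivAt)
    (by filter_upwards [hmem] with v hv using (h1 v.1 v.2 hv.2).hasFDerivAt)
    (hcont.continuousAt.comp (c2.continuousAt hmem))
    (hcont.continuousAt.comp (c1.continuousAt hmem))

lemma IsSolOn.continuousOn {f u : ℝ → ℝ → ℝ} {I : Set ℝ} (hI : IsOpen I) (h : IsSolOn f u I) :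
    ContinuousOn (fun p : ℝ × ℝ => u p.1 p.2) (Set.univ ×ˢ I) := by
  obtain ⟨ut, ux, uxx, h1, h2, -, c1, c2, -⟩ := h
  rintro ⟨x, t⟩ ⟨-, ht⟩
  exact (strict_fderiv hI h1 h2 c1 c2 x t ht).hasFDerivAt.continuousAt.continuousWithinAt

/-- Bounds on `f`, on its increments and on its second differences over `[0, M]`, uniform in
time. -/
structure FBounds (f : ℝ → ℝ → ℝ) (M B C₁ C₂ : ℝ) : Prop where
  M_nonneg : 0 ≤ M
  B_nonneg : 0 ≤ B
  C₁_nonneg : 0 ≤ C₁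
  C₂_nonneg : 0 ≤ C₂
  bound : ∀ t, ∀ p ∈ Icc 0 M, |f t p| ≤ B
  lip : ∀ t, ∀ p ∈ Icc 0 M, ∀ q ∈ Icc 0 M, |f t p - f t q| ≤ C₁ * |p - q|
  lip₂ : ∀ t, ∀ p ∈ Icc 0 M, ∀ q ∈ Icc 0 M, ∀ r ∈ Icc 0 M, ∀ s ∈ Icc 0 M,
    |f t p - f t q - f t r + f t s| ≤ C₁ * |p - q - r + s| + C₂ * ((|q - s| + |p - r|) * |r - s|)

lemma hasDerivAt_snd {φ : ℝ × ℝ → ℝ} (h : Differentiable ℝ φ) (t p : ℝ) :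
    HasDerivAt (fun p => φ (t, p)) (fderiv ℝ φ (t, p) (0, 1)) p :=
  (h (t, p)).hasFDerivAt.comp_hasDerivAt p ((hasDerivAt_const p t).prodMk (hasDerivAt_id p))

lemma exists_fBounds {f : ℝ → ℝ → ℝ} {T : ℝ} (hT : 0 < T)
    (hf : ContDiff ℝ 2 (Function.uncurry f)) (hfper : ∀ t u : ℝ, f (t + T) u = f t u)
    {M : ℝ} (hM : 0 ≤ M) : ∃ B C₁ C₂, FBounds f M B C₁ C₂ := by
  obtain ⟨g, hg⟩ : ∃ g : ℝ × ℝ → ℝ, g = fun z => fderiv ℝ (Function.uncurry f) z (0, 1) := ⟨_, rfl⟩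
  have hgC : ContDiff ℝ 1 g := by
    rw [hg]; exact (hf.fderiv_right (m := 1) (by norm_num)).clm_apply contDiff_const
  obtain ⟨k, hk⟩ : ∃ k : ℝ × ℝ → ℝ, k = fun z => fderiv ℝ g z (0, 1) := ⟨_, rfl⟩
  have hkC : Continuous k := by
    rw [hk]; exact ((hgC.continuous_fderiv (by norm_num)).clm_apply continuous_const)
  have d1 : ∀ t p, HasDerivAt (f t) (g (t, p)) p := by
    intro t p; rw [hg]; exact hasDerivAt_snd (hf.differentiable (by norm_num)) t p
  have d2 : ∀ t p, HasDerivAt (fun p => g (t, p)) (k (t, p)) p := by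
    intro t p; rw [hk]; exact hasDerivAt_snd (hgC.differentiable (by norm_num)) t p
  have hcomp : IsCompact (Icc 0 T ×ˢ Icc 0 M) := isCompact_Icc.prod isCompact_Icc
  obtain ⟨B, hB⟩ := hcomp.exists_bound_of_continuousOn hf.continuous.continuousOn
  obtain ⟨C₁, hC₁⟩ := hcomp.exists_bound_of_continuousOn hgC.continuous.continuousOn
  obtain ⟨C₂, hC₂⟩ := hcomp.exists_bound_of_continuousOn hkC.continuousOn
  have h00 : ((0 : ℝ), (0 : ℝ)) ∈ Icc 0 T ×ˢ Icc 0 M := ⟨⟨le_rfl, hT.le⟩, le_rfl, hM⟩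
  have n1 : 0 ≤ C₁ := (norm_nonneg _).trans (hC₁ _ h00)
  have n2 : 0 ≤ C₂ := (norm_nonneg _).trans (hC₂ _ h00)
  have red : ∀ t, ∃ t' ∈ Icc 0 T, f t = f t' := by
    intro t
    have hper : Function.Periodic f T := fun t => funext (hfper t)
    obtain ⟨y, hy, e⟩ := hper.exists_mem_Ico₀ hT t
    exact ⟨y, ⟨hy.1, hy.2.le⟩, e⟩
  have lipg : ∀ t ∈ Icc 0 T, ∀ p ∈ Icc 0 M, ∀ q ∈ Icc 0 M, |g (t, p) - g (t, q)| ≤ C₂ * |p - q| := by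
    intro t ht p hp q hq
    exact (convex_Icc 0 M).norm_image_sub_le_of_norm_hasDerivWithin_le
      (fun x _ => (d2 t x).hasDerivWithinAt) (fun x hx => hC₂ (t, x) ⟨ht, hx⟩) hq hp
  refine ⟨B, C₁, C₂, hM, (norm_nonneg _).trans (hB _ h00), n1, n2, ?_, ?_, ?_⟩
  · intro t p hp
    obtain ⟨t', ht', e⟩ := red t
    rw [e]; exact hB (t', p) ⟨ht', hp⟩
  · intro t p hp q hq
    obtain ⟨t', ht', e⟩ := red t
    rw [e]
    exact (convex_Icc 0 M).norm_image_sub_le_of_norm_hasDerivWithin_le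
      (fun x _ => (d1 t' x).hasDerivWithinAt) (fun x hx => hC₁ (t', x) ⟨ht', hx⟩) hq hp
  · intro t p hp q hq r hr s hs
    obtain ⟨t', ht', e⟩ := red t
    rw [e]
    have hmem : ∀ a ∈ Icc 0 M, ∀ b ∈ Icc 0 M, ∀ θ ∈ Icc (0 : ℝ) 1, b + θ * (a - b) ∈ Icc 0 M := by
      intro a ha b hb θ hθ
      have h1 := mul_le_mul_of_nonneg_left ha.1 hθ.1
      have h2 := mul_le_mul_of_nonneg_left hb.1 (sub_nonneg.2 hθ.2)
      have h3 := mul_le_mul_of_nonneg_left ha.2 hθ.1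
      have h4 := mul_le_mul_of_nonneg_left hb.2 (sub_nonneg.2 hθ.2)
      constructor <;> linarith
    have hd : ∀ a b θ : ℝ, HasDerivAt (fun θ => f t' (b + θ * (a - b)))
        (g (t', b + θ * (a - b)) * (a - b)) θ := by
      intro a b θ
      have h1 : HasDerivAt (fun θ : ℝ => b + θ * (a - b)) (a - b) θ := by
        simpa using ((hasDerivAt_id θ).mul_const (a - b)).const_add b
      exact (d1 t' (b + θ * (a - b))).comp θ h1
    have hH := (convex_Icc (0 : ℝ) 1).norm_image_sub_le_of_norm_hasDerivWithin_le
      (f := fun θ => f t' (q + θ * (p - q)) - f t' (s + θ * (r - s)))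
      (C := C₁ * |p - q - r + s| + C₂ * ((|q - s| + |p - r|) * |r - s|))
      (fun θ _ => ((hd p q θ).sub (hd r s θ)).hasDerivWithinAt) ?_
      (x := 0) (y := 1) (by simp) (by simp)
    · simp only [one_mul, zero_mul, add_zero, add_sub_cancel, sub_zero, norm_one, mul_one,
        Real.norm_eq_abs] at hH
      have e2 : f t' p - f t' q - f t' r + f t' s = f t' p - f t' r - (f t' q - f t' s) := by ring
      rwa [e2]
    · intro θ hθ
      have m1 := hmem p hp q hq θ hθ
      have m2 := hmem r hr s hs θ hθ
      have e1 : g (t', q + θ * (p - q)) * (p - q) - g (t', s + θ * (r - s)) * (r - s) =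
        g (t', q + θ * (p - q)) * (p - q - r + s) +
          (g (t', q + θ * (p - q)) - g (t', s + θ * (r - s))) * (r - s) := by ring
      rw [e1, Real.norm_eq_abs]
      refine (abs_add_le _ _).trans ?_
      rw [abs_mul, abs_mul]
      have b1 : |g (t', q + θ * (p - q))| ≤ C₁ := hC₁ _ ⟨ht', m1⟩
      have b2 := lipg t' ht' _ m1 _ m2
      have b3 : |q + θ * (p - q) - (s + θ * (r - s))| ≤ |q - s| + |p - r| := by
        have e3 : q + θ * (p - q) - (s + θ * (r - s)) = (1 - θ) * (q - s) + θ * (p - r) := by ring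
        rw [e3]
        refine (abs_add_le _ _).trans ?_
        rw [abs_mul, abs_mul, abs_of_nonneg hθ.1, abs_of_nonneg (sub_nonneg.2 hθ.2)]
        exact add_le_add (mul_le_of_le_one_left (abs_nonneg _) (by linarith [hθ.1]))
          (mul_le_of_le_one_left (abs_nonneg _) hθ.2)
      refine add_le_add (mul_le_mul_of_nonneg_right b1 (abs_nonneg _)) ?_
      rw [← mul_assoc]
      exact mul_le_mul_of_nonneg_right (b2.trans (mul_le_mul_of_nonneg_left b3 n2)) (abs_nonneg _)

/-! ### Interior Lipschitz estimates by doubling of variables -/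

/-- One time unit of regularization, in its one-sided form: the difference `v x t - v y t`
is compared with a concave function of `x - y`. -/
lemma lip_aux {v : ℝ → ℝ → ℝ} {s A B : ℝ}
    (hc : ContinuousOn (fun p : ℝ × ℝ => v p.1 p.2) (univ ×ˢ Icc s (s + 1)))
    (hA : ∀ x, ∀ t ∈ Icc s (s + 1), |v x t| ≤ A)
    (hj : ∀ x, ∀ t ∈ Ioc s (s + 1), ∃ a b d, HasJet (fun y => v y t) x a b ∧
      HasDerivAt (fun r => v x r) d t ∧ |d - b| ≤ B) {x₀ y₀ : ℝ} (h₀ : y₀ ≤ x₀) (h₁ : x₀ - y₀ ≤ 1) :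
    v x₀ (s + 1) - v y₀ (s + 1) ≤ 2 * (2 * A + 2 * B + 1) * (x₀ - y₀) := by
  have hA0 : 0 ≤ A := (abs_nonneg _).trans (hA 0 s ⟨le_rfl, by linarith⟩)
  have hB0 : 0 ≤ B := by
    obtain ⟨_, _, _, _, _, h⟩ := hj 0 (s + 1) ⟨by linarith, le_rfl⟩
    exact (abs_nonneg _).trans h
  obtain ⟨N, hN⟩ : ∃ N : ℝ, N = 2 * A + 2 * B + 1 := ⟨_, rfl⟩
  rw [← hN]
  have hN0 : 0 < N := by linarith
  have main : ∀ η > 0, v x₀ (s + 1) - v y₀ (s + 1) ≤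
      2 * N * (x₀ - y₀) + η * (6 + x₀ ^ 2 + y₀ ^ 2) := by
    intro η hη
    obtain ⟨R, hR⟩ : ∃ R : ℝ, R = 1 + |x₀| + |y₀| + 2 * A / η := ⟨_, rfl⟩
    have hx0 := abs_nonneg x₀
    have hy0 := abs_nonneg y₀
    have hMη : 0 ≤ 2 * A / η := by positivity
    have hR1 : 1 ≤ R := by linarith
    have hRM : 2 * A ≤ η * R ^ 2 := by
      have h1 : 2 * A / η ≤ R := by linarith
      have h2 : 2 * A ≤ η * R := by rw [div_le_iff₀ hη] at h1; linarith
      nlinarith [mul_le_mul_of_nonneg_left hR1 (by positivity : 0 ≤ η * R)]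
    obtain ⟨φ, hφ⟩ : ∃ φ : ℝ → ℝ → ℝ → ℝ, φ = fun x y t => (t - s) * (v x t - v y t) -
      (N * (2 * (x - y) - (x - y) ^ 2) + η * (1 + x ^ 2 + y ^ 2 + 5 * (t - s))) := ⟨_, rfl⟩
    have key := max_principle (K := (Icc (-R) R ×ˢ (Icc (-R) R ×ˢ Icc s (s + 1))) ∩
      {p | p.1 - p.2.1 ∈ Icc (0 : ℝ) 1}) ?_ (φ := φ) ?_ ?_ x₀ y₀ (s + 1) ?_
    · rw [hφ] at key
      dsimp only at key
      have : 0 ≤ N * (x₀ - y₀) ^ 2 := by positivity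
      linarith
    · exact (isCompact_Icc.prod (isCompact_Icc.prod isCompact_Icc)).inter_right
        (isClosed_Icc.preimage (by fun_prop))
    · rw [hφ]
      refine ContinuousOn.sub (ContinuousOn.mul (by fun_prop) (ContinuousOn.sub ?_ ?_))
        (by fun_prop)
      · refine hc.comp (f := fun p : ℝ × ℝ × ℝ => (p.1, p.2.2)) (by fun_prop) ?_
        rintro ⟨x, y, t⟩ ⟨⟨-, -, ht⟩, -⟩
        exact ⟨trivial, ht⟩
      · refine hc.comp (f := fun p : ℝ × ℝ × ℝ => (p.2.1, p.2.2)) (by fun_prop) ?_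
        rintro ⟨x, y, t⟩ ⟨⟨-, -, ht⟩, -⟩
        exact ⟨trivial, ht⟩
    · rintro x y t ⟨⟨hx, hy, ht⟩, hxy⟩ hp
      simp only [mem_ofPred_eq, mem_Icc] at hx hy ht hxy
      rw [hφ] at hp
      dsimp only at hp
      have hst : 0 ≤ t - s := by linarith
      have hB : 0 < η * (1 + x ^ 2 + y ^ 2 + 5 * (t - s)) := by positivity
      have hr : 0 ≤ N * (2 * (x - y) - (x - y) ^ 2) := by
        apply mul_nonneg hN0.le
        nlinarith
      have hvv : v x t - v y t ≤ 2 * A := by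
        have h1 := (abs_le.1 (hA x t ht)).2
        have h2 := (abs_le.1 (hA y t ht)).1
        linarith
      have htv : (t - s) * (v x t - v y t) ≤ 2 * A := by
        have h1 := mul_le_mul_of_nonneg_left hvv hst
        have h2 := mul_le_mul_of_nonneg_right (show t - s ≤ 1 by linarith)
          (show 0 ≤ 2 * A by linarith)
        linarith
      have hxR : x ^ 2 < R ^ 2 := by
        by_contra! h
        linarith [mul_le_mul_of_nonneg_left h hη.le, mul_nonneg hη.le (sq_nonneg y),
          mul_nonneg hη.le hst]
      have hyR : y ^ 2 < R ^ 2 := by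
        by_contra! h
        linarith [mul_le_mul_of_nonneg_left h hη.le, mul_nonneg hη.le (sq_nonneg x),
          mul_nonneg hη.le hst]
      have hx' := abs_lt.1 (abs_lt_of_sq_lt_sq hxR (by linarith))
      have hy' := abs_lt.1 (abs_lt_of_sq_lt_sq hyR (by linarith))
      have hr0 : y < x := by
        rcases hxy.1.eq_or_lt with h | h
        · have : x = y := by linarith
          subst this
          simp only [sub_self, mul_zero] at hp
          linarith
        · linarith
      have hr1 : x - y < 1 := by
        rcases hxy.2.eq_or_lt with h | h
        · rw [h] at hp; linarith
        · exact h
      have hts : s < t := by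
        rcases ht.1.eq_or_lt with h | h
        · subst h
          simp only [sub_self, zero_mul, mul_zero] at hp hB
          linarith
        · exact h
      refine ⟨?_, ?_, ?_, ?_⟩
      · filter_upwards [Icc_mem_nhds hx'.1 hx'.2, Icc_mem_nhds hr0 (show x < y + 1 by linarith)]
          with x' h h'
        exact ⟨⟨h, hy, ht⟩, ⟨by linarith [h'.1], by linarith [h'.2]⟩⟩
      · filter_upwards [Icc_mem_nhds hy'.1 hy'.2, Icc_mem_nhds (show x - 1 < y by linarith) hr0]
          with y' h h'
        exact ⟨⟨hx, h, ht⟩, ⟨by linarith [h'.2], by linarith [h'.1]⟩⟩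
      · filter_upwards [Ioo_mem_nhdsLT hts] with t' h
        exact ⟨⟨hx, hy, h.1.le, h.2.le.trans ht.2⟩, hxy⟩
      · obtain ⟨a, b, d, h1, h2, h3⟩ := hj x t ⟨hts, ht.2⟩
        obtain ⟨a', b', d', k1, k2, k3⟩ := hj y t ⟨hts, ht.2⟩
        have Q1 : HasJet (fun x' : ℝ => N * (2 * (x' - y) - (x' - y) ^ 2)) x
            (N * (2 - 2 * (x - y))) (N * (-2)) := by
          refine HasJet.const_mul N (HasJet.of_hasDerivAt (g' := fun x' => 2 - 2 * (x' - y))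
            (fun z => ?_) ?_)
          · refine ((((hasDerivAt_id z).sub_const y).const_mul 2).sub
              (((hasDerivAt_id z).sub_const y).pow 2)).congr_deriv ?_
            simp
          · refine ((((hasDerivAt_id x).sub_const y).const_mul 2).const_sub 2).congr_deriv ?_
            simp
        have Q2 : HasJet (fun y' : ℝ => N * (2 * (x - y') - (x - y') ^ 2)) y
            (N * (-2 + 2 * (x - y))) (N * (-2)) := by
          refine HasJet.const_mul N (HasJet.of_hasDerivAt (g' := fun y' => -2 + 2 * (x - y'))
            (fun z => ?_) ?_)
          · refine ((((hasDerivAt_id z).const_sub x).const_mul 2).sub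
              (((hasDerivAt_id z).const_sub x).pow 2)).congr_deriv ?_
            simp
          · refine ((((hasDerivAt_id y).const_sub x).const_mul 2).const_add (-2)).congr_deriv ?_
            simp
        rw [hφ]
        refine ⟨_, _, _, _, _,
          ((h1.sub (hasJet_const (v y t) x)).const_mul (t - s)).sub (Q1.add
            (((((hasJet_const 1 x).add (hasJet_sq x)).add (hasJet_const (y ^ 2) x)).add
              (hasJet_const (5 * (t - s)) x)).const_mul η)),
          (((hasJet_const (v x t) y).sub k1).const_mul (t - s)).sub (Q2.add
            (((((hasJet_const 1 y).add (hasJet_const (x ^ 2) y)).add (hasJet_sq y)).add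
              (hasJet_const (5 * (t - s)) y)).const_mul η)),
          (((hasDerivAt_id t).sub_const s).mul (h2.sub k2)).sub
            ((((((hasDerivAt_id t).sub_const s).const_mul 5).const_add
              (1 + x ^ 2 + y ^ 2)).const_mul η).const_add _), ?_⟩
        intro _ _
        simp only [id, Pi.sub_apply]
        have e1 := (abs_le.1 h3).2
        have e2 := (abs_le.1 k3).1
        have e3 : (t - s) * ((d - b) - (d' - b')) ≤ 2 * B := by
          have h1 := mul_le_mul_of_nonneg_left (show (d - b) - (d' - b') ≤ 2 * B by linarith) hst
          have h2 := mul_le_mul_of_nonneg_right (show t - s ≤ 1 by linarith)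
            (show 0 ≤ 2 * B by linarith)
          linarith
        linarith
    · refine ⟨⟨abs_le.1 ?_, abs_le.1 ?_, by dsimp only; linarith, le_rfl⟩, ⟨?_, h₁⟩⟩
      · dsimp only; linarith
      · dsimp only; linarith
      · dsimp only; linarith
  have hq : 0 < 6 + x₀ ^ 2 + y₀ ^ 2 := by positivity
  refine le_of_forall_pos_le_add fun ε hε => ?_
  have := main (ε / (6 + x₀ ^ 2 + y₀ ^ 2)) (by positivity)
  rwa [div_mul_cancel₀ _ hq.ne'] at this

/-- `v` is a bounded classical solution of `v_t = v_xx + h` with bounded `h`, for times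
after `c`. -/
def BddSol (c A B : ℝ) (v : ℝ → ℝ → ℝ) : Prop :=
  ContinuousOn (fun p : ℝ × ℝ => v p.1 p.2) (univ ×ˢ Ioi c) ∧
  (∀ x, ∀ t > c, |v x t| ≤ A) ∧
  ∀ x, ∀ t > c, ∃ a b d, HasJet (fun y => v y t) x a b ∧ HasDerivAt (fun r => v x r) d t ∧
    |d - b| ≤ B

lemma BddSol.lip {c A B : ℝ} {v : ℝ → ℝ → ℝ} (h : BddSol c A B v) {t : ℝ} (ht : c + 1 < t)
    (x y : ℝ) : |v x t - v y t| ≤ 2 * (2 * A + 2 * B + 1) * |x - y| := by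
  obtain ⟨hc, hA, hj⟩ := h
  have hA0 : 0 ≤ A := (abs_nonneg _).trans (hA 0 t (by linarith))
  have hB0 : 0 ≤ B := by
    obtain ⟨_, _, _, _, _, h⟩ := hj 0 t (by linarith)
    exact (abs_nonneg _).trans h
  obtain ⟨s, rfl⟩ : ∃ s, t = s + 1 := ⟨t - 1, by ring⟩
  have hs : c < s := by linarith
  have hsub : (univ : Set ℝ) ×ˢ Icc s (s + 1) ⊆ univ ×ˢ Ioi c :=
    prod_mono le_rfl fun r hr => hs.trans_le hr.1
  wlog hxy : y ≤ x generalizing x y with H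
  · rw [abs_sub_comm, abs_sub_comm x]; exact H y x (by linarith)
  rw [abs_of_nonneg (sub_nonneg.2 hxy)]
  rcases le_or_gt (x - y) 1 with h1 | h1
  · rw [abs_le]
    constructor
    · have := lip_aux (v := fun x t => - v x t) (s := s) (A := A) (B := B) (hc.mono hsub).neg
        (fun x t ht => by rw [abs_neg]; exact hA x t (hs.trans_le ht.1)) (fun x t ht => by
          obtain ⟨a, b, d, j1, j2, j3⟩ := hj x t (hs.trans ht.1)
          refine ⟨-1 * a, -1 * b, -d, by simpa using j1.const_mul (-1), j2.neg, ?_⟩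
          rw [← abs_neg]; convert j3 using 2; ring) hxy h1
      linarith
    · exact lip_aux (hc.mono hsub) (fun x t ht => hA x t (hs.trans_le ht.1))
        (fun x t ht => hj x t (hs.trans ht.1)) hxy h1
  · have h2 : |v x (s + 1) - v y (s + 1)| ≤ 2 * A := by
      have := abs_sub (v x (s + 1)) (v y (s + 1))
      linarith [hA x (s + 1) (by linarith), hA y (s + 1) (by linarith)]
    nlinarith

/-! ### Uniform regularity of bounded solutions -/

/-- `u` is a classical solution with time derivative `ut` and space derivatives `ux`, `uxx`. -/
structure SolData (f u ut ux uxx : ℝ → ℝ → ℝ) (I : Set ℝ) : Prop where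
  dt : ∀ x : ℝ, ∀ t ∈ I, HasDerivAt (fun s => u x s) (ut x t) t
  dx : ∀ x : ℝ, ∀ t ∈ I, HasDerivAt (fun y => u y t) (ux x t) x
  dxx : ∀ x : ℝ, ∀ t ∈ I, HasDerivAt (fun y => ux y t) (uxx x t) x
  ct : ContinuousOn (fun p : ℝ × ℝ => ut p.1 p.2) (Set.univ ×ˢ I)
  cx : ContinuousOn (fun p : ℝ × ℝ => ux p.1 p.2) (Set.univ ×ˢ I)
  cxx : ContinuousOn (fun p : ℝ × ℝ => uxx p.1 p.2) (Set.univ ×ˢ I)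
  eq : ∀ x : ℝ, ∀ t ∈ I, ut x t = uxx x t + f t (u x t)

lemma isSolOn_iff {f u : ℝ → ℝ → ℝ} {I : Set ℝ} :
    IsSolOn f u I ↔ ∃ ut ux uxx, SolData f u ut ux uxx I := by
  constructor
  · rintro ⟨ut, ux, uxx, h1, h2, h3, h4, h5, h6, h7⟩
    exact ⟨ut, ux, uxx, h1, h2, h3, h4, h5, h6, h7⟩
  · rintro ⟨ut, ux, uxx, h⟩
    exact ⟨ut, ux, uxx, h.dt, h.dx, h.dxx, h.ct, h.cx, h.cxx, h.eq⟩

lemma SolData.cont {f u ut ux uxx : ℝ → ℝ → ℝ} {I : Set ℝ} (h : SolData f u ut ux uxx I)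
    (hI : IsOpen I) : ContinuousOn (fun p : ℝ × ℝ => u p.1 p.2) (Set.univ ×ˢ I) :=
  (isSolOn_iff.2 ⟨_, _, _, h⟩).continuousOn hI

lemma SolData.jet {f u ut ux uxx : ℝ → ℝ → ℝ} {I : Set ℝ} (h : SolData f u ut ux uxx I) (x : ℝ)
    {t : ℝ} (ht : t ∈ I) : HasJet (fun y => u y t) x (ux x t) (uxx x t) :=
  HasJet.of_hasDerivAt (g' := fun y => ux y t) (fun y => h.dx y t ht) (h.dxx x t ht)

lemma HasJet.comp_add {g : ℝ → ℝ} {x a b : ℝ} (h : ℝ) (hg : HasJet g (x + h) a b) :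
    HasJet (fun y => g (y + h)) x a b := by
  obtain ⟨g', h1, h2, h3⟩ := hg
  refine ⟨fun y => g' (y + h), ?_, h2.comp_add_const x h, h3⟩
  have : Tendsto (fun y => y + h) (𝓝 x) (𝓝 (x + h)) := Continuous.tendsto (by fun_prop) x
  filter_upwards [this.eventually h1] with y hy using hy.comp_add_const y h

/-- Difference quotient in space. -/
def dq (h : ℝ) (u : ℝ → ℝ → ℝ) (x t : ℝ) : ℝ := h⁻¹ * (u (x + h) t - u x t)

lemma tendsto_dq {u : ℝ → ℝ → ℝ} {x t a : ℝ} (h : HasDerivAt (fun y => u y t) a x) :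
    Tendsto (fun k => dq k u x t) (𝓝[>] 0) (𝓝 a) := by
  simpa [dq] using h.tendsto_slope_zero_right

lemma continuousOn_dq {h c : ℝ} {u : ℝ → ℝ → ℝ}
    (hu : ContinuousOn (fun p : ℝ × ℝ => u p.1 p.2) (univ ×ˢ Ioi c)) :
    ContinuousOn (fun p : ℝ × ℝ => dq h u p.1 p.2) (univ ×ˢ Ioi c) := by
  unfold dq
  refine ContinuousOn.mul (by fun_prop) (ContinuousOn.sub ?_ hu)
  refine hu.comp (f := fun p : ℝ × ℝ => (p.1 + h, p.2)) (by fun_prop) ?_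
  rintro ⟨x, t⟩ ⟨-, ht⟩
  exact ⟨trivial, ht⟩

lemma abs_dq_le {h x t L : ℝ} {u : ℝ → ℝ → ℝ} (hh : 0 < h)
    (hu : |u (x + h) t - u x t| ≤ L * |x + h - x|) : |dq h u x t| ≤ L := by
  rw [add_sub_cancel_left, abs_of_pos hh] at hu
  rw [dq, abs_mul, abs_of_pos (inv_pos.2 hh), inv_mul_le_iff₀ hh]
  linarith

/-- The limit of a family of `L`-Lipschitz functions is `L`-Lipschitz. -/
lemma lip_of_tendsto {F : ℝ → ℝ → ℝ} {G : ℝ → ℝ} {L : ℝ}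
    (hF : ∀ h > 0, ∀ x y, |F h x - F h y| ≤ L * |x - y|)
    (hG : ∀ x, Tendsto (fun h => F h x) (𝓝[>] 0) (𝓝 (G x))) (x y : ℝ) :
    |G x - G y| ≤ L * |x - y| := by
  refine le_of_tendsto ((hG x).sub (hG y)).abs ?_
  filter_upwards [self_mem_nhdsWithin] with h hh using hF h hh x y

/-- Space derivatives of a bounded solution are bounded and Lipschitz in space after three units
of time: the Lipschitz estimate is applied to the solution and to its difference quotients of the
first two orders. -/
lemma SolData.reg {f u ut ux uxx : ℝ → ℝ → ℝ} {M B C₁ C₂ : ℝ}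
    (h : SolData f u ut ux uxx (Ioi 0)) (hb : FBounds f M B C₁ C₂)
    (h0 : ∀ x, ∀ t > 0, u x t ∈ Icc 0 M) :
    ∃ L, 0 ≤ L ∧ ∀ t > 3, ∀ x, |u x t| ≤ L ∧ |ux x t| ≤ L ∧ |uxx x t| ≤ L ∧ |ut x t| ≤ L ∧
      ∀ y, |u x t - u y t| ≤ L * |x - y| ∧ |ux x t - ux y t| ≤ L * |x - y| ∧
        |uxx x t - uxx y t| ≤ L * |x - y| := by
  have hM := hb.M_nonneg
  have hB := hb.B_nonneg
  have hC₁ := hb.C₁_nonneg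
  have hC₂ := hb.C₂_nonneg
  have hcu := h.cont isOpen_Ioi
  have hu : BddSol 0 M B u := by
    refine ⟨hcu, fun x t ht => ?_, fun x t ht => ⟨_, _, _, h.jet x ht, h.dt x t ht, ?_⟩⟩
    · rw [abs_of_nonneg (h0 x t ht).1]; exact (h0 x t ht).2
    · rw [h.eq x t ht, add_sub_cancel_left]; exact hb.bound t _ (h0 x t ht)
  obtain ⟨L₁, hL₁⟩ : ∃ L : ℝ, L = 2 * (2 * M + 2 * B + 1) := ⟨_, rfl⟩
  have hL₁0 : 0 ≤ L₁ := by rw [hL₁]; positivity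
  have l1 : ∀ t > 1, ∀ x y, |u x t - u y t| ≤ L₁ * |x - y| := by
    intro t ht x y; rw [hL₁]; exact hu.lip (by linarith) x y
  have hd : ∀ k > 0, BddSol 1 L₁ (C₁ * L₁) (dq k u) := by
    intro k hk
    refine ⟨continuousOn_dq (hcu.mono (prod_mono le_rfl (Ioi_subset_Ioi (by norm_num)))),
      fun x t ht => abs_dq_le hk (l1 t ht _ _), fun x t ht => ?_⟩
    have ht0 : t ∈ Ioi (0 : ℝ) := by simp; linarith
    refine ⟨_, _, _, (((h.jet (x + k) ht0).comp_add k).sub (h.jet x ht0)).const_mul k⁻¹,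
      ((h.dt (x + k) t ht0).sub (h.dt x t ht0)).const_mul k⁻¹, ?_⟩
    rw [h.eq _ t ht0, h.eq _ t ht0]
    have e : k⁻¹ * (uxx (x + k) t + f t (u (x + k) t) - (uxx x t + f t (u x t))) -
      k⁻¹ * (uxx (x + k) t - uxx x t) = k⁻¹ * (f t (u (x + k) t) - f t (u x t)) := by ring
    rw [e, abs_mul, abs_of_pos (inv_pos.2 hk), inv_mul_le_iff₀ hk]
    have h1 := hb.lip t _ (h0 (x + k) t ht0) _ (h0 x t ht0)
    have h2 := l1 t ht (x + k) x
    rw [add_sub_cancel_left, abs_of_pos hk] at h2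
    linarith [mul_le_mul_of_nonneg_left h2 hC₁]
  obtain ⟨L₂, hL₂⟩ : ∃ L : ℝ, L = 2 * (2 * L₁ + 2 * (C₁ * L₁) + 1) := ⟨_, rfl⟩
  have hL₂0 : 0 ≤ L₂ := by rw [hL₂]; positivity
  have l2 : ∀ k > 0, ∀ t > 2, ∀ x y, |dq k u x t - dq k u y t| ≤ L₂ * |x - y| := by
    intro k hk t ht x y; rw [hL₂]; exact (hd k hk).lip (by linarith) x y
  have hdd : ∀ k > 0, ∀ l > 0, BddSol 2 L₂ (C₁ * L₂ + 2 * C₂ * L₁ ^ 2) (dq l (dq k u)) := by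
    intro k hk l hl
    refine ⟨continuousOn_dq (continuousOn_dq
      (hcu.mono (prod_mono le_rfl (Ioi_subset_Ioi (by norm_num))))),
      fun x t ht => abs_dq_le hl (l2 k hk t ht _ _), fun x t ht => ?_⟩
    have ht0 : t ∈ Ioi (0 : ℝ) := by simp; linarith
    have ht1 : 1 < t := by linarith
    have J : ∀ z, HasJet (fun y => dq k u y t) z (k⁻¹ * (ux (z + k) t - ux z t))
        (k⁻¹ * (uxx (z + k) t - uxx z t)) := fun z =>
      (((h.jet (z + k) ht0).comp_add k).sub (h.jet z ht0)).const_mul k⁻¹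
    have D : ∀ z, HasDerivAt (fun s => dq k u z s) (k⁻¹ * (ut (z + k) t - ut z t)) t := fun z =>
      ((h.dt (z + k) t ht0).sub (h.dt z t ht0)).const_mul k⁻¹
    refine ⟨_, _, _, (((J (x + l)).comp_add l).sub (J x)).const_mul l⁻¹,
      ((D (x + l)).sub (D x)).const_mul l⁻¹, ?_⟩
    simp only [h.eq _ t ht0]
    have e : l⁻¹ * (k⁻¹ * (uxx (x + l + k) t + f t (u (x + l + k) t) -
        (uxx (x + l) t + f t (u (x + l) t))) -
        k⁻¹ * (uxx (x + k) t + f t (u (x + k) t) - (uxx x t + f t (u x t)))) -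
      l⁻¹ * (k⁻¹ * (uxx (x + l + k) t - uxx (x + l) t) - k⁻¹ * (uxx (x + k) t - uxx x t)) =
      l⁻¹ * (k⁻¹ * (f t (u (x + l + k) t) - f t (u (x + l) t) - f t (u (x + k) t)
        + f t (u x t))) := by ring
    rw [e, abs_mul, abs_mul, abs_of_pos (inv_pos.2 hk), abs_of_pos (inv_pos.2 hl),
      inv_mul_le_iff₀ hl, inv_mul_le_iff₀ hk]
    have h1 := hb.lip₂ t _ (h0 (x + l + k) t ht0) _ (h0 (x + l) t ht0) _ (h0 (x + k) t ht0) _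
      (h0 x t ht0)
    have h2 := l1 t ht1 (x + l) x
    have h3 := l1 t ht1 (x + l + k) (x + k)
    have h4 := l1 t ht1 (x + k) x
    rw [add_sub_cancel_left, abs_of_pos hl] at h2
    rw [show x + l + k - (x + k) = l by ring, abs_of_pos hl] at h3
    rw [add_sub_cancel_left, abs_of_pos hk] at h4
    have h5 := l2 k hk t ht (x + l) x
    rw [add_sub_cancel_left, abs_of_pos hl] at h5
    have h6 : |u (x + l + k) t - u (x + l) t - u (x + k) t + u x t| ≤ k * (L₂ * l) := by
      have : u (x + l + k) t - u (x + l) t - u (x + k) t + u x t =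
          k * (dq k u (x + l) t - dq k u x t) := by
        unfold dq; field_simp; ring
      rw [this, abs_mul, abs_of_pos hk]
      exact mul_le_mul_of_nonneg_left h5 hk.le
    have h7 : (|u (x + l) t - u x t| + |u (x + l + k) t - u (x + k) t|) * |u (x + k) t - u x t| ≤
        (L₁ * l + L₁ * l) * (L₁ * k) :=
      mul_le_mul (add_le_add h2 h3) h4 (abs_nonneg _) (by positivity)
    have h8 := mul_le_mul_of_nonneg_left h6 hC₁
    have h9 := mul_le_mul_of_nonneg_left h7 hC₂
    linarith
  obtain ⟨L₃, hL₃⟩ : ∃ L : ℝ, L = 2 * (2 * L₂ + 2 * (C₁ * L₂ + 2 * C₂ * L₁ ^ 2) + 1) := ⟨_, rfl⟩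
  have hL₃0 : 0 ≤ L₃ := by rw [hL₃]; positivity
  have l3 : ∀ k > 0, ∀ l > 0, ∀ t > 3, ∀ x y,
      |dq l (dq k u) x t - dq l (dq k u) y t| ≤ L₃ * |x - y| := by
    intro k hk l hl t ht x y; rw [hL₃]; exact (hdd k hk l hl).lip (by linarith) x y
  -- let the increments tend to zero
  have m1 : ∀ t > 1, ∀ x, |ux x t| ≤ L₁ := by
    intro t ht x
    refine le_of_tendsto (tendsto_dq (h.dx x t (by simp; linarith))).abs ?_
    filter_upwards [self_mem_nhdsWithin] with k hk using abs_dq_le hk (l1 t ht _ _)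
  have m2 : ∀ t > 2, ∀ x y, |ux x t - ux y t| ≤ L₂ * |x - y| := by
    intro t ht x y
    exact lip_of_tendsto (F := fun k x => dq k u x t) (G := fun x => ux x t)
      (fun k hk x y => l2 k hk t ht x y) (fun x => tendsto_dq (h.dx x t (by simp; linarith))) x y
  have m3 : ∀ l > 0, ∀ t > 3, ∀ x y, |dq l ux x t - dq l ux y t| ≤ L₃ * |x - y| := by
    intro l hl t ht x y
    refine lip_of_tendsto (F := fun k x => dq l (dq k u) x t) (G := fun x => dq l ux x t)
      (fun k hk x y => l3 k hk l hl t ht x y) (fun x => ?_) x y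
    exact ((tendsto_dq (h.dx (x + l) t (by simp; linarith))).sub
      (tendsto_dq (h.dx x t (by simp; linarith)))).const_mul l⁻¹
  have m4 : ∀ t > 3, ∀ x y, |uxx x t - uxx y t| ≤ L₃ * |x - y| := by
    intro t ht x y
    exact lip_of_tendsto (F := fun k x => dq k ux x t) (G := fun x => uxx x t)
      (fun k hk x y => m3 k hk t ht x y) (fun x => tendsto_dq (h.dxx x t (by simp; linarith))) x y
  have m5 : ∀ t > 2, ∀ x, |uxx x t| ≤ L₂ := by
    intro t ht x
    refine le_of_tendsto (tendsto_dq (h.dxx x t (by simp; linarith))).abs ?_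
    filter_upwards [self_mem_nhdsWithin] with k hk using abs_dq_le hk (m2 t ht _ _)
  have mono : ∀ {a L : ℝ} (x y : ℝ), a ≤ L * |x - y| → L ≤ M + B + L₁ + L₂ + L₃ →
      a ≤ (M + B + L₁ + L₂ + L₃) * |x - y| :=
    fun x y h1 h2 => h1.trans (mul_le_mul_of_nonneg_right h2 (abs_nonneg _))
  refine ⟨M + B + L₁ + L₂ + L₃, by positivity, fun t ht x => ⟨?_, ?_, ?_, ?_, fun y => ⟨?_, ?_, ?_⟩⟩⟩
  · linarith [hu.2.1 x t (by linarith)]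
  · linarith [m1 t (by linarith) x]
  · linarith [m5 t (by linarith) x]
  · have ht0 : 0 < t := by linarith
    rw [h.eq x t ht0]
    linarith [abs_add_le (uxx x t) (f t (u x t)), m5 t (by linarith) x,
      hb.bound t _ (h0 x t ht0)]
  · exact mono x y (l1 t (by linarith) x y) (by linarith)
  · exact mono x y (m2 t (by linarith) x y) (by linarith)
  · exact mono x y (m4 t ht x y) (by linarith)

/-- Uniform continuity on `ℝ × (3, ∞)`. -/
def UC (g : ℝ → ℝ → ℝ) : Prop :=
  ∀ ε > 0, ∃ δ > 0, ∀ x y t s : ℝ, 3 < t → 3 < s → |x - y| < δ → |t - s| < δ →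
    |g x t - g y s| < ε

/-- Interpolation: uniform continuity passes to the space derivative if the latter is Lipschitz in
space. -/
lemma UC.deriv {g gx : ℝ → ℝ → ℝ} {L : ℝ} (hg : UC g) (hL : 0 ≤ L)
    (hd : ∀ x, ∀ t > 3, HasDerivAt (fun y => g y t) (gx x t) x)
    (hl : ∀ t > 3, ∀ x y, |gx x t - gx y t| ≤ L * |x - y|) : UC gx := by
  have taylor : ∀ h > 0, ∀ t > 3, ∀ x, |g (x + h) t - g x t - h * gx x t| ≤ L * h * h := by
    intro h hh t ht x
    have := (convex_Icc x (x + h)).norm_image_sub_le_of_norm_hasDerivWithin_le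
      (f := fun y => g y t - y * gx x t) (f' := fun y => gx y t - 1 * gx x t) (C := L * h)
      (fun y _ => ((hd y t ht).sub ((hasDerivAt_id y).mul_const _)).hasDerivWithinAt) ?_
      (x := x) (y := x + h) ⟨le_rfl, by linarith⟩ ⟨by linarith, le_rfl⟩
    · rw [add_sub_cancel_left, Real.norm_eq_abs, Real.norm_eq_abs, abs_of_pos hh] at this
      convert this using 2; ring
    · intro y hy
      rw [one_mul]
      refine (hl t ht y x).trans (mul_le_mul_of_nonneg_left ?_ hL)
      rw [abs_of_nonneg (by linarith [hy.1])]; linarith [hy.2]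
  intro ε hε
  obtain ⟨h, hh⟩ : ∃ h : ℝ, h = ε / (4 * (L + 1)) := ⟨_, rfl⟩
  have hh0 : 0 < h := by rw [hh]; positivity
  have hLh : (L + 1) * h = ε / 4 := by rw [hh]; field_simp
  obtain ⟨δ, hδ, H⟩ := hg (h * (ε / 8)) (by positivity)
  refine ⟨δ, hδ, fun x y t s ht hs hxy hts => ?_⟩
  have a1 := taylor h hh0 t ht x
  have a2 := taylor h hh0 s hs y
  have a3 := H x y t s ht hs hxy hts
  have a4 := H (x + h) (y + h) t s ht hs (by rwa [add_sub_add_right_eq_sub]) hts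
  have a5 : L * h * h < (ε / 4) * h := by
    apply mul_lt_mul_of_pos_right _ hh0; linarith
  have : h * |gx x t - gx y s| < h * ε := by
    rw [← abs_of_pos hh0, ← abs_mul, abs_of_pos hh0]
    rw [abs_le] at a1 a2
    rw [abs_lt] at a3 a4 ⊢
    constructor <;> linarith [a1.1, a1.2, a2.1, a2.2, a3.1, a3.2, a4.1, a4.2]
  exact lt_of_mul_lt_mul_left this hh0.le

lemma SolData.uc {f u ut ux uxx : ℝ → ℝ → ℝ} {M B C₁ C₂ : ℝ}
    (h : SolData f u ut ux uxx (Ioi 0)) (hb : FBounds f M B C₁ C₂)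
    (h0 : ∀ x, ∀ t > 0, u x t ∈ Icc 0 M) :
    UC u ∧ UC ux ∧ UC uxx ∧ ∃ L, ∀ t > 3, ∀ x, |u x t| ≤ L ∧ |ux x t| ≤ L ∧ |uxx x t| ≤ L := by
  obtain ⟨L, hL, H⟩ := h.reg hb h0
  have u0 : UC u := by
    intro ε hε
    refine ⟨ε / (2 * (L + 1)), by positivity, fun x y t s ht hs hxy hts => ?_⟩
    have a1 := ((H t ht x).2.2.2.2 y).1
    have a2 := (convex_Ioi (3 : ℝ)).norm_image_sub_le_of_norm_hasDerivWithin_le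
      (f := fun r => u y r) (f' := fun r => ut y r) (C := L)
      (fun r hr => (h.dt y r (show (0:ℝ) < r from lt_trans (by norm_num) hr)).hasDerivWithinAt)
      (fun r hr => (H r hr y).2.2.2.1) (x := s) (y := t) hs ht
    rw [Real.norm_eq_abs, Real.norm_eq_abs] at a2
    rw [lt_div_iff₀ (by positivity)] at hxy hts
    have a3 := abs_add_le (u x t - u y t) (u y t - u y s)
    rw [sub_add_sub_cancel] at a3
    have a4 := abs_nonneg (x - y)
    have a5 := abs_nonneg (t - s)
    linarith
  have u1 := u0.deriv hL (fun x t ht => h.dx x t (by simp; linarith))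
    (fun t ht x y => ((H t ht x).2.2.2.2 y).2.1)
  have u2 := u1.deriv hL (fun x t ht => h.dxx x t (by simp; linarith))
    (fun t ht x y => ((H t ht x).2.2.2.2 y).2.2)
  exact ⟨u0, u1, u2, L, fun t ht x => ⟨(H t ht x).1, (H t ht x).2.1, (H t ht x).2.2.1⟩⟩

/-! ### Comparison with the Heaviside solution -/

lemma heaviside_init {f u : ℝ → ℝ → ℝ} {α : ℝ} {ωα : ℝ → ℝ} (hu : IsHeavisideSol f α 0 ωα u)
    (hc : Continuous ωα) (h0 : ωα 0 = α) (ρ : ℝ) (hρ : 0 < ρ) (R η : ℝ) (hη : 0 < η) :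
    ∃ δ > 0, ∀ t ∈ Ioo 0 δ, (∀ x, -R ≤ x → x ≤ -ρ → ωα t - u x t ≤ η) ∧
      (∀ y, ρ ≤ y → y ≤ R → u y t ≤ η) := by
  obtain ⟨-, -, H⟩ := hu
  obtain ⟨δ₁, hδ₁, H₁⟩ := H (Icc (-R) (-ρ)) isCompact_Icc
    (fun h => by have := h.2; linarith) (η / 2) (by linarith)
  obtain ⟨δ₂, hδ₂, H₂⟩ := H (Icc ρ R) isCompact_Icc
    (fun h => by have := h.1; linarith) η hη
  obtain ⟨δ₃, hδ₃, H₃⟩ := Metric.continuous_iff.1 hc 0 (η / 2) (by linarith)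
  refine ⟨min δ₁ (min δ₂ δ₃), by positivity, fun t ht => ⟨fun x h1 h2 => ?_, fun y h1 h2 => ?_⟩⟩
  · have a1 := H₁ t ⟨ht.1, ht.2.trans_le (min_le_left _ _)⟩ x ⟨h1, h2⟩
    have a2 := H₃ t (by
      rw [Real.dist_eq, sub_zero, abs_of_pos ht.1]
      exact ht.2.trans_le ((min_le_right _ _).trans (min_le_right _ _)))
    rw [Real.dist_eq, h0] at a2
    rw [if_pos (by linarith)] at a1
    have := (abs_lt.1 a1).1
    have := (abs_lt.1 a2).2
    linarith
  · have a1 := H₂ t ⟨ht.1, ht.2.trans_le ((min_le_right _ _).trans (min_le_left _ _))⟩ y ⟨h1, h2⟩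
    rw [if_neg (by linarith)] at a1
    have := (abs_lt.1 a1).2
    linarith

lemma continuousOn_left_slot {u : ℝ → ℝ → ℝ}
    (hu : ContinuousOn (fun p : ℝ × ℝ => u p.1 p.2) (univ ×ˢ Ioi 0)) :
    ContinuousOn (fun p : ℝ × ℝ × ℝ => u p.1 p.2.2) {p | 0 < p.2.2} :=
  hu.comp (f := fun p : ℝ × ℝ × ℝ => (p.1, p.2.2)) (by fun_prop) fun _ hp => ⟨trivial, hp⟩

lemma continuousOn_right_slot {u : ℝ → ℝ → ℝ}
    (hu : ContinuousOn (fun p : ℝ × ℝ => u p.1 p.2) (univ ×ˢ Ioi 0)) :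
    ContinuousOn (fun p : ℝ × ℝ × ℝ => u p.2.1 p.2.2) {p | 0 < p.2.2} :=
  hu.comp (f := fun p : ℝ × ℝ × ℝ => (p.2.1, p.2.2)) (by fun_prop) fun _ hp => ⟨trivial, hp⟩

lemma FBounds.sub_le {f : ℝ → ℝ → ℝ} {M B C₁ C₂ : ℝ} (hb : FBounds f M B C₁ C₂) (t : ℝ) {p q : ℝ}
    (hp : p ∈ Icc 0 M) (hq : q ∈ Icc 0 M) (h : q ≤ p) : f t p - f t q ≤ C₁ * (p - q) := by
  have := (abs_le.1 (hb.lip t p hp q hq)).2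
  rwa [abs_of_nonneg (by linarith)] at this

lemma heaviside_antitone {f u : ℝ → ℝ → ℝ} {α M B C₁ C₂ : ℝ} {ωα : ℝ → ℝ}
    (hu : IsHeavisideSol f α 0 ωα u) (hc : Continuous ωα) (h0 : ωα 0 = α)
    (hb : FBounds f M B C₁ C₂) (hM : ∀ t, ωα t ≤ M) :
    ∀ x y t, x ≤ y → 0 < t → u y t ≤ u x t := by
  have hr : ∀ x t, 0 < t → u x t ∈ Icc 0 M := fun x t ht =>
    ⟨(hu.2.1 x t ht).1, (hu.2.1 x t ht).2.trans (hM t)⟩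
  obtain ⟨ut, ux, uxx, h⟩ := isSolOn_iff.1 hu.1
  have key := half_plane_max (m := fun x y t => u y t - u x t) (M := M) (C := C₁) hb.C₁_nonneg
    ((continuousOn_right_slot (h.cont isOpen_Ioi)).sub (continuousOn_left_slot (h.cont isOpen_Ioi)))
    (fun x y t _ ht => by linarith [(hr x t ht).1, (hr y t ht).2])
    (fun x t _ => by simp) ?_ ?_
  · intro x y t hxy ht
    linarith [key x y t hxy ht]
  · intro ρ hρ R η hη
    obtain ⟨δ, hδ, H⟩ := heaviside_init hu hc h0 ρ hρ R η hη
    refine ⟨δ, hδ, fun t ht x y _ h1 h2 h3 => ?_⟩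
    rcases h3 with h3 | h3
    · linarith [(H t ht).1 x h1 h3, (hu.2.1 y t ht.1).2]
    · linarith [(H t ht).2 y h3 h2, (hu.2.1 x t ht.1).1]
  · intro x y t hxy ht hm
    refine ⟨_, _, _, _, _, (hasJet_const (u y t) x).sub (h.jet x ht),
      (h.jet y ht).sub (hasJet_const (u x t) y), (h.dt y t ht).sub (h.dt x t ht), ?_⟩
    rw [h.eq x t ht, h.eq y t ht]
    linarith [hb.sub_le t (hr y t ht) (hr x t ht) (by linarith)]

/-- The Heaviside solution cannot cross an entire solution from below to above: where
`w(x) > u(x)` and `u(y) > w(y)` with `x < y`, the product of the two differences is a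
subsolution on the half-plane `x < y` that vanishes on its parabolic boundary. -/
lemma heaviside_no_crossing {f u w : ℝ → ℝ → ℝ} {α M B C₁ C₂ : ℝ} {ωα : ℝ → ℝ}
    (hu : IsHeavisideSol f α 0 ωα u) (hc : Continuous ωα) (h0 : ωα 0 = α)
    (hb : FBounds f M B C₁ C₂) (hM : ∀ t, ωα t ≤ M)
    (hw : IsSolOn f w (Ioi 0)) (hwr : ∀ x, ∀ t > 0, 0 ≤ w x t ∧ w x t ≤ ωα t) :
    ∀ x y t, x ≤ y → 0 < t → u x t < w x t → u y t ≤ w y t := by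
  have hr : ∀ x t, 0 < t → u x t ∈ Icc 0 M := fun x t ht =>
    ⟨(hu.2.1 x t ht).1, (hu.2.1 x t ht).2.trans (hM t)⟩
  have hr' : ∀ x t, 0 < t → w x t ∈ Icc 0 M := fun x t ht =>
    ⟨(hwr x t ht).1, (hwr x t ht).2.trans (hM t)⟩
  obtain ⟨ut, ux, uxx, h⟩ := isSolOn_iff.1 hu.1
  obtain ⟨wt, wx, wxx, k⟩ := isSolOn_iff.1 hw
  have hM0 := hb.M_nonneg
  have key := half_plane_max (m := fun x y t => max (w x t - u x t) 0 * max (u y t - w y t) 0)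
    (M := M * M) (C := 2 * C₁) (by linarith [hb.C₁_nonneg])
    ((((continuousOn_left_slot (k.cont isOpen_Ioi)).sub (continuousOn_left_slot (h.cont isOpen_Ioi))).sup
      continuousOn_const).mul
      (((continuousOn_right_slot (h.cont isOpen_Ioi)).sub (continuousOn_right_slot (k.cont isOpen_Ioi))).sup
      continuousOn_const)) ?_ ?_ ?_ ?_
  · intro x y t hxy ht h1
    by_contra! h2
    have := key x y t hxy ht
    have : 0 < max (w x t - u x t) 0 * max (u y t - w y t) 0 :=
      mul_pos (lt_max_of_lt_left (by linarith)) (lt_max_of_lt_left (by linarith))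
    linarith
  · intro x y t _ ht
    refine mul_le_mul ?_ ?_ (le_max_right _ _) hM0
    · exact max_le (by linarith [(hr x t ht).1, (hr' x t ht).2]) hM0
    · exact max_le (by linarith [(hr y t ht).2, (hr' y t ht).1]) hM0
  · intro x t ht
    rcases le_total (w x t) (u x t) with h1 | h1
    · rw [max_eq_right (by linarith : w x t - u x t ≤ 0), zero_mul]
    · rw [max_eq_right (by linarith : u x t - w x t ≤ 0), mul_zero]
  · intro ρ hρ R η hη
    obtain ⟨δ, hδ, H⟩ := heaviside_init hu hc h0 ρ hρ R (η / (M + 1)) (by positivity)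
    have e1 : η / (M + 1) * M ≤ η := by
      rw [div_mul_eq_mul_div, div_le_iff₀ (by positivity)]
      linarith
    have e0 : 0 ≤ η / (M + 1) := by positivity
    refine ⟨δ, hδ, fun t ht x y _ h1 h2 h3 => ?_⟩
    have m1 : max (w x t - u x t) 0 ≤ M :=
      max_le (by linarith [(hr x t ht.1).1, (hr' x t ht.1).2]) hM0
    have m2 : max (u y t - w y t) 0 ≤ M :=
      max_le (by linarith [(hr y t ht.1).2, (hr' y t ht.1).1]) hM0
    rcases h3 with h3 | h3
    · refine (mul_le_mul (max_le ?_ e0) m2 (le_max_right _ _) e0).trans e1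
      linarith [(H t ht).1 x h1 h3, (hwr x t ht.1).2]
    · refine (mul_le_mul m1 (max_le ?_ e0) (le_max_right _ _) hM0).trans ((mul_comm _ _).trans_le e1)
      linarith [(H t ht).2 y h3 h2, (hwr y t ht.1).1]
  · intro x y t hxy ht hm
    have p0 : 0 < w x t - u x t := by
      by_contra! h1; rw [max_eq_right h1, zero_mul] at hm; exact hm.false
    have q0 : 0 < u y t - w y t := by
      by_contra! h1; rw [max_eq_right h1, mul_zero] at hm; exact hm.false
    have jx := ((k.jet x ht).sub (h.jet x ht)).mul_const (u y t - w y t)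
    have jy := ((h.jet y ht).sub (k.jet y ht)).const_mul (w x t - u x t)
    have dx := (k.dt x t ht).sub (h.dt x t ht)
    have dy := (h.dt y t ht).sub (k.dt y t ht)
    have ex : ∀ᶠ x' in 𝓝 x, 0 < w x' t - u x' t :=
      ((k.dx x t ht).sub (h.dx x t ht)).continuousAt.eventually (lt_mem_nhds p0)
    have ey : ∀ᶠ y' in 𝓝 y, 0 < u y' t - w y' t :=
      ((h.dx y t ht).sub (k.dx y t ht)).continuousAt.eventually (lt_mem_nhds q0)
    have et : ∀ᶠ t' in 𝓝 t, 0 < w x t' - u x t' := dx.continuousAt.eventually (lt_mem_nhds p0)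
    have et' : ∀ᶠ t' in 𝓝 t, 0 < u y t' - w y t' := dy.continuousAt.eventually (lt_mem_nhds q0)
    refine ⟨_, _, _, _, _, jx.congr ?_, jy.congr ?_, (dx.mul dy).congr_of_eventuallyEq ?_, ?_⟩
    · filter_upwards [ex] with x' hx'
      rw [max_eq_left hx'.le, max_eq_left q0.le]
    · filter_upwards [ey] with y' hy'
      rw [max_eq_left hy'.le, max_eq_left p0.le]
    · filter_upwards [et, et'] with t' h1 h2
      simp only [Pi.mul_apply, Pi.sub_apply]
      rw [max_eq_left h1.le, max_eq_left h2.le]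
    · rw [max_eq_left p0.le, max_eq_left q0.le]
      rw [h.eq x t ht, h.eq y t ht, k.eq x t ht, k.eq y t ht]
      have f1 := mul_le_mul_of_nonneg_right
        (hb.sub_le t (hr' x t ht) (hr x t ht) (by linarith)) q0.le
      have f2 := mul_le_mul_of_nonneg_left
        (hb.sub_le t (hr y t ht) (hr' y t ht) (by linarith)) p0.le
      simp only [Pi.sub_apply]
      linarith

/-! ### Limits of shifted solutions -/

lemma eventually_shift {T : ℝ} (hT : 0 < T) {l : Filter ℕ} (hl : l ≤ atTop) (c t : ℝ) :
    ∀ᶠ j : ℕ in l, c < t + (j : ℝ) * T := by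
  have : Tendsto (fun j : ℕ => t + (j : ℝ) * T) l atTop :=
    (tendsto_atTop_add_const_left _ _
      (tendsto_natCast_atTop_atTop.atTop_mul_const hT)).mono_left hl
  exact this.eventually_gt_atTop c

/-- `G` is the pointwise limit of the shifts of `g` along the filter `l`. -/
def ShiftLim (ℓ : ℕ → ℝ) (T : ℝ) (l : Filter ℕ) (g G : ℝ → ℝ → ℝ) : Prop :=
  ∀ x t, Tendsto (fun j : ℕ => g (x + ℓ j) (t + (j : ℝ) * T)) l (𝓝 (G x t))

lemma ShiftLim.uc {ℓ : ℕ → ℝ} {T : ℝ} {l : Filter ℕ} {g G : ℝ → ℝ → ℝ} [NeBot l]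
    (h : ShiftLim ℓ T l g G) (hT : 0 < T) (hl : l ≤ atTop) (hg : UC g) (ε : ℝ) (hε : 0 < ε) :
    ∃ δ > 0, ∀ x y t s : ℝ, |x - y| < δ → |t - s| < δ → |G x t - G y s| ≤ ε := by
  obtain ⟨δ, hδ, H⟩ := hg ε hε
  refine ⟨δ, hδ, fun x y t s hxy hts => ?_⟩
  refine le_of_tendsto ((h x t).sub (h y s)).abs ?_
  filter_upwards [eventually_shift hT hl 3 t, eventually_shift hT hl 3 s] with j h1 h2
  exact (H _ _ _ _ h1 h2 (by rwa [add_sub_add_right_eq_sub])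
    (by rwa [add_sub_add_right_eq_sub])).le

lemma ShiftLim.continuous {ℓ : ℕ → ℝ} {T : ℝ} {l : Filter ℕ} {g G : ℝ → ℝ → ℝ} [NeBot l]
    (h : ShiftLim ℓ T l g G) (hT : 0 < T) (hl : l ≤ atTop) (hg : UC g) :
    Continuous fun p : ℝ × ℝ => G p.1 p.2 := by
  rw [Metric.continuous_iff]
  intro b ε hε
  obtain ⟨δ, hδ, H⟩ := h.uc hT hl hg (ε / 2) (by linarith)
  refine ⟨δ, hδ, fun a hab => ?_⟩
  rw [Prod.dist_eq, max_lt_iff] at hab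
  have := H _ _ _ _ hab.1 hab.2
  rw [Real.dist_eq]; linarith

/-- By equicontinuity, pointwise convergence of the shifts is locally uniform. -/
lemma ShiftLim.locally_uniform {ℓ : ℕ → ℝ} {T : ℝ} {l : Filter ℕ} {g G : ℝ → ℝ → ℝ} [NeBot l]
    (h : ShiftLim ℓ T l g G) (hT : 0 < T) (hl : l ≤ atTop) (hg : UC g) {K : Set (ℝ × ℝ)}
    (hK : IsCompact K) (ε : ℝ) (hε : 0 < ε) :
    ∀ᶠ j : ℕ in l, ∀ p ∈ K, |g (p.1 + ℓ j) (p.2 + (j : ℝ) * T) - G p.1 p.2| < ε := by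
  obtain ⟨δ₁, hδ₁, H₁⟩ := h.uc hT hl hg (ε / 3) (by linarith)
  obtain ⟨δ₂, hδ₂, H₂⟩ := hg (ε / 3) (by linarith)
  obtain ⟨S, -, hS, hcov⟩ := hK.finite_cover_balls (lt_min hδ₁ hδ₂)
  have e1 : ∀ᶠ j : ℕ in l, ∀ q ∈ S,
      |g (q.1 + ℓ j) (q.2 + (j : ℝ) * T) - G q.1 q.2| < ε / 3 ∧ 3 + δ₂ < q.2 + (j : ℝ) * T := by
    rw [eventually_all_finite hS]
    intro q _
    refine Eventually.and ?_ (eventually_shift hT hl _ _)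
    have := Metric.tendsto_nhds.1 (h q.1 q.2) (ε / 3) (by linarith)
    exact this
  filter_upwards [e1] with j hj p hp
  obtain ⟨q, hq, hpq⟩ := mem_iUnion₂.1 (hcov hp)
  rw [Metric.mem_ball, Prod.dist_eq, max_lt_iff, lt_min_iff, lt_min_iff, Real.dist_eq,
    Real.dist_eq] at hpq
  obtain ⟨b1, b2⟩ := hj q hq
  have b3 : 3 < p.2 + (j : ℝ) * T := by linarith [(abs_lt.1 hpq.2.2).1]
  have b4 := H₂ (p.1 + ℓ j) (q.1 + ℓ j) (p.2 + (j : ℝ) * T) (q.2 + (j : ℝ) * T) b3 (by linarith)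
    (by rw [add_sub_add_right_eq_sub]; exact hpq.1.2)
    (by rw [add_sub_add_right_eq_sub]; exact hpq.2.2)
  have b5 := H₁ p.1 q.1 p.2 q.2 hpq.1.1 hpq.2.1
  rw [abs_lt] at b1 b4 ⊢
  rw [abs_le] at b5
  constructor <;> linarith [b1.1, b1.2, b4.1, b4.2, b5.1, b5.2]

lemma tendstoLocallyUniformlyOn_of_compact {l : Filter ℕ} {F : ℕ → ℝ → ℝ} {G : ℝ → ℝ} {s : Set ℝ}
    (hs : IsOpen s)
    (h : ∀ K : Set ℝ, IsCompact K → ∀ ε > 0, ∀ᶠ j in l, ∀ x ∈ K, |F j x - G x| < ε) :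
    TendstoLocallyUniformlyOn F G l s := by
  rw [tendstoLocallyUniformlyOn_iff_forall_isCompact hs]
  intro K _ hK
  rw [Metric.tendstoUniformlyOn_iff]
  intro ε hε
  filter_upwards [h K hK ε hε] with j hj x hx
  rw [dist_comm, Real.dist_eq]; exact hj x hx

/-- Limits of shifts commute with the space derivative. -/
lemma ShiftLim.hasDerivAt_fst {ℓ : ℕ → ℝ} {T : ℝ} {l : Filter ℕ} {g G gx Gx : ℝ → ℝ → ℝ} [NeBot l]
    (h : ShiftLim ℓ T l g G) (h' : ShiftLim ℓ T l gx Gx) (hT : 0 < T) (hl : l ≤ atTop)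
    (hg : UC gx) (hd : ∀ x t, 0 < t → HasDerivAt (fun y => g y t) (gx x t) x) (x t : ℝ) :
    HasDerivAt (fun y => G y t) (Gx x t) x := by
  refine hasDerivAt_of_tendstoLocallyUniformlyOn (l := l) (s := univ) isOpen_univ
    (f := fun (j : ℕ) y => g (y + ℓ j) (t + (j : ℝ) * T))
    (f' := fun (j : ℕ) y => gx (y + ℓ j) (t + (j : ℝ) * T)) (g' := fun y => Gx y t)
    (tendstoLocallyUniformlyOn_of_compact isOpen_univ fun K hK ε hε => ?_) ?_
    (fun y _ => h y t) (mem_univ x)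
  · filter_upwards [h'.locally_uniform hT hl hg (hK.prod (isCompact_singleton (x := t))) ε hε]
      with j hj y hy
    exact hj (y, t) ⟨hy, rfl⟩
  · filter_upwards [eventually_shift hT hl 0 t] with j hj y _
    exact (hd (y + ℓ j) _ hj).comp_add_const y (ℓ j)

lemma FBounds.shift {f : ℝ → ℝ → ℝ} {T : ℝ} (hfper : ∀ t u : ℝ, f (t + T) u = f t u) (j : ℕ)
    (t u : ℝ) : f (t + (j : ℝ) * T) u = f t u := by
  have : Function.Periodic (fun t => f t u) T := fun t => hfper t u
  exact this.nat_mul j t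

/-- A limit of shifts of a bounded solution, together with the limits of its space derivatives, is
an entire solution, and the convergence is locally uniform with all derivatives. -/
lemma limit_solData {f u ut ux uxx V Vx Vxx : ℝ → ℝ → ℝ} {M B C₁ C₂ T : ℝ} {ℓ : ℕ → ℝ}
    {l : Filter ℕ} [NeBot l] (hT : 0 < T) (hl : l ≤ atTop)
    (hf : Continuous (Function.uncurry f)) (hfper : ∀ t u : ℝ, f (t + T) u = f t u)
    (h : SolData f u ut ux uxx (Ioi 0)) (hb : FBounds f M B C₁ C₂)
    (h0 : ∀ x, ∀ t > 0, u x t ∈ Icc 0 M)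
    (hV : ShiftLim ℓ T l u V) (hVx : ShiftLim ℓ T l ux Vx) (hVxx : ShiftLim ℓ T l uxx Vxx) :
    SolData f V (fun x t => Vxx x t + f t (V x t)) Vx Vxx univ ∧
    ∀ K : Set (ℝ × ℝ), IsCompact K → ∀ ε > 0, ∀ᶠ j : ℕ in l, ∀ p ∈ K, 0 < p.2 + (j : ℝ) * T ∧
      |u (p.1 + ℓ j) (p.2 + (j : ℝ) * T) - V p.1 p.2| < ε ∧
      |ux (p.1 + ℓ j) (p.2 + (j : ℝ) * T) - Vx p.1 p.2| < ε ∧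
      |uxx (p.1 + ℓ j) (p.2 + (j : ℝ) * T) - Vxx p.1 p.2| < ε ∧
      |ut (p.1 + ℓ j) (p.2 + (j : ℝ) * T) - (Vxx p.1 p.2 + f p.2 (V p.1 p.2))| < ε := by
  obtain ⟨uc0, uc1, uc2, -⟩ := h.uc hb h0
  have hVr : ∀ x t, V x t ∈ Icc 0 M := fun x t => by
    refine isClosed_Icc.mem_of_tendsto (hV x t) ?_
    filter_upwards [eventually_shift hT hl 0 t] with j hj using h0 _ _ hj
  have hC := hb.C₁_nonneg
  have conv : ∀ K : Set (ℝ × ℝ), IsCompact K → ∀ ε > 0, ∀ᶠ j : ℕ in l, ∀ p ∈ K,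
      0 < p.2 + (j : ℝ) * T ∧
      |u (p.1 + ℓ j) (p.2 + (j : ℝ) * T) - V p.1 p.2| < ε ∧
      |ux (p.1 + ℓ j) (p.2 + (j : ℝ) * T) - Vx p.1 p.2| < ε ∧
      |uxx (p.1 + ℓ j) (p.2 + (j : ℝ) * T) - Vxx p.1 p.2| < ε ∧
      |ut (p.1 + ℓ j) (p.2 + (j : ℝ) * T) - (Vxx p.1 p.2 + f p.2 (V p.1 p.2))| < ε := by
    intro K hK ε hε
    obtain ⟨η, hη⟩ : ∃ η : ℝ, η = ε / (C₁ + 1) := ⟨_, rfl⟩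
    have hη0 : 0 < η := by rw [hη]; positivity
    have hηε : (C₁ + 1) * η = ε := by rw [hη]; field_simp
    have hηle : η ≤ ε := by nlinarith
    obtain ⟨c, hc⟩ := hK.bddBelow_image (f := Prod.snd) continuous_snd.continuousOn
    filter_upwards [hV.locally_uniform hT hl uc0 hK η hη0, hVx.locally_uniform hT hl uc1 hK η hη0,
      hVxx.locally_uniform hT hl uc2 hK η hη0, eventually_shift hT hl 0 c] with j h1 h2 h3 h4 p hp
    have hpos : 0 < p.2 + (j : ℝ) * T := by linarith [hc (mem_image_of_mem _ hp)]
    have a1 := h1 p hp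
    have a3 := h3 p hp
    refine ⟨hpos, a1.trans_le hηle, (h2 p hp).trans_le hηle, a3.trans_le hηle, ?_⟩
    rw [h.eq _ _ hpos, FBounds.shift hfper]
    have a5 := hb.lip p.2 _ (h0 (p.1 + ℓ j) _ hpos) _ (hVr p.1 p.2)
    have a6 := mul_le_mul_of_nonneg_left a1.le hC
    rw [add_sub_add_comm]
    refine (abs_add_le _ _).trans_lt ?_
    linarith
  have c0 := hV.continuous hT hl uc0
  have c1 := hVx.continuous hT hl uc1
  have c2 := hVxx.continuous hT hl uc2
  refine ⟨⟨fun x t _ => ?_, fun x t _ => hV.hasDerivAt_fst hVx hT hl uc1 (fun x t ht => h.dx x t ht) x t,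
    fun x t _ => hVx.hasDerivAt_fst hVxx hT hl uc2 (fun x t ht => h.dxx x t ht) x t, ?_,
    c1.continuousOn, c2.continuousOn, fun _ _ _ => rfl⟩, conv⟩
  · refine hasDerivAt_of_tendstoLocallyUniformlyOn (l := l) (s := Ioi (t - 1)) isOpen_Ioi
      (f := fun (j : ℕ) s => u (x + ℓ j) (s + (j : ℝ) * T))
      (f' := fun (j : ℕ) s => ut (x + ℓ j) (s + (j : ℝ) * T))
      (g' := fun s => Vxx x s + f s (V x s))
      (tendstoLocallyUniformlyOn_of_compact isOpen_Ioi fun K hK ε hε => ?_) ?_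
      (fun s _ => hV x s) (show t - 1 < t by linarith)
    · filter_upwards [conv _ ((isCompact_singleton (x := x)).prod hK) ε hε] with j hj s hs
      exact (hj (x, s) ⟨rfl, hs⟩).2.2.2.2
    · filter_upwards [eventually_shift hT hl 0 (t - 1)] with j hj s hs
      exact (h.dt (x + ℓ j) _ (show 0 < s + (j : ℝ) * T by
        have : t - 1 < s := hs
        linarith)).comp_add_const s ((j : ℝ) * T)
  · exact (c2.add (hf.comp (continuous_snd.prodMk c0))).continuousOn

lemma exists_shiftLim {ℓ : ℕ → ℝ} {T L : ℝ} (hT : 0 < T) (l : Ultrafilter ℕ)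
    (hl : (l : Filter ℕ) ≤ atTop) {g : ℝ → ℝ → ℝ} (hg : ∀ t > 3, ∀ x, |g x t| ≤ L) :
    ∃ G, ShiftLim ℓ T l g G := by
  have : ∀ x t, ∃ a, Tendsto (fun j : ℕ => g (x + ℓ j) (t + (j : ℝ) * T)) l (𝓝 a) := by
    intro x t
    obtain ⟨a, -, ha⟩ := (isCompact_Icc (a := -L) (b := L)).ultrafilter_le_nhds
      (l.map fun j : ℕ => g (x + ℓ j) (t + (j : ℝ) * T)) (by
        rw [Ultrafilter.coe_map, le_principal_iff, mem_map]
        filter_upwards [eventually_shift hT hl 3 t] with j hj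
        exact abs_le.1 (hg _ hj _))
    exact ⟨a, ha⟩
  choose G hG using this
  exact ⟨G, hG⟩

/-! ### Entire solutions -/

/-- `w` is an entire solution with values between `0` and `ωα`. -/
structure Entire (f : ℝ → ℝ → ℝ) (ωα : ℝ → ℝ) (w : ℝ → ℝ → ℝ) : Prop where
  sol : IsSolOn f w univ
  range : ∀ x t, 0 ≤ w x t ∧ w x t ≤ ωα t

lemma Entire.mem {f w : ℝ → ℝ → ℝ} {ωα : ℝ → ℝ} {M : ℝ} (h : Entire f ωα w) (hM : ∀ t, ωα t ≤ M)
    (x t : ℝ) : w x t ∈ Icc 0 M := ⟨(h.range x t).1, (h.range x t).2.trans (hM t)⟩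

lemma continuous_of_univ {g : ℝ → ℝ → ℝ}
    (h : ContinuousOn (fun p : ℝ × ℝ => g p.1 p.2) (univ ×ˢ univ)) :
    Continuous fun p : ℝ × ℝ => g p.1 p.2 := by
  rwa [univ_prod_univ, continuousOn_univ] at h

lemma SolData.continuous {f u ut ux uxx : ℝ → ℝ → ℝ} (h : SolData f u ut ux uxx univ) :
    Continuous fun p : ℝ × ℝ => u p.1 p.2 := continuous_of_univ (h.cont isOpen_univ)

lemma Entire.shift_space {f w : ℝ → ℝ → ℝ} {ωα : ℝ → ℝ} (h : Entire f ωα w) (a : ℝ) :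
    Entire f ωα (fun x t => w (x + a) t) := by
  obtain ⟨wt, wx, wxx, k⟩ := isSolOn_iff.1 h.sol
  refine ⟨isSolOn_iff.2 ⟨fun x t => wt (x + a) t, fun x t => wx (x + a) t, fun x t => wxx (x + a) t,
    fun x t ht => k.dt _ t ht, fun x t ht => (k.dx _ t ht).comp_add_const x a,
    fun x t ht => (k.dxx _ t ht).comp_add_const x a, ?_, ?_, ?_, fun x t ht => k.eq _ t ht⟩,
    fun x t => h.range _ t⟩
  · exact ((continuous_of_univ k.ct).comp
      (f := fun p : ℝ × ℝ => (p.1 + a, p.2)) (by fun_prop)).continuousOn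
  · exact ((continuous_of_univ k.cx).comp
      (f := fun p : ℝ × ℝ => (p.1 + a, p.2)) (by fun_prop)).continuousOn
  · exact ((continuous_of_univ k.cxx).comp
      (f := fun p : ℝ × ℝ => (p.1 + a, p.2)) (by fun_prop)).continuousOn

lemma Entire.shift_time {f w : ℝ → ℝ → ℝ} {ωα : ℝ → ℝ} (h : Entire f ωα w) (a : ℝ)
    (hf : ∀ t u, f (t + a) u = f t u) (hω : ∀ t, ωα (t + a) = ωα t) :
    Entire f ωα (fun x t => w x (t + a)) := by
  obtain ⟨wt, wx, wxx, k⟩ := isSolOn_iff.1 h.sol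
  refine ⟨isSolOn_iff.2 ⟨fun x t => wt x (t + a), fun x t => wx x (t + a), fun x t => wxx x (t + a),
    fun x t _ => (k.dt x (t + a) trivial).comp_add_const t a, fun x t _ => k.dx x (t + a) trivial,
    fun x t _ => k.dxx x (t + a) trivial, ?_, ?_, ?_,
    fun x t _ => by rw [k.eq x (t + a) trivial, hf]⟩,
    fun x t => by have := h.range x (t + a); rwa [hω] at this⟩
  · exact ((continuous_of_univ k.ct).comp
      (f := fun p : ℝ × ℝ => (p.1, p.2 + a)) (by fun_prop)).continuousOn
  · exact ((continuous_of_univ k.cx).comp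
      (f := fun p : ℝ × ℝ => (p.1, p.2 + a)) (by fun_prop)).continuousOn
  · exact ((continuous_of_univ k.cxx).comp
      (f := fun p : ℝ × ℝ => (p.1, p.2 + a)) (by fun_prop)).continuousOn

lemma hasDerivAt_comp_neg' {g : ℝ → ℝ} {a x : ℝ} (h : HasDerivAt g a (-x)) :
    HasDerivAt (fun y => g (-y)) (-a) x := by
  exact (HasDerivAt.comp x h (hasDerivAt_neg x)).congr_deriv (by ring)

lemma Entire.reflect {f w : ℝ → ℝ → ℝ} {ωα : ℝ → ℝ} (h : Entire f ωα w) :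
    Entire f ωα (fun x t => w (-x) t) := by
  obtain ⟨wt, wx, wxx, k⟩ := isSolOn_iff.1 h.sol
  refine ⟨isSolOn_iff.2 ⟨fun x t => wt (-x) t, fun x t => - wx (-x) t, fun x t => wxx (-x) t,
    fun x t ht => k.dt _ t ht, fun x t ht => hasDerivAt_comp_neg' (k.dx _ t ht),
    fun x t ht => ?_, ?_, ?_, ?_, fun x t ht => k.eq _ t ht⟩,
    fun x t => h.range _ t⟩
  · exact (hasDerivAt_comp_neg' (k.dxx (-x) t ht)).neg.congr_deriv (neg_neg _)
  · exact ((continuous_of_univ k.ct).comp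
      (f := fun p : ℝ × ℝ => (-p.1, p.2)) (by fun_prop)).continuousOn
  · exact ((continuous_of_univ k.cx).comp
      (f := fun p : ℝ × ℝ => (-p.1, p.2)) (by fun_prop)).neg.continuousOn
  · exact ((continuous_of_univ k.cxx).comp
      (f := fun p : ℝ × ℝ => (-p.1, p.2)) (by fun_prop)).continuousOn

section
variable {f v w V : ℝ → ℝ → ℝ} {ωα : ℝ → ℝ} {M B C₁ C₂ : ℝ}

/-- The comparison principle for bounded entire solutions. -/
lemma Entire.le_of_le (hb : FBounds f M B C₁ C₂) (hM : ∀ t, ωα t ≤ M) (hv : Entire f ωα v)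
    (hw : Entire f ωα w) {s : ℝ} (hs : ∀ x, v x s ≤ w x s) : ∀ x, ∀ t ≥ s, v x t ≤ w x t := by
  obtain ⟨vt, vx, vxx, h⟩ := isSolOn_iff.1 hv.sol
  obtain ⟨wt, wx, wxx, k⟩ := isSolOn_iff.1 hw.sol
  have := weak_max (z := fun x t => v x t - w x t) (s := s) (M := M) (C := C₁)
    (h.continuous.sub k.continuous).continuousOn
    (fun x t _ => by linarith [(hv.mem hM x t).2, (hw.mem hM x t).1])
    (fun x => by linarith [hs x]) ?_
  · intro x t ht
    linarith [this x t ht]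
  · intro x t _ hp
    refine ⟨_, _, _, (h.jet x (mem_univ t)).sub (k.jet x (mem_univ t)),
      (h.dt x t trivial).sub (k.dt x t trivial), ?_⟩
    rw [h.eq x t trivial, k.eq x t trivial]
    linarith [hb.sub_le t (hv.mem hM x t) (hw.mem hM x t) (by linarith)]

lemma Entire.eq_of_eq (hb : FBounds f M B C₁ C₂) (hM : ∀ t, ωα t ≤ M) (hv : Entire f ωα v)
    (hw : Entire f ωα w) {s : ℝ} (hs : ∀ x, v x s = w x s) : ∀ x, ∀ t ≥ s, v x t = w x t :=
  fun x t ht => le_antisymm (hv.le_of_le hb hM hw (fun x => (hs x).le) x t ht)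
    (hw.le_of_le hb hM hv (fun x => (hs x).ge) x t ht)

lemma Entire.eq_of_eq_before (hb : FBounds f M B C₁ C₂) (hM : ∀ t, ωα t ≤ M) (hv : Entire f ωα v)
    (hw : Entire f ωα w) {t₁ : ℝ} (h : ∀ t < t₁, ∀ x, v x t = w x t) : ∀ x t, v x t = w x t := by
  intro x t
  rcases lt_or_ge t t₁ with ht | ht
  · exact h t ht x
  · exact hv.eq_of_eq hb hM hw (s := t₁ - 1) (h _ (by linarith)) x t (by linarith)

/-- A function with value and derivative zero at the origin is frequently small compared with
any linear function. -/
lemma frequently_lt_mul {φ : ℝ → ℝ} (h : HasDerivAt φ 0 0) (h0 : φ 0 = 0) (c : ℝ) (hc : 0 < c) :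
    ∃ᶠ r in 𝓝[>] (0 : ℝ), φ r < c * r := by
  have h1 := h.tendsto_slope_zero_right
  simp only [zero_add, h0, sub_zero, smul_eq_mul] at h1
  apply Eventually.frequently
  filter_upwards [h1.eventually (gt_mem_nhds hc), self_mem_nhdsWithin] with r hr hr0
  rwa [inv_mul_lt_iff₀ hr0, mul_comm] at hr

/-- Strong maximum principle for ordered entire solutions touching at a point. -/
lemma Entire.touch (hb : FBounds f M B C₁ C₂) (hM : ∀ t, ωα t ≤ M) (hv : Entire f ωα v)
    (hw : Entire f ωα w) {s x₁ t₁ : ℝ} (hs : ∀ x, v x s ≤ w x s) (hst : s < t₁)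
    (h1 : v x₁ t₁ = w x₁ t₁) : ∀ x t, s < t → t < t₁ → v x t = w x t := by
  obtain ⟨vt, vx, vxx, h⟩ := isSolOn_iff.1 hv.sol
  obtain ⟨wt, wx, wxx, k⟩ := isSolOn_iff.1 hw.sol
  have hle := hv.le_of_le hb hM hw hs
  intro x t hst' htt
  have hx : wx x₁ t₁ - vx x₁ t₁ = 0 := by
    refine IsLocalMin.hasDerivAt_eq_zero (f := (fun y => w y t₁) - fun y => v y t₁) (a := x₁) ?_
      ((k.dx x₁ t₁ trivial).sub (h.dx x₁ t₁ trivial))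
    refine Eventually.of_forall fun y => ?_
    simp only [Pi.sub_apply, h1]
    linarith [hle y t₁ hst.le]
  have := hopf (E := fun x _ t => w x t - v x t) (x₁ := x₁) (t₁ := t₁)
    (d := |x - x₁| + |x + 1 - x₁| + 1) (τ := t₁ - s) (C := C₁) hb.C₁_nonneg
    (((k.continuous.sub h.continuous).comp
      (f := fun p : ℝ × ℝ × ℝ => (p.1, p.2.2)) (by fun_prop)).continuousOn)
    (fun x y t _ _ _ h2 _ => by linarith [hle x t (by linarith)]) ?_ ?_ x (x + 1) t (by linarith)
    (by linarith [abs_nonneg (x + 1 - x₁)]) (by linarith [abs_nonneg (x - x₁)]) (by linarith) htt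
  · linarith
  · intro x y t _ _ _ h2 _
    refine ⟨_, _, _, _, _, (k.jet x (mem_univ t)).sub (h.jet x (mem_univ t)), hasJet_const _ y,
      (k.dt x t trivial).sub (h.dt x t trivial), ?_⟩
    have a1 := hle x t (by linarith)
    have a2 := (abs_le.1 (hb.lip t _ (hw.mem hM x t) _ (hv.mem hM x t))).1
    rw [abs_of_nonneg (by linarith)] at a2
    rw [h.eq x t trivial, k.eq x t trivial]
    have := hb.C₁_nonneg
    have a3 := mul_nonneg this (abs_nonneg (wx x t - vx x t))
    rw [abs_zero]
    linarith
  · refine frequently_lt_mul (φ := fun r => w (x₁ - r) t₁ - v (x₁ - r) t₁) ?_ (by simp [h1])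
    have a1 := HasDerivAt.comp_const_sub x₁ (0 : ℝ) (f := fun y => w y t₁) (f' := wx x₁ t₁)
      (by simpa using k.dx x₁ t₁ trivial)
    have a2 := HasDerivAt.comp_const_sub x₁ (0 : ℝ) (f := fun y => v y t₁) (f' := vx x₁ t₁)
      (by simpa using h.dx x₁ t₁ trivial)
    exact (a1.sub a2).congr_deriv (by linarith)

/-- A nonincreasing entire solution is either constant in space or has a negative space
derivative everywhere. -/
lemma Entire.dichotomy {Vt Vx Vxx : ℝ → ℝ → ℝ} (hb : FBounds f M B C₁ C₂) (hM : ∀ t, ωα t ≤ M)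
    (hV : Entire f ωα V) (h : SolData f V Vt Vx Vxx univ)
    (hanti : ∀ x y t, x ≤ y → V y t ≤ V x t) :
    (∀ x y t, V x t = V y t) ∨ ∀ x t, Vx x t < 0 := by
  by_cases hneg : ∀ x t, Vx x t < 0
  · exact Or.inr hneg
  left
  push Not at hneg
  obtain ⟨x₁, t₁, h1⟩ := hneg
  have hle : Vx x₁ t₁ ≤ 0 := by
    have : Antitone fun y => V y t₁ := fun x y hxy => hanti x y t₁ hxy
    rw [← (h.dx x₁ t₁ trivial).deriv]
    exact this.deriv_nonpos
  have hz : Vx x₁ t₁ = 0 := le_antisymm hle h1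
  have before : ∀ x y t, x < y → t < t₁ → V x t = V y t := by
    intro x y t hxy ht
    have := hopf (E := fun x y t => V x t - V y t) (x₁ := x₁) (t₁ := t₁)
      (d := |x - x₁| + |y - x₁| + 1) (τ := t₁ - t + 1) (C := C₁) hb.C₁_nonneg
      (((h.continuous.comp (f := fun p : ℝ × ℝ × ℝ => (p.1, p.2.2)) (by fun_prop)).sub
        (h.continuous.comp (f := fun p : ℝ × ℝ × ℝ => (p.2.1, p.2.2))
          (by fun_prop))).continuousOn)
      (fun x y t hxy _ _ _ _ => by linarith [hanti x y t hxy]) ?_ ?_ x y t hxy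
      (by linarith [abs_nonneg (y - x₁)]) (by linarith [abs_nonneg (x - x₁)]) (by linarith) ht
    · linarith
    · intro x y t hxy _ _ _ _
      refine ⟨_, _, _, _, _, (h.jet x (mem_univ t)).sub (hasJet_const _ x),
        (hasJet_const _ y).sub (h.jet y (mem_univ t)),
        (h.dt x t trivial).sub (h.dt y t trivial), ?_⟩
      have a1 := hanti x y t hxy.le
      have a2 := (abs_le.1 (hb.lip t _ (hV.mem hM x t) _ (hV.mem hM y t))).1
      rw [abs_of_nonneg (by linarith)] at a2
      rw [h.eq x t trivial, h.eq y t trivial]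
      have := hb.C₁_nonneg
      have a3 := mul_nonneg this (abs_nonneg (Vx x t - 0))
      have a4 := mul_nonneg this (abs_nonneg (0 - Vx y t))
      linarith
    · refine frequently_lt_mul (φ := fun r => V (x₁ - r) t₁ - V (x₁ + r) t₁) ?_ (by simp)
      have a1 := HasDerivAt.comp_const_sub x₁ (0 : ℝ) (f := fun y => V y t₁) (f' := Vx x₁ t₁)
        (by simpa using h.dx x₁ t₁ trivial)
      have a2 := HasDerivAt.comp_const_add x₁ (0 : ℝ) (f := fun y => V y t₁) (f' := Vx x₁ t₁)
        (by simpa using h.dx x₁ t₁ trivial)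
      exact (a1.sub a2).congr_deriv (by rw [hz]; ring)
  have main : ∀ x y t, x < y → V x t = V y t := by
    intro x y t hxy
    have := hV.eq_of_eq_before hb hM (hV.shift_space (y - x)) (t₁ := t₁)
      (fun s hs z => before z (z + (y - x)) s (by linarith) hs) x t
    rwa [add_sub_cancel] at this
  intro x y t
  rcases lt_trichotomy x y with hxy | rfl | hxy
  · exact main x y t hxy
  · rfl
  · exact (main y x t hxy).symm

/-- `V` never crosses an entire solution from below to above, as `x` increases. -/
def NoCrossing (f : ℝ → ℝ → ℝ) (ωα : ℝ → ℝ) (V : ℝ → ℝ → ℝ) : Prop :=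
  ∀ w, Entire f ωα w → ∀ x y t, x ≤ y → V x t < w x t → V y t ≤ w y t

lemma steep_of_const (hb : FBounds f M B C₁ C₂) (hM : ∀ t, ωα t ≤ M) (hV : Entire f ωα V)
    (hNC : NoCrossing f ωα V) (hconst : ∀ x y t, V x t = V y t) (hw : Entire f ωα w) {x₁ t₁ : ℝ}
    (h1 : V x₁ t₁ = w x₁ t₁) : ∀ x t, V x t = w x t := by
  have sign : ∀ s, (∀ x, V x s ≤ w x s) ∨ ∀ x, w x s ≤ V x s := by
    intro s
    by_contra! hcon
    obtain ⟨⟨y, hy⟩, x, hx⟩ := hcon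
    rcases le_total x y with hxy | hxy
    · linarith [hNC w hw x y s hxy hx]
    · have := hNC _ hw.reflect (-x) (-y) s (by linarith)
      simp only [neg_neg] at this
      rw [hconst (-x) x, hconst (-y) y] at this
      linarith [this hx]
  refine hV.eq_of_eq_before hb hM hw (t₁ := t₁) fun t ht x => ?_
  rcases sign (t - 1) with hs | hs
  · exact hV.touch hb hM hw hs (by linarith) h1 x t (by linarith) ht
  · exact (hw.touch hb hM hV hs (by linarith) h1.symm x t (by linarith) ht).symm

end

/-! ### Tangency with a strictly decreasing solution -/

lemma exists_shear {a : ℝ} (ha : a ≠ 0) (b : ℝ) :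
    ∃ A : (ℝ × ℝ) ≃L[ℝ] (ℝ × ℝ), (A : (ℝ × ℝ) →L[ℝ] (ℝ × ℝ)) =
      ((ContinuousLinearMap.toSpanSingleton ℝ a).coprod
        (ContinuousLinearMap.toSpanSingleton ℝ b)).prod (ContinuousLinearMap.snd ℝ ℝ ℝ) ∧
      ∀ η τ : ℝ, A.symm (η, τ) = ((η - b * τ) / a, τ) := by
  obtain ⟨F, hF⟩ : ∃ F : (ℝ × ℝ) →L[ℝ] (ℝ × ℝ), F =
      ((ContinuousLinearMap.toSpanSingleton ℝ a).coprod
        (ContinuousLinearMap.toSpanSingleton ℝ b)).prod (ContinuousLinearMap.snd ℝ ℝ ℝ) := ⟨_, rfl⟩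
  obtain ⟨G, hG⟩ : ∃ G : (ℝ × ℝ) →L[ℝ] (ℝ × ℝ), G =
      ((ContinuousLinearMap.toSpanSingleton ℝ a⁻¹).coprod
        (ContinuousLinearMap.toSpanSingleton ℝ (-b / a))).prod
        (ContinuousLinearMap.snd ℝ ℝ ℝ) := ⟨_, rfl⟩
  have hFv : ∀ x t, F (x, t) = (x * a + t * b, t) := fun x t => by simp [hF]
  have hGv : ∀ x t, G (x, t) = ((x - b * t) / a, t) := fun x t => by
    simp only [hG, ContinuousLinearMap.prod_apply, ContinuousLinearMap.coprod_apply,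
      ContinuousLinearMap.toSpanSingleton_apply, smul_eq_mul, ContinuousLinearMap.coe_snd',
      Prod.mk.injEq, and_true]
    ring
  refine ⟨ContinuousLinearEquiv.equivOfInverse F G ?_ ?_, ?_, fun η τ => hGv η τ⟩
  · rintro ⟨x, t⟩
    rw [hFv, hGv]
    ext <;> simp
    field_simp
    ring
  · rintro ⟨x, t⟩
    rw [hGv, hFv]
    ext <;> simp
    field_simp
    ring
  · rw [← hF]; rfl

/-- Near a common value of `w` and of a strictly decreasing `V`, there is a change of variable `S`
with `V(S(x,t), t) = w(x,t)`. -/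
lemma exists_change {f V Vt Vx Vxx w wt wx wxx : ℝ → ℝ → ℝ} {x₁ t₁ : ℝ}
    (h : SolData f V Vt Vx Vxx univ) (k : SolData f w wt wx wxx univ)
    (hneg : ∀ x t, Vx x t < 0) (h1 : V x₁ t₁ = w x₁ t₁) :
    ∃ S : ℝ → ℝ → ℝ, S x₁ t₁ = x₁ ∧ ∀ᶠ p : ℝ × ℝ in 𝓝 (x₁, t₁),
      V (S p.1 p.2) p.2 = w p.1 p.2 ∧ ContinuousAt (fun q : ℝ × ℝ => S q.1 q.2) p ∧
      HasDerivAt (fun y => S y p.2) (wx p.1 p.2 / Vx (S p.1 p.2) p.2) p.1 ∧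
      HasDerivAt (fun s => S p.1 s)
        ((wt p.1 p.2 - Vt (S p.1 p.2) p.2) / Vx (S p.1 p.2) p.2) p.2 := by
  obtain ⟨Ψ, hΨ⟩ : ∃ Ψ : ℝ × ℝ → ℝ × ℝ, Ψ = fun p => (V p.1 p.2, p.2) := ⟨_, rfl⟩
  choose A hA hA' using fun x t => exists_shear (hneg x t).ne (Vt x t)
  have hd : ∀ x t, HasStrictFDerivAt Ψ (A x t : (ℝ × ℝ) →L[ℝ] (ℝ × ℝ)) (x, t) := by
    intro x t
    rw [hA, hΨ]
    exact (strict_fderiv isOpen_univ h.dt h.dx h.ct h.cx x t trivial).prodMk hasStrictFDerivAt_snd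
  obtain ⟨e, he⟩ : ∃ e, e = (hd x₁ t₁).toOpenPartialHomeomorph Ψ := ⟨_, rfl⟩
  have hcoe : ∀ p, e p = Ψ p := fun p => by rw [he]; rfl
  have hΨv : ∀ p, Ψ p = (V p.1 p.2, p.2) := fun p => by rw [hΨ]
  have hsrc : (x₁, t₁) ∈ e.source := by
    rw [he]; exact (hd x₁ t₁).mem_toOpenPartialHomeomorph_source
  have hright : ∀ q ∈ e.target, V (e.symm q).1 q.2 = q.1 ∧ (e.symm q).2 = q.2 := by
    intro q hq
    have := e.right_inv hq
    rw [hcoe, hΨv] at this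
    have h2 : (e.symm q).2 = q.2 := (Prod.ext_iff.1 this).2
    refine ⟨?_, h2⟩
    rw [← h2]
    exact (Prod.ext_iff.1 this).1
  have hsymm : ∀ q ∈ e.target, HasFDerivAt e.symm
      ((A (e.symm q).1 q.2).symm : (ℝ × ℝ) →L[ℝ] (ℝ × ℝ)) q := by
    intro q hq
    refine e.hasFDerivAt_symm hq ?_
    have := (hd (e.symm q).1 q.2).hasFDerivAt
    have e2 : e.symm q = ((e.symm q).1, q.2) := by rw [← (hright q hq).2]
    rw [e2]
    have e3 : (e : ℝ × ℝ → ℝ × ℝ) = Ψ := funext hcoe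
    rw [e3]
    exact this
  have hwc : Continuous fun p : ℝ × ℝ => (w p.1 p.2, p.2) := k.continuous.prodMk continuous_snd
  have htgt : (w x₁ t₁, t₁) ∈ e.target := by
    have := e.map_source hsrc
    rwa [hcoe, hΨv, h1] at this
  refine ⟨fun x t => (e.symm (w x t, t)).1, ?_, ?_⟩
  · have := e.left_inv hsrc
    rw [hcoe, hΨv, h1] at this
    exact congrArg Prod.fst this
  · have hN : ∀ᶠ p : ℝ × ℝ in 𝓝 (x₁, t₁), (w p.1 p.2, p.2) ∈ e.target :=
      hwc.continuousAt.eventually (e.open_target.mem_nhds htgt)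
    filter_upwards [hN] with p hp
    have hF := hsymm _ hp
    refine ⟨(hright _ hp).1, ?_, ?_, ?_⟩
    · exact continuous_fst.continuousAt.comp
        (ContinuousAt.comp (g := e.symm) (f := fun p : ℝ × ℝ => (w p.1 p.2, p.2))
          hF.continuousAt hwc.continuousAt)
    · have c := (k.dx p.1 p.2 trivial).prodMk (hasDerivAt_const p.1 p.2)
      have := (hasFDerivAt_fst (𝕜 := ℝ)).comp_hasDerivAt p.1
        (HasFDerivAt.comp_hasDerivAt (f := fun y => (w y p.2, p.2)) p.1 hF c)
      refine this.congr_deriv ?_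
      simp [hA']
    · have c := (k.dt p.1 p.2 trivial).prodMk (hasDerivAt_id p.2)
      have := (hasFDerivAt_fst (𝕜 := ℝ)).comp_hasDerivAt p.2
        (HasFDerivAt.comp_hasDerivAt (f := fun s => (w p.1 s, s)) p.2 hF c)
      refine this.congr_deriv ?_
      simp [hA']

/-- If `w` is tangent to the strictly decreasing solution `V` at `(x₁, t₁)`, then `V = w` on a
backward neighbourhood. The function `S` with `V(S(x,t), t) = w(x,t)` solves
`S_t - S_xx = (V_xx / V_x)(S) (S_x² - 1)`, and `S - x` is nonincreasing in `x` because `V` does not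
cross the translates of `w`. The boundary point lemma for the difference of `S - x` at two points
shows that `S - x` is constant in `x`, hence in `t`. -/
lemma local_eq {f V Vt Vx Vxx w wt wx wxx : ℝ → ℝ → ℝ} {ωα : ℝ → ℝ} {x₁ t₁ : ℝ}
    (h : SolData f V Vt Vx Vxx univ) (hNC : NoCrossing f ωα V) (hw : Entire f ωα w)
    (k : SolData f w wt wx wxx univ) (hneg : ∀ x t, Vx x t < 0)
    (h1 : V x₁ t₁ = w x₁ t₁) (h2 : Vx x₁ t₁ = wx x₁ t₁) :
    ∃ d > 0, ∀ x s, |x - x₁| < d → t₁ - d < s → s ≤ t₁ → V x s = w x s := by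
  obtain ⟨S, hS1, hS⟩ := exists_change h k hneg h1
  obtain ⟨Sx, hSx⟩ : ∃ Sx : ℝ → ℝ → ℝ, Sx = fun x t => wx x t / Vx (S x t) t := ⟨_, rfl⟩
  obtain ⟨β, hβ⟩ : ∃ β : ℝ → ℝ → ℝ, β = fun x t => Vxx (S x t) t / Vx (S x t) t := ⟨_, rfl⟩
  have hVxc := continuous_of_univ h.cx
  have hVxxc := continuous_of_univ h.cxx
  have hSc : ContinuousAt (fun q : ℝ × ℝ => S q.1 q.2) (x₁, t₁) := hS.self_of_nhds.2.1
  have hmap : ContinuousAt (fun q : ℝ × ℝ => (S q.1 q.2, q.2)) (x₁, t₁) :=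
    hSc.prodMk continuousAt_snd
  have c1 : ContinuousAt (fun q : ℝ × ℝ => Vx (S q.1 q.2) q.2) (x₁, t₁) :=
    ContinuousAt.comp (g := fun p : ℝ × ℝ => Vx p.1 p.2) hVxc.continuousAt hmap
  have c2 : ContinuousAt (fun q : ℝ × ℝ => Vxx (S q.1 q.2) q.2) (x₁, t₁) :=
    ContinuousAt.comp (g := fun p : ℝ × ℝ => Vxx p.1 p.2) hVxxc.continuousAt hmap
  have cγ : ContinuousAt (fun q : ℝ × ℝ => |β q.1 q.2 * (Sx q.1 q.2 + 1)|) (x₁, t₁) := by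
    rw [hβ, hSx]
    refine ((c2.div c1 (hneg _ _).ne).mul
      (((continuous_of_univ k.cx).continuousAt.div c1 (hneg _ _).ne).add continuousAt_const)).abs
  obtain ⟨C, hC⟩ : ∃ C : ℝ, C = |β x₁ t₁ * (Sx x₁ t₁ + 1)| + 1 := ⟨_, rfl⟩
  have hC0 : 0 ≤ C := by rw [hC]; positivity
  have eγ : ∀ᶠ p : ℝ × ℝ in 𝓝 (x₁, t₁), |β p.1 p.2 * (Sx p.1 p.2 + 1)| < C :=
    cγ.eventually (gt_mem_nhds (by rw [hC]; linarith))
  obtain ⟨d, hd, hbox⟩ := Metric.eventually_nhds_iff.1 (hS.and eγ)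
  have box : ∀ x t, |x - x₁| < d → |t - t₁| < d →
      V (S x t) t = w x t ∧ ContinuousAt (fun q : ℝ × ℝ => S q.1 q.2) (x, t) ∧
      HasDerivAt (fun y => S y t) (Sx x t) x ∧
      HasDerivAt (fun s => S x s) ((wt x t - Vt (S x t) t) / Vx (S x t) t) t ∧
      |β x t * (Sx x t + 1)| < C := by
    intro x t hx ht
    have := @hbox (x, t) (by rw [Prod.dist_eq]; exact max_lt hx ht)
    rw [hSx] at this ⊢
    exact ⟨this.1.1, this.1.2.1, this.1.2.2.1, this.1.2.2.2, this.2⟩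
  clear hbox
  -- the first derivative of `S` at the point of tangency
  have hS11 : Sx x₁ t₁ = 1 := by
    rw [hSx]; simp only; rw [hS1, ← h2, div_self (hneg _ _).ne]
  have hbd : ∀ x t, |x - x₁| < d → |t - t₁| < d → ∃ Sxx : ℝ,
      HasDerivAt (fun y => Sx y t) Sxx x ∧
      (wt x t - Vt (S x t) t) / Vx (S x t) t = Sxx + β x t * (Sx x t ^ 2 - 1) := by
    intro x t hx ht
    obtain ⟨b1, -, b3, -, -⟩ := box x t hx ht
    have e1 := HasDerivAt.comp (h₂ := fun y => Vx y t) x (h.dxx (S x t) t trivial) b3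
    have e2 := (k.dxx x t trivial).div e1 (hneg _ _).ne
    refine ⟨_, by rw [hSx]; exact e2, ?_⟩
    have hne := (hneg (S x t) t).ne
    rw [k.eq x t trivial, h.eq _ t trivial, b1, hβ, hSx]
    simp only [Function.comp]
    field_simp
    ring
  have hnear : ∀ x, |x - x₁| < d → ∀ᶠ y in 𝓝 x, |y - x₁| < d := fun x hx =>
    (Continuous.continuousAt (by fun_prop : Continuous fun y : ℝ => |y - x₁|)).eventually
      (gt_mem_nhds hx)
  have hjet : ∀ x t, |x - x₁| < d → |t - t₁| < d → ∀ Sxx : ℝ, HasDerivAt (fun y => Sx y t) Sxx x →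
      HasJet (fun y => S y t - y) x (Sx x t - 1) Sxx := by
    intro x t hx ht Sxx hxx
    refine ⟨fun y => Sx y t - 1, ?_, hxx.sub_const 1, rfl⟩
    filter_upwards [hnear x hx] with y hy
    exact (box y t hy ht).2.2.1.sub (hasDerivAt_id y)
  have hVanti : ∀ t, StrictAnti fun y => V y t := fun t =>
    strictAnti_of_deriv_neg fun y => by rw [(h.dx y t trivial).deriv]; exact hneg y t
  have hmono : ∀ x y t, x ≤ y → |x - x₁| < d → |y - x₁| < d → |t - t₁| < d →
      S y t - y ≤ S x t - x := by
    intro x y t hxy hx hy ht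
    by_contra! hlt
    obtain ⟨a, ha1, ha2⟩ := exists_between hlt
    have := hNC _ (hw.shift_space (-a)) (x + a) (y + a) t (by linarith)
    simp only [add_neg_cancel_right] at this
    rw [← (box x t hx ht).1, ← (box y t hy ht).1] at this
    have l1 := hVanti t (show S x t < x + a by linarith)
    have l2 := hVanti t (show y + a < S y t by linarith)
    exact absurd (this l1) (not_le.2 l2)
  have hop := hopf (E := fun x y t => (S x t - x) - (S y t - y)) (x₁ := x₁) (t₁ := t₁)
    (d := d) (τ := d) (C := C) hC0 ?_ ?_ ?_ ?_
  · have hconst : ∀ x y s, |x - x₁| < d → |y - x₁| < d → t₁ - d < s → s < t₁ →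
        S x s - x = S y s - y := by
      intro x y s hx hy hs1 hs2
      rcases lt_trichotomy x y with hxy | rfl | hxy
      · linarith [hop x y s hxy hx hy hs1 hs2]
      · rfl
      · linarith [hop y x s hxy hy hx hs1 hs2]
    have habs : ∀ s, t₁ - d < s → s ≤ t₁ → |s - t₁| < d := fun s hs1 hs2 => by
      rw [abs_lt]; constructor <;> linarith
    have hx₁ : |x₁ - x₁| < d := by simpa using hd
    -- in the region where `S - x` is constant in `x`, its time derivative vanishes
    have hSt : ∀ s, t₁ - d < s → s < t₁ → HasDerivAt (fun s => S x₁ s) 0 s := by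
      intro s hs1 hs2
      have hs := habs s hs1 hs2.le
      have hSx1 : ∀ x, |x - x₁| < d → Sx x s = 1 := by
        intro x hx
        have e1 : HasDerivAt (fun y => S y s) 1 x := by
          have : HasDerivAt (fun y => S x s - x + y) 1 x := (hasDerivAt_id x).const_add _
          refine this.congr_of_eventuallyEq ?_
          filter_upwards [hnear x hx] with y hy
          linarith [hconst x y s hx hy hs1 hs2]
        exact (box x s hx hs).2.2.1.unique e1
      obtain ⟨Sxx, hxx, heq⟩ := hbd x₁ s hx₁ hs
      have hxx0 : Sxx = 0 := by
        refine hxx.unique ((hasDerivAt_const x₁ (1 : ℝ)).congr_of_eventuallyEq ?_)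
        filter_upwards [hnear x₁ hx₁] with y hy using hSx1 y hy
      refine (box x₁ s hx₁ hs).2.2.2.1.congr_deriv ?_
      rw [heq, hxx0, hSx1 x₁ hx₁]
      ring
    have hSeq : ∀ s, t₁ - d < s → s < t₁ → S x₁ s = x₁ := by
      intro s hs1 hs2
      have := constant_of_has_deriv_right_zero (f := fun s => S x₁ s) (a := s) (b := t₁)
        (fun r hr => (box x₁ r hx₁
          (habs r (by linarith [hr.1]) hr.2)).2.2.2.1.continuousAt.continuousWithinAt)
        (fun r hr => (hSt r (by linarith [hr.1]) hr.2).hasDerivWithinAt) t₁ ⟨hs2.le, le_rfl⟩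
      rw [← this, hS1]
    have main : ∀ x s, |x - x₁| < d → t₁ - d < s → s < t₁ → V x s = w x s := by
      intro x s hx hs1 hs2
      have e1 := hconst x x₁ s hx hx₁ hs1 hs2
      rw [hSeq s hs1 hs2, sub_self] at e1
      have e2 := (box x s hx (habs s hs1 hs2.le)).1
      rwa [show S x s = x by linarith] at e2
    refine ⟨d, hd, fun x s hx hs1 hs2 => ?_⟩
    rcases hs2.lt_or_eq with hs2 | rfl
    · exact main x s hx hs1 hs2
    · have l1 : Tendsto (fun r => V x r) (𝓝[<] s) (𝓝 (V x s)) :=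
        (h.dt x s trivial).continuousAt.tendsto.mono_left nhdsWithin_le_nhds
      have l2 : Tendsto (fun r => w x r) (𝓝[<] s) (𝓝 (w x s)) :=
        (k.dt x s trivial).continuousAt.tendsto.mono_left nhdsWithin_le_nhds
      refine tendsto_nhds_unique_of_eventuallyEq l1 l2 ?_
      filter_upwards [Ioo_mem_nhdsLT hs1] with r hr using main x r hx hr.1 hr.2
  · rintro ⟨x, y, t⟩ ⟨-, hx, hy, ht1, ht2⟩
    have ht : |t - t₁| < d := by rw [abs_lt]; simp only at ht1 ht2; constructor <;> linarith
    have a1 : ContinuousAt (fun p : ℝ × ℝ × ℝ => S p.1 p.2.2) (x, y, t) :=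
      ContinuousAt.comp (g := fun q : ℝ × ℝ => S q.1 q.2)
        (f := fun p : ℝ × ℝ × ℝ => (p.1, p.2.2)) (box x t hx ht).2.1 (by fun_prop)
    have a2 : ContinuousAt (fun p : ℝ × ℝ × ℝ => S p.2.1 p.2.2) (x, y, t) :=
      ContinuousAt.comp (g := fun q : ℝ × ℝ => S q.1 q.2)
        (f := fun p : ℝ × ℝ × ℝ => (p.2.1, p.2.2)) (box y t hy ht).2.1 (by fun_prop)
    exact ((a1.sub (by fun_prop)).sub (a2.sub (by fun_prop))).continuousWithinAt
  · intro x y t hxy hx hy ht1 ht2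
    linarith [hmono x y t hxy hx hy (by rw [abs_lt]; constructor <;> linarith)]
  · intro x y t hxy hx hy ht1 ht2
    have ht : |t - t₁| < d := by rw [abs_lt]; constructor <;> linarith
    obtain ⟨b, jx, ex⟩ := hbd x t hx ht
    obtain ⟨b', jy, ey⟩ := hbd y t hy ht
    have tx := (box x t hx ht).2.2.2.1
    have ty := (box y t hy ht).2.2.2.1
    rw [ex] at tx
    rw [ey] at ty
    refine ⟨_, _, _, _, _, (hjet x t hx ht b jx).sub (hasJet_const _ x),
      (hasJet_const _ y).sub (hjet y t hy ht b' jy), (tx.sub_const x).sub (ty.sub_const y), ?_⟩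
    have g1 := (box x t hx ht).2.2.2.2.le
    have g2 := (box y t hy ht).2.2.2.2.le
    have m1 : -(β x t * (Sx x t ^ 2 - 1)) ≤ C * |Sx x t - 1| := by
      refine (neg_le_abs _).trans ?_
      rw [show β x t * (Sx x t ^ 2 - 1) = β x t * (Sx x t + 1) * (Sx x t - 1) by ring, abs_mul]
      exact mul_le_mul_of_nonneg_right g1 (abs_nonneg _)
    have m2 : β y t * (Sx y t ^ 2 - 1) ≤ C * |Sx y t - 1| := by
      refine (le_abs_self _).trans ?_
      rw [show β y t * (Sx y t ^ 2 - 1) = β y t * (Sx y t + 1) * (Sx y t - 1) by ring, abs_mul]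
      exact mul_le_mul_of_nonneg_right g2 (abs_nonneg _)
    have m3 := mul_nonneg hC0 (sub_nonneg.2 (hmono x y t hxy.le hx hy ht))
    rw [sub_zero (Sx x t - 1), zero_sub (Sx y t - 1), abs_neg]
    linarith
  · have hz : ∀ c > 0, ∃ᶠ r in 𝓝[>] (0 : ℝ),
        (fun r => (S (x₁ - r) t₁ - (x₁ - r)) - (S (x₁ + r) t₁ - (x₁ + r))) r < c * r := by
      refine frequently_lt_mul ?_ (by simp)
      have d0 : HasDerivAt (fun y => S y t₁ - y) 0 x₁ := by
        refine ((box x₁ t₁ (by simpa using hd) (by simpa using hd)).2.2.1.sub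
          (hasDerivAt_id x₁)).congr_deriv ?_
        rw [hS11, sub_self]
      have a1 := HasDerivAt.comp_const_sub x₁ (0 : ℝ) (f := fun y => S y t₁ - y) (f' := 0)
        (by simpa using d0)
      have a2 := HasDerivAt.comp_const_add x₁ (0 : ℝ) (f := fun y => S y t₁ - y) (f' := 0)
        (by simpa using d0)
      exact (a1.sub a2).congr_deriv (by ring)
    exact hz

/-! ### Steepness -/

section
variable {f V Vt Vx Vxx w wt wx wxx : ℝ → ℝ → ℝ} {ωα : ℝ → ℝ} {M B C₁ C₂ : ℝ}

lemma slice_eq (h : SolData f V Vt Vx Vxx univ) (hNC : NoCrossing f ωα V) (hw : Entire f ωα w)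
    (k : SolData f w wt wx wxx univ) (hneg : ∀ x t, Vx x t < 0) {x₁ t₁ : ℝ}
    (h1 : V x₁ t₁ = w x₁ t₁) (h2 : Vx x₁ t₁ = wx x₁ t₁) : ∀ x, V x t₁ = w x t₁ := by
  obtain ⟨A, hA⟩ : ∃ A : Set ℝ, A = {x | V x t₁ = w x t₁ ∧ Vx x t₁ = wx x t₁} := ⟨_, rfl⟩
  have slice : ∀ {g : ℝ → ℝ → ℝ}, (Continuous fun p : ℝ × ℝ => g p.1 p.2) →
      Continuous fun x => g x t₁ := fun hg =>
    hg.comp (f := fun x : ℝ => (x, t₁)) (by fun_prop)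
  have hcl : IsClosed A := by
    rw [hA]
    exact (isClosed_eq (slice h.continuous) (slice k.continuous)).inter
      (isClosed_eq (slice (continuous_of_univ h.cx)) (slice (continuous_of_univ k.cx)))
  have hop : IsOpen A := by
    rw [Metric.isOpen_iff]
    intro x hx
    rw [hA] at hx
    obtain ⟨d, hd, H⟩ := local_eq h hNC hw k hneg hx.1 hx.2
    refine ⟨d, hd, fun y hy => ?_⟩
    have hev : (fun z => V z t₁) =ᶠ[𝓝 y] fun z => w z t₁ := by
      filter_upwards [Metric.isOpen_ball.mem_nhds hy] with z hz
      exact H z t₁ hz (by linarith) le_rfl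
    rw [hA]
    exact ⟨hev.self_of_nhds,
      ((h.dx y t₁ trivial).congr_of_eventuallyEq hev.symm).unique (k.dx y t₁ trivial)⟩
  have huniv : A = univ := IsClopen.eq_univ ⟨hcl, hop⟩ ⟨x₁, by rw [hA]; exact ⟨h1, h2⟩⟩
  intro x
  have : x ∈ A := huniv ▸ mem_univ x
  rw [hA] at this
  exact this.1

lemma eq_of_tangent (hb : FBounds f M B C₁ C₂) (hM : ∀ t, ωα t ≤ M) (hV : Entire f ωα V)
    (h : SolData f V Vt Vx Vxx univ) (hNC : NoCrossing f ωα V) (hw : Entire f ωα w)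
    (k : SolData f w wt wx wxx univ) (hneg : ∀ x t, Vx x t < 0) {x₁ t₁ : ℝ}
    (h1 : V x₁ t₁ = w x₁ t₁) (h2 : Vx x₁ t₁ = wx x₁ t₁) : ∀ x t, V x t = w x t := by
  obtain ⟨A, hA⟩ : ∃ A : Set ℝ, A = {t | ∀ x, V x t = w x t} := ⟨_, rfl⟩
  have hcl : IsClosed A := by
    rw [hA, setOf_forall]
    exact isClosed_iInter fun x => isClosed_eq
      (h.continuous.comp (f := fun t : ℝ => (x, t)) (by fun_prop))
      (k.continuous.comp (f := fun t : ℝ => (x, t)) (by fun_prop))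
  have hop : IsOpen A := by
    rw [Metric.isOpen_iff]
    intro t ht
    rw [hA] at ht
    have hx : Vx 0 t = wx 0 t :=
      ((h.dx 0 t trivial).congr_of_eventuallyEq
        (Eventually.of_forall fun z => (ht z).symm)).unique (k.dx 0 t trivial)
    obtain ⟨d, hd, H⟩ := local_eq h hNC hw k hneg (ht 0) hx
    refine ⟨d, hd, fun s hs => ?_⟩
    rw [hA]
    rw [Metric.mem_ball, Real.dist_eq, abs_lt] at hs
    rcases le_total t s with hts | hts
    · exact fun x => hV.eq_of_eq hb hM hw ht x s hts
    · have hev : (fun z => V z s) =ᶠ[𝓝 0] fun z => w z s := by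
        filter_upwards [Metric.ball_mem_nhds (0 : ℝ) hd] with z hz
        exact H z s hz (by linarith) hts
      exact slice_eq h hNC hw k hneg hev.self_of_nhds
        (((h.dx 0 s trivial).congr_of_eventuallyEq hev.symm).unique (k.dx 0 s trivial))
  have huniv : A = univ := IsClopen.eq_univ ⟨hcl, hop⟩
    ⟨t₁, by rw [hA]; exact slice_eq h hNC hw k hneg h1 h2⟩
  intro x t
  have : t ∈ A := huniv ▸ mem_univ t
  rw [hA] at this
  exact this x

/-- A nonincreasing entire solution that crosses no entire solution from below to above is steeper
than every entire solution. -/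
lemma steep (hb : FBounds f M B C₁ C₂) (hM : ∀ t, ωα t ≤ M) (hV : Entire f ωα V)
    (h : SolData f V Vt Vx Vxx univ) (hanti : ∀ x y t, x ≤ y → V y t ≤ V x t)
    (hNC : NoCrossing f ωα V) (hw : Entire f ωα w) (k : SolData f w wt wx wxx univ) {x₁ t₁ : ℝ}
    (h1 : V x₁ t₁ = w x₁ t₁) : (∀ x t, V x t = w x t) ∨ Vx x₁ t₁ < wx x₁ t₁ := by
  rcases hV.dichotomy hb hM h hanti with hconst | hneg
  · exact Or.inl (steep_of_const hb hM hV hNC hconst hw h1)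
  rcases lt_trichotomy (Vx x₁ t₁) (wx x₁ t₁) with hlt | heq | hgt
  · exact Or.inr hlt
  · exact Or.inl (eq_of_tangent hb hM hV h hNC hw k hneg h1 heq)
  · -- `V - w` changes sign from negative to positive at `x₁`
    exfalso
    have hd := (h.dx x₁ t₁ trivial).sub (k.dx x₁ t₁ trivial)
    have hpos : 0 < Vx x₁ t₁ - wx x₁ t₁ := by linarith
    have hr := (hasDerivWithinAt_iff_tendsto_slope' (s := Ioi x₁) (by simp)).1
      (hd.hasDerivWithinAt (s := Ioi x₁))
    have hl := (hasDerivWithinAt_iff_tendsto_slope' (s := Iio x₁) (by simp)).1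
      (hd.hasDerivWithinAt (s := Iio x₁))
    obtain ⟨y, hy1, hy2⟩ :=
      ((hr.eventually (lt_mem_nhds hpos)).and self_mem_nhdsWithin).exists
    obtain ⟨x, hx1, hx2⟩ :=
      ((hl.eventually (lt_mem_nhds hpos)).and self_mem_nhdsWithin).exists
    have hy2 : x₁ < y := hy2
    have hx2 : x < x₁ := hx2
    rw [slope_def_field] at hy1 hx1
    simp only [Pi.sub_apply, h1, sub_self, sub_zero] at hy1 hx1
    have hy3 : 0 < V y t₁ - w y t₁ := by
      by_contra! hc
      exact absurd hy1 (not_lt.2 (div_nonpos_of_nonpos_of_nonneg hc (by linarith)))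
    have hx3 : V x t₁ - w x t₁ < 0 := by
      by_contra! hc
      exact absurd hx1 (not_lt.2 (div_nonpos_of_nonneg_of_nonpos hc (by linarith)))
    linarith [hNC w hw x y t₁ (by linarith) (by linarith)]

/-- An entire solution strictly separated from `w` somewhere cannot touch `w` from one side. -/
lemma ne_of_one_sided (hb : FBounds f M B C₁ C₂) (hM : ∀ t, ωα t ≤ M) (hV : Entire f ωα V)
    (h : SolData f V Vt Vx Vxx univ) (hanti : ∀ x y t, x ≤ y → V y t ≤ V x t)
    (hNC : NoCrossing f ωα V) (hw : Entire f ωα w) (k : SolData f w wt wx wxx univ)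
    {x₀ t₀ : ℝ} (hne : V x₀ t₀ ≠ w x₀ t₀)
    (hside : (∀ x t, V x t ≤ w x t) ∨ ∀ x t, w x t ≤ V x t) (x t : ℝ) : V x t ≠ w x t := by
  intro heq
  have hx : Vx x t - wx x t = 0 := by
    have hd := (h.dx x t trivial).sub (k.dx x t trivial)
    rcases hside with hs | hs
    · refine IsLocalMax.hasDerivAt_eq_zero (Eventually.of_forall fun y => ?_) hd
      simp only [Pi.sub_apply, heq]
      linarith [hs y t]
    · refine IsLocalMin.hasDerivAt_eq_zero (Eventually.of_forall fun y => ?_) hd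
      simp only [Pi.sub_apply, heq]
      linarith [hs y t]
  rcases steep hb hM hV h hanti hNC hw k heq with hc | hc
  · exact hne (hc x₀ t₀)
  · linarith

/-- Two such solutions with a common value coincide, being steeper than each other. -/
lemma eq_of_common_value {W Wt Wx Wxx : ℝ → ℝ → ℝ} (hb : FBounds f M B C₁ C₂)
    (hM : ∀ t, ωα t ≤ M) (hV : Entire f ωα V) (h : SolData f V Vt Vx Vxx univ)
    (hanti : ∀ x y t, x ≤ y → V y t ≤ V x t) (hNC : NoCrossing f ωα V)
    (hW : Entire f ωα W) (k : SolData f W Wt Wx Wxx univ)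
    (hanti' : ∀ x y t, x ≤ y → W y t ≤ W x t) (hNC' : NoCrossing f ωα W) {x₁ t₁ : ℝ}
    (h1 : V x₁ t₁ = W x₁ t₁) : V = W ∧ Vx = Wx ∧ Vxx = Wxx := by
  have e1 : V = W := by
    rcases steep hb hM hV h hanti hNC hW k h1 with hc | hc
    · exact funext fun x => funext fun t => hc x t
    rcases steep hb hM hW k hanti' hNC' hV h h1.symm with hc' | hc'
    · exact funext fun x => funext fun t => (hc' x t).symm
    · linarith
  subst e1
  have e2 : Vx = Wx := funext fun x => funext fun t =>
    (h.dx x t trivial).unique (k.dx x t trivial)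
  subst e2
  exact ⟨rfl, rfl, funext fun x => funext fun t => (h.dxx x t trivial).unique (k.dxx x t trivial)⟩

end

/-- Limits of shifts of the Heaviside solution inherit monotonicity and the absence of
crossings. -/
lemma limit_props {f u V : ℝ → ℝ → ℝ} {α M B C₁ C₂ T : ℝ} {ωα : ℝ → ℝ} {ℓ : ℕ → ℝ}
    {l : Filter ℕ} [NeBot l] (hT : 0 < T) (hl : l ≤ atTop)
    (hfper : ∀ t u : ℝ, f (t + T) u = f t u) (hωper : ∀ t, ωα (t + T) = ωα t)
    (hu : IsHeavisideSol f α 0 ωα u) (hc : Continuous ωα) (h0 : ωα 0 = α)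
    (hb : FBounds f M B C₁ C₂) (hM : ∀ t, ωα t ≤ M) (hV : ShiftLim ℓ T l u V) :
    (∀ x t, 0 ≤ V x t ∧ V x t ≤ ωα t) ∧ (∀ x y t, x ≤ y → V y t ≤ V x t) ∧
      NoCrossing f ωα V := by
  have hωp : Function.Periodic ωα T := hωper
  refine ⟨fun x t => ?_, fun x y t hxy => ?_, fun w hw x y t hxy hlt => ?_⟩
  · refine isClosed_Icc.mem_of_tendsto (hV x t) ?_
    filter_upwards [eventually_shift hT hl 0 t] with j hj
    have := hu.2.1 (x + ℓ j) _ hj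
    rwa [hωp.nat_mul j t] at this
  · refine le_of_tendsto_of_tendsto (hV y t) (hV x t) ?_
    filter_upwards [eventually_shift hT hl 0 t] with j hj
    exact heaviside_antitone hu hc h0 hb hM _ _ _ (by linarith) hj
  · by_contra! hgt
    obtain ⟨j, ⟨h1, h2⟩, h3⟩ := (((hV x t).eventually (gt_mem_nhds hlt)).and
      ((hV y t).eventually (lt_mem_nhds hgt))).and (eventually_shift hT hl 0 t) |>.exists
    have e := (hw.shift_time (-((j : ℝ) * T))
      (fun t u => by
        have := FBounds.shift hfper j (t + -((j : ℝ) * T)) u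
        rw [neg_add_cancel_right] at this
        exact this.symm)
      (fun t => by
        have := hωp.nat_mul j (t + -((j : ℝ) * T))
        rw [neg_add_cancel_right] at this
        exact this.symm)).shift_space (-ℓ j)
    obtain ⟨wt, wx, wxx, k⟩ := isSolOn_iff.1 e.sol
    have := heaviside_no_crossing hu hc h0 hb hM (isSolOn_iff.2 ⟨wt, wx, wxx,
      fun x t _ => k.dt x t trivial, fun x t _ => k.dx x t trivial, fun x t _ => k.dxx x t trivial,
      (continuous_of_univ k.ct).continuousOn, (continuous_of_univ k.cx).continuousOn,
      (continuous_of_univ k.cxx).continuousOn, fun x t _ => k.eq x t trivial⟩)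
      (fun x t _ => e.range x t) (x + ℓ j) (y + ℓ j) (t + (j : ℝ) * T) (by linarith) h3
    simp only [add_neg_cancel_right] at this
    linarith [this h1]

/-! ### Existence of the limit and its properties -/

/-- **Lemma 3.4.** Under (H1) the limit `u_∞(x,t;λ) = lim_j u₀(x + ℓ(j,λ), t + jT)` exists
locally uniformly (with derivatives); it is an entire solution strictly between `0` and
`ω(α,·)`, steeper than any entire solution between `0` and `ω(α,·)`, and is either independent
of `x` or strictly decreasing in `x`. -/
theorem shifted_limit_exists_and_is_steep
    (f : ℝ → ℝ → ℝ) (T α : ℝ) (ωsol : ℝ → ℝ → ℝ)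
    (hT : 0 < T)
    (hf : ContDiff ℝ 2 (Function.uncurry f))
    (hfper : ∀ t u : ℝ, f (t + T) u = f t u)
    (hf0 : ∀ t : ℝ, f t 0 = 0)
    (hωinit : ∀ β : ℝ, ωsol β 0 = β)
    (hωode : ∀ β t : ℝ, HasDerivAt (ωsol β) (f t (ωsol β t)) t)
    (hα : 0 < α) (hαfix : ωsol α T = α)
    (hαper : ∀ t : ℝ, ωsol α (t + T) = ωsol α t)
    (hαpos : ∀ t : ℝ, 0 < ωsol α t)
    (hH1 : HypH1 f α (ωsol α))
    (lam : ℝ) (hlam : lam ∈ Set.Ioo 0 α)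
    (u₀ : ℝ → ℝ → ℝ) (hu₀ : IsHeavisideSol f α 0 (ωsol α) u₀)
    (ℓ : ℕ → ℝ) (hℓ : ∀ j : ℕ, 1 ≤ j → u₀ (ℓ j) ((j : ℝ) * T) = lam) :
    ∃ V : ℝ → ℝ → ℝ,
      IsULimitDeriv u₀ ℓ T V ∧
      IsSolOn f V Set.univ ∧
      (∀ x t : ℝ, 0 < V x t ∧ V x t < ωsol α t) ∧
      (∀ w : ℝ → ℝ → ℝ, IsSolOn f w Set.univ →
        (∀ x t : ℝ, 0 ≤ w x t ∧ w x t ≤ ωsol α t) → Steeper T V w) ∧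
      ((∀ x y t : ℝ, V x t = V y t) ∨ (∀ x t : ℝ, deriv (fun y => V y t) x < 0)) := by
  obtain ⟨ωα, hω⟩ : ∃ ωα : ℝ → ℝ, ωα = ωsol α := ⟨_, rfl⟩
  rw [← hω] at hαper hαpos hu₀ ⊢
  have hode : ∀ t, HasDerivAt ωα (f t (ωα t)) t := fun t => by rw [hω]; exact hωode α t
  have hω0 : ωα 0 = α := by rw [hω]; exact hωinit α
  have hc : Continuous ωα := continuous_iff_continuousAt.2 fun t => (hode t).continuousAt
  have hωp : Function.Periodic ωα T := hαper
  obtain ⟨M, hM⟩ : ∃ M, ∀ t, ωα t ≤ M := by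
    obtain ⟨M, hM⟩ := (hωp.compact_of_continuous hT.ne' hc).bddAbove
    exact ⟨M, fun t => hM (mem_range_self t)⟩
  obtain ⟨B, C₁, C₂, hb⟩ := exists_fBounds hT hf hfper ((hαpos 0).le.trans (hM 0))
  have hr : ∀ x, ∀ t > 0, u₀ x t ∈ Icc 0 M := fun x t ht =>
    ⟨(hu₀.2.1 x t ht).1, (hu₀.2.1 x t ht).2.trans (hM t)⟩
  obtain ⟨ut, ux, uxx, h⟩ := isSolOn_iff.1 hu₀.1
  obtain ⟨-, -, -, L, hL⟩ := h.uc hb hr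
  -- every ultrafilter yields a limit, and all these limits coincide
  have hex : ∀ l : Ultrafilter ℕ, (l : Filter ℕ) ≤ atTop → ∃ V Vx Vxx : ℝ → ℝ → ℝ,
      ShiftLim ℓ T l u₀ V ∧ ShiftLim ℓ T l ux Vx ∧ ShiftLim ℓ T l uxx Vxx := by
    intro l hl
    obtain ⟨V, hV⟩ := exists_shiftLim (ℓ := ℓ) hT l hl (fun t ht x => (hL t ht x).1)
    obtain ⟨Vx, hVx⟩ := exists_shiftLim (ℓ := ℓ) hT l hl (fun t ht x => (hL t ht x).2.1)
    obtain ⟨Vxx, hVxx⟩ := exists_shiftLim (ℓ := ℓ) hT l hl (fun t ht x => (hL t ht x).2.2)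
    exact ⟨V, Vx, Vxx, hV, hVx, hVxx⟩
  have hval : ∀ (l : Filter ℕ) [NeBot l], l ≤ atTop → ∀ V, ShiftLim ℓ T l u₀ V → V 0 0 = lam := by
    intro l _ hl V hV
    refine tendsto_nhds_unique_of_eventuallyEq (hV 0 0) tendsto_const_nhds ?_
    filter_upwards [hl (eventually_ge_atTop 1)] with j hj
    rw [zero_add, zero_add, hℓ j hj]
  obtain ⟨V, Vx, Vxx, hV, hVx, hVxx⟩ := hex (Ultrafilter.of atTop) (Ultrafilter.of_le _)
  obtain ⟨p1, p2, p3⟩ := limit_props hT (Ultrafilter.of_le _) hfper hαper hu₀ hc hω0 hb hM hV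
  obtain ⟨s1, -⟩ := limit_solData hT (Ultrafilter.of_le _) hf.continuous hfper h hb hr hV hVx hVxx
  have hE : Entire f ωα V := ⟨isSolOn_iff.2 ⟨_, _, _, s1⟩, p1⟩
  have hV0 := hval _ (Ultrafilter.of_le _) V hV
  have huniq : ∀ l : Ultrafilter ℕ, (l : Filter ℕ) ≤ atTop →
      ShiftLim ℓ T l u₀ V ∧ ShiftLim ℓ T l ux Vx ∧ ShiftLim ℓ T l uxx Vxx := by
    intro l hl
    obtain ⟨W, Wx, Wxx, hW, hWx, hWxx⟩ := hex l hl
    obtain ⟨q1, q2, q3⟩ := limit_props hT hl hfper hαper hu₀ hc hω0 hb hM hW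
    obtain ⟨r1, -⟩ := limit_solData hT hl hf.continuous hfper h hb hr hW hWx hWxx
    obtain ⟨rfl, rfl, rfl⟩ := eq_of_common_value hb hM hE s1 p2 p3
      ⟨isSolOn_iff.2 ⟨_, _, _, r1⟩, q1⟩ r1 q2 q3 (hV0.trans (hval _ hl W hW).symm)
    exact ⟨hW, hWx, hWxx⟩
  have hlim := (limit_solData hT le_rfl hf.continuous hfper h hb hr
    (fun x t => (tendsto_iff_ultrafilter _ _ _).2 fun l hl => (huniq l hl).1 x t)
    (fun x t => (tendsto_iff_ultrafilter _ _ _).2 fun l hl => (huniq l hl).2.1 x t)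
    (fun x t => (tendsto_iff_ultrafilter _ _ _).2 fun l hl => (huniq l hl).2.2 x t)).2
  have hfZ : ∀ (k : ℤ) t u, f (t + k * T) u = f t u := fun k t u =>
    Function.Periodic.int_mul (f := fun t => f t u) (fun t => hfper t u) k t
  refine ⟨V, ?_, hE.sol, fun x t => ⟨?_, ?_⟩, ?_, ?_⟩
  · intro K hK ε hε
    obtain ⟨J, hJ⟩ := eventually_atTop.1 (hlim K hK ε hε)
    refine ⟨J, fun j hj p hp => ?_⟩
    obtain ⟨a0, a1, a2, a3, a4⟩ := hJ j hj p hp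
    have d1 : deriv (fun y => u₀ y (p.2 + (j : ℝ) * T)) = fun y => ux y (p.2 + (j : ℝ) * T) :=
      funext fun y => (h.dx y _ a0).deriv
    have d2 : deriv (fun y => V y p.2) = fun y => Vx y p.2 :=
      funext fun y => (s1.dx y _ trivial).deriv
    refine ⟨a1, ?_, ?_, ?_⟩
    · rw [d1, d2]; exact a2
    · rw [d1, d2, (h.dxx _ _ a0).deriv, (s1.dxx _ _ trivial).deriv]; exact a3
    · rw [(h.dt _ _ a0).deriv, (s1.dt _ _ trivial).deriv]; exact a4
  · have k0 : SolData f (fun _ _ => 0) (fun _ _ => 0) (fun _ _ => 0) (fun _ _ => 0) univ :=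
      ⟨fun x t _ => hasDerivAt_const t 0, fun x t _ => hasDerivAt_const x 0,
        fun x t _ => hasDerivAt_const x 0, continuousOn_const, continuousOn_const,
        continuousOn_const, fun x t _ => by rw [hf0]; ring⟩
    refine (p1 x t).1.lt_of_ne' (ne_of_one_sided hb hM hE s1 p2 p3
      ⟨isSolOn_iff.2 ⟨_, _, _, k0⟩, fun x t => ⟨le_rfl, (hαpos t).le⟩⟩ k0
      (x₀ := 0) (t₀ := 0) ?_ (Or.inr fun x t => (p1 x t).1) x t)
    rw [hV0]; exact hlam.1.ne'
  · have k1 : SolData f (fun _ t => ωα t) (fun _ t => f t (ωα t)) (fun _ _ => 0) (fun _ _ => 0)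
        univ :=
      ⟨fun x t _ => hode t, fun x t _ => hasDerivAt_const x _,
        fun x t _ => hasDerivAt_const x 0,
        (hf.continuous.comp (continuous_snd.prodMk (hc.comp continuous_snd))).continuousOn,
        continuousOn_const, continuousOn_const, fun x t _ => by ring⟩
    refine (p1 x t).2.lt_of_ne (ne_of_one_sided hb hM hE s1 p2 p3
      ⟨isSolOn_iff.2 ⟨_, _, _, k1⟩, fun x t => ⟨(hαpos t).le, le_rfl⟩⟩ k1
      (x₀ := 0) (t₀ := 0) ?_ (Or.inl fun x t => (p1 x t).2) x t)
    rw [hV0, hω0]; exact hlam.2.ne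
  · intro w hw hwr t' x₁ k heq
    have e : Entire f ωα (fun x t => w x (t + k * T)) :=
      (⟨hw, hwr⟩ : Entire f ωα w).shift_time _ (hfZ k) fun t => hωp.int_mul k t
    obtain ⟨wt, wx, wxx, kd⟩ := isSolOn_iff.1 e.sol
    rcases steep hb hM hE s1 p2 p3 e kd heq with hs | hs
    · exact Or.inl fun x t => hs x (t + t')
    · right
      rw [(s1.dx x₁ t' trivial).deriv, (kd.dx x₁ t' trivial).deriv]
      exact hs
  · rcases hE.dichotomy hb hM s1 p2 with hs | hs
    · exact Or.inl hs
    · exact Or.inr fun x t => by rw [(s1.dx x t trivial).deriv]; exact hs x t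

end
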